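/- Let s > 2 and let S be the kernel S(k,ℓ) = Λ(k,ℓ)/|kℓ(k+ℓ)|^{1/2} if kℓ(k+ℓ) ≠ 0 and 0 otherwise, with Λ(k,ℓ) = 2|k+ℓ|·|k|·|ℓ|/(|k+ℓ|+|k|+|ℓ|) for (k,ℓ)≠(0,0) and Λ(0,0)=0. There exists a constant K_s > 0 with the following property. For every measurable f₀:ℝ→ℂ with f₀(−k) = conj(f₀(k)) a.e. and M₀ := (∫_ℝ (1+|k|^{2s})|f₀(k)|² dk)^{1/2} < ∞, setting N₀ := (∫_ℝ |f₀(k)|² dk)^{1/2} and τ* := 1/(K_s · N₀^{1−2/s} · M₀^{2/s}), there exists a unique measurable f: (−τ*,τ*)×ℝ → ℂ such that: (i) f(0,k) = f₀(k) for a.e. k; (ii) f(τ,−k) = conj(f(τ,k)) for a.e. k and all τ; (iii) the map τ ↦ f(τ,·) is continuous from (−τ*,τ*) into L²(ℝ,(1+|k|^{2s})dk), with ∫_ℝ(1+|k|^{2s})|f(τ,k)|² dk finite for each τ ∈ (−τ*,τ*); and (iv) for a.e. k ∈ ℝ and all τ ∈ (−τ*,τ*): f(τ,k) = f₀(k) −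 i k ∫₀^τ ∫_ℝ S(k−ℓ,ℓ) f(σ,k−ℓ) f(σ,ℓ) dℓ dσ. -/

import Mathlib

open MeasureTheory

/-- The kernel `Λ` of the surface-wave amplitude equation. -/
noncomputable def Lam (k l : ℝ) : ℝ :=
  if (k, l) = ((0 : ℝ), (0 : ℝ)) then 0
  else 2 * |k + l| * |k| * |l| / (|k + l| + |k| + |l|)

/-- The kernel `S` of the noncanonical form of the amplitude equation. -/
noncomputable def Sker (k l : ℝ) : ℝ :=
  if k * l * (k + l) ≠ 0 then Lam k l / Real.sqrt |k * l * (k + l)| else 0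

/-!
The kernel satisfies `S(a, b) = 2 √|a b (a + b)| / (|a| + |b| + |a + b|)` and is bounded by the
square root of each of the three frequencies of the triad `a + b + c = 0`. When `V` is an even
weight, increasing with power growth, and `f (-k) = conj (f k)`, symmetrizing the energy identity
for `∫ V |f|²` over such triads replaces the multiplier by `a V(a) + b V(b) + c V(c)`: this gains a
factor of the smallest frequency, so no derivative is lost, and it vanishes for `V = 1`, so the `L²`
norm is conserved. Hence `|d/dt ∫ V |f|²| ≤ C (∫ |k|^{3/2} |f|) ∫ V |f|²`, and splitting frequencies
at a scale that balances the two norms gives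
`∫ |k|^{3/2} |f| ≤ C ‖f‖_{L²}^{1 - 2/s} ‖f‖_{Hˢ}^{2/s}`. A continuity argument then keeps the `Hˢ`
energy below four times its initial value on the lifespan.

Solutions are limits of Galerkin truncations, which are global because the `L²` norm is conserved.
They converge because the same symmetrization, applied to the difference of two solutions, gives
stability in `L²`; this also yields uniqueness. Continuity in `Hˢ` holds because the energy estimate
for weights that are small at low frequency keeps the high frequencies small uniformly in time.
-/

namespace SurfaceWave

open Set Filter Topology ComplexConjugate

lemma Sker_eq (a b : ℝ) : Sker a b = 2 * √(|a| * |b| * |a + b|) / (|a + b| + |a| + |b|) := by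
  unfold Sker
  split_ifs with h
  · have ha : a ≠ 0 := fun ha => h (by simp [ha])
    have hpos : 0 < |a| * |b| * |a + b| := by rw [← abs_mul, ← abs_mul]; positivity
    have hden : 0 < |a + b| + |a| + |b| := by positivity
    rw [Lam, if_neg (by simp [ha]), abs_mul, abs_mul, div_div,
      div_eq_div_iff (by positivity) hden.ne']
    linear_combination (-2 * (|a + b| + |a| + |b|)) * Real.mul_self_sqrt hpos.le
  · rw [← abs_mul, ← abs_mul, not_not.1 h]
    simp

lemma Sker_nonneg (a b : ℝ) : 0 ≤ Sker a b := by
  rw [Sker_eq]; positivity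

lemma Sker_comm (a b : ℝ) : Sker a b = Sker b a := by
  rw [Sker_eq, Sker_eq, add_comm b a, mul_comm |b| |a|, add_right_comm]

lemma Sker_neg_add (a b : ℝ) : Sker (-a) (a + b) = Sker a b := by
  rw [Sker_eq, Sker_eq, abs_neg, neg_add_cancel_left]
  ring_nf

lemma Sker_sub_comm (k l : ℝ) : Sker (l - k) k = Sker (k - l) l := by
  simpa using Sker_neg_add (k - l) l

lemma Sker_neg (a b : ℝ) : Sker (-a) (-b) = Sker a b := by
  rw [Sker_eq, Sker_eq, ← neg_add, abs_neg, abs_neg, abs_neg]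

lemma Sker_le_sqrt_abs_left (a b : ℝ) : Sker a b ≤ √|a| := by
  have amgm : 2 * √(|b| * |a + b|) ≤ |a + b| + |b| := by
    rw [Real.sqrt_mul (abs_nonneg b)]
    nlinarith [sq_nonneg (√|b| - √|a + b|), Real.mul_self_sqrt (abs_nonneg b),
      Real.mul_self_sqrt (abs_nonneg (a + b))]
  rw [Sker_eq]
  refine div_le_of_le_mul₀ (by positivity) (by positivity) ?_
  rw [mul_assoc, Real.sqrt_mul (abs_nonneg a)]
  nlinarith [Real.sqrt_nonneg |a|, abs_nonneg a]

lemma Sker_le_sqrt_abs_right (a b : ℝ) : Sker a b ≤ √|b| := by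
  rw [Sker_comm]; exact Sker_le_sqrt_abs_left b a

lemma Sker_le_sqrt_abs_add (a b : ℝ) : Sker a b ≤ √|a + b| := by
  rw [← Sker_neg_add]; exact Sker_le_sqrt_abs_right _ _

@[fun_prop]
lemma measurable_Sker {α : Type*} [MeasurableSpace α] {f g : α → ℝ} (hf : Measurable f)
    (hg : Measurable g) : Measurable fun x => Sker (f x) (g x) := by
  simp only [Sker_eq]
  fun_prop
/-- Weights `V(k) = V(|k|)`, nondecreasing in `|k|`, for which the commutator `(x+y)V(x+y) - yV(y)`
gains a full power of the smaller frequency `x`. -/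
structure IsAdmissibleWeight (C : ℝ) (V : ℝ → ℝ) : Prop where
  const_nonneg : 0 ≤ C
  measurable : Measurable V
  nonneg : ∀ x, 0 ≤ V x
  even : ∀ x, V |x| = V x
  mono : ∀ {x y}, 0 ≤ x → x ≤ y → V x ≤ V y
  growth : ∀ {x y}, 0 ≤ x → x ≤ y → y * V (x + y) ≤ (y + C * x) * V y

lemma rpow_three_halves {x : ℝ} (hx : 0 ≤ x) : x ^ (3 / 2 : ℝ) = x * √x := by
  rw [Real.sqrt_eq_rpow, ← Real.rpow_one_add' hx (by norm_num)]
  norm_num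

namespace IsAdmissibleWeight

variable {C : ℝ} {V : ℝ → ℝ}

lemma commutator_le (h : IsAdmissibleWeight C V) {x y : ℝ} (hx : 0 ≤ x) (hxy : x ≤ y) :
    (x + y) * V (x + y) - x * V x - y * V y ≤ (1 + 2 * C) * (x * V y) := by
  have hg := h.growth hx hxy
  have hC := h.const_nonneg
  have hVx : 0 ≤ x * V x := mul_nonneg hx (h.nonneg x)
  have hVy : 0 ≤ V y := h.nonneg y
  have near : x * V (x + y) ≤ x * ((1 + C) * V y) := by
    rcases (hx.trans hxy).eq_or_lt with hy | hy
    · rw [le_antisymm (hxy.trans hy.ge) hx]; simp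
    · refine mul_le_mul_of_nonneg_left (le_of_mul_le_mul_left ?_ hy) hx
      nlinarith [mul_le_mul_of_nonneg_right hxy (mul_nonneg hC hVy)]
  nlinarith

lemma commutator_nonneg (h : IsAdmissibleWeight C V) {x y : ℝ} (hx : 0 ≤ x) (hy : 0 ≤ y) :
    0 ≤ (x + y) * V (x + y) - x * V x - y * V y := by
  nlinarith [h.mono hx (le_add_of_nonneg_right hy), h.mono hy (le_add_of_nonneg_left hx)]

/-- In the resonance `a + b + c = 0` the frequency `c` of largest modulus has the sign opposite to
`a` and `b`, so the sum is a commutator. -/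
lemma abs_triad_le (h : IsAdmissibleWeight C V) {a b c : ℝ} (habc : a + b + c = 0)
    (hab : |a| ≤ |b|) (hbc : |b| ≤ |c|) :
    |a * V a + b * V b + c * V c| ≤ (1 + 2 * C) * (|a| * V b) := by
  have hsum : |c| = |a| + |b| := by
    rcases abs_cases a with ⟨ha, _⟩ | ⟨ha, _⟩ <;> rcases abs_cases b with ⟨hb, _⟩ | ⟨hb, _⟩ <;>
      rcases abs_cases c with ⟨hc, _⟩ | ⟨hc, _⟩ <;> linarith
  have hcomm : |a * V a + b * V b + c * V c| = |c| * V |c| - |a| * V |a| - |b| * V |b| := by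
    have hnonneg := h.commutator_nonneg (abs_nonneg a) (abs_nonneg b)
    rw [← hsum] at hnonneg
    rw [← abs_of_nonneg hnonneg, h.even, h.even, h.even]
    have hc : c = -(a + b) := by linarith
    have hab' : |a + b| = |a| + |b| := by rw [← hsum, hc, abs_neg]
    rcases abs_add_eq_add_abs_iff a b |>.1 hab' with ⟨ha, hb⟩ | ⟨ha, hb⟩
    · rw [hsum, abs_of_nonneg ha, abs_of_nonneg hb, ← abs_neg, hc]
      ring_nf
    · rw [hsum, abs_of_nonpos ha, abs_of_nonpos hb, hc]
      ring_nf
  rw [hcomm, hsum, ← h.even b]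
  exact h.commutator_le (abs_nonneg a) hab

lemma abs_triad_mul_le_of_le (h : IsAdmissibleWeight C V) {a b c σ X Y Z : ℝ}
    (habc : a + b + c = 0) (hab : |a| ≤ |b|) (hbc : |b| ≤ |c|) (hσ₀ : 0 ≤ σ) (hσ : σ ≤ √|a|)
    (hX : 0 ≤ X) (hY : 0 ≤ Y) (hZ : 0 ≤ Z) :
    |a * V a + b * V b + c * V c| * σ * (X * Y * Z) ≤
      (1 / 2 + C) * (|a| ^ (3 / 2 : ℝ) * X * (V b * Y ^ 2 + V c * Z ^ 2)) := by
  have hVb := h.nonneg b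
  have hC := h.const_nonneg
  have hVbc : V b ≤ V c := by
    rw [← h.even b, ← h.even c]; exact h.mono (abs_nonneg b) hbc
  have amgm : 2 * (V b * (Y * Z)) ≤ V b * Y ^ 2 + V c * Z ^ 2 := by
    nlinarith [mul_nonneg hVb (sq_nonneg (Y - Z)), mul_le_mul_of_nonneg_right hVbc (sq_nonneg Z)]
  calc |a * V a + b * V b + c * V c| * σ * (X * Y * Z)
      ≤ (1 + 2 * C) * (|a| * V b) * √|a| * (X * Y * Z) := by
        gcongr
        exact h.abs_triad_le habc hab hbc
    _ = (1 / 2 + C) * (|a| ^ (3 / 2 : ℝ) * X * (2 * (V b * (Y * Z)))) := by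
        rw [rpow_three_halves (abs_nonneg a)]; ring
    _ ≤ _ := by gcongr

lemma abs_triad_mul_le (h : IsAdmissibleWeight C V) {a b c σ X Y Z : ℝ} (habc : a + b + c = 0)
    (hσ₀ : 0 ≤ σ) (ha : σ ≤ √|a|) (hb : σ ≤ √|b|) (hc : σ ≤ √|c|)
    (hX : 0 ≤ X) (hY : 0 ≤ Y) (hZ : 0 ≤ Z) :
    |a * V a + b * V b + c * V c| * σ * (X * Y * Z) ≤
      (1 / 2 + C) * (|a| ^ (3 / 2 : ℝ) * X * (V b * Y ^ 2 + V c * Z ^ 2)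
        + |b| ^ (3 / 2 : ℝ) * Y * (V a * X ^ 2 + V c * Z ^ 2)
        + |c| ^ (3 / 2 : ℝ) * Z * (V a * X ^ 2 + V b * Y ^ 2)) := by
  have hC := h.const_nonneg
  have hVa := h.nonneg a
  have hVb := h.nonneg b
  have hVc := h.nonneg c
  have ta : 0 ≤ (1 / 2 + C) * (|a| ^ (3 / 2 : ℝ) * X * (V b * Y ^ 2 + V c * Z ^ 2)) := by positivity
  have tb : 0 ≤ (1 / 2 + C) * (|b| ^ (3 / 2 : ℝ) * Y * (V a * X ^ 2 + V c * Z ^ 2)) := by positivity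
  have tc : 0 ≤ (1 / 2 + C) * (|c| ^ (3 / 2 : ℝ) * Z * (V a * X ^ 2 + V b * Y ^ 2)) := by positivity
  have sorted (u v w : ℝ) {P Q R : ℝ} (huvw : u + v + w = 0) (huv : |u| ≤ |v|) (hvw : |v| ≤ |w|)
      (hu : σ ≤ √|u|) (hP : 0 ≤ P) (hQ : 0 ≤ Q) (hR : 0 ≤ R)
      (hsum : u * V u + v * V v + w * V w = a * V a + b * V b + c * V c)
      (hprod : P * Q * R = X * Y * Z) :
      |a * V a + b * V b + c * V c| * σ * (X * Y * Z) ≤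
        (1 / 2 + C) * (|u| ^ (3 / 2 : ℝ) * P * (V v * Q ^ 2 + V w * R ^ 2)) := by
    rw [← hsum, ← hprod]
    exact h.abs_triad_mul_le_of_le huvw huv hvw hσ₀ hu hP hQ hR
  rcases le_total |a| |b| with hab | hab <;> rcases le_total |b| |c| with hbc | hbc <;>
    rcases le_total |a| |c| with hac | hac
  · linarith [sorted a b c habc hab hbc ha hX hY hZ rfl rfl]
  · linarith [sorted a b c habc hab hbc ha hX hY hZ rfl rfl]
  · linarith [sorted a c b (by linarith) hac hbc ha hX hZ hY (by ring) (by ring)]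
  · linarith [sorted c a b (by linarith) hac hab hc hZ hX hY (by ring) (by ring)]
  · linarith [sorted b a c (by linarith) hab hac hb hY hX hZ (by ring) (by ring)]
  · linarith [sorted b c a (by linarith) hbc hac hb hY hZ hX (by ring) (by ring)]
  · linarith [sorted c b a (by linarith) hbc hab hc hZ hY hX (by ring) (by ring)]
  · linarith [sorted c b a (by linarith) hbc hab hc hZ hY hX (by ring) (by ring)]

end IsAdmissibleWeight
/-- `f` is Bochner integrable with integral `x`. The equation `∫ a, f a ∂μ = x` alone would be
satisfied by `x = 0` when `f` is not integrable. -/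
def HasBochnerIntegral {α E : Type*} [MeasurableSpace α] [NormedAddCommGroup E] [NormedSpace ℝ E]
    (f : α → E) (x : E) (μ : Measure α := by volume_tac) : Prop :=
  Integrable f μ ∧ ∫ a, f a ∂μ = x

namespace HasBochnerIntegral

variable {α β E : Type*} [MeasurableSpace α] [MeasurableSpace β] [NormedAddCommGroup E]
  [NormedSpace ℝ E] {μ : Measure α} {ν : Measure β} {f g : α → E} {x y : E}

lemma of_integrable (hf : Integrable f μ) : HasBochnerIntegral f (∫ a, f a ∂μ) μ := ⟨hf, rfl⟩

lemma congr (hf : HasBochnerIntegral f x μ) (h : f =ᵐ[μ] g) : HasBochnerIntegral g x μ :=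
  ⟨hf.1.congr h, integral_congr_ae h ▸ hf.2⟩

lemma add (hf : HasBochnerIntegral f x μ) (hg : HasBochnerIntegral g y μ) :
    HasBochnerIntegral (fun a => f a + g a) (x + y) μ :=
  ⟨hf.1.add hg.1, by rw [integral_add hf.1 hg.1, hf.2, hg.2]⟩

lemma sub (hf : HasBochnerIntegral f x μ) (hg : HasBochnerIntegral g y μ) :
    HasBochnerIntegral (fun a => f a - g a) (x - y) μ :=
  ⟨hf.1.sub hg.1, by rw [integral_sub hf.1 hg.1, hf.2, hg.2]⟩

lemma const_mul {f : α → ℝ} {x : ℝ} (hf : HasBochnerIntegral f x μ) (c : ℝ) :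
    HasBochnerIntegral (fun a => c * f a) (c * x) μ :=
  ⟨hf.1.const_mul c, by rw [integral_const_mul, hf.2]⟩

lemma conjugate {f : α → ℂ} {x : ℂ} (hf : HasBochnerIntegral f x μ) :
    HasBochnerIntegral (fun a => conj (f a)) (conj x) μ :=
  ⟨(LinearIsometryEquiv.integrable_comp_iff Complex.conjLIE).2 hf.1, by rw [integral_conj, hf.2]⟩

lemma comp {F : β → E} {φ : α → β} (hF : HasBochnerIntegral F x ν)
    (hφ : MeasurePreserving φ μ ν) : HasBochnerIntegral (fun a => F (φ a)) x μ := by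
  refine ⟨hφ.integrable_comp_of_integrable hF.1, ?_⟩
  rw [← hF.2, ← hφ.map_eq, integral_map hφ.aemeasurable (hφ.map_eq ▸ hF.1.1)]

lemma mul_prod [SFinite μ] [SFinite ν] {f : α → ℝ} {g : β → ℝ} {x y : ℝ}
    (hf : HasBochnerIntegral f x μ) (hg : HasBochnerIntegral g y ν) :
    HasBochnerIntegral (fun z : α × β => f z.1 * g z.2) (x * y) (μ.prod ν) :=
  ⟨hf.1.mul_prod hg.1, by rw [integral_prod_mul, hf.2, hg.2]⟩

lemma norm_le {b : α → ℝ} {y : ℝ} (hf : HasBochnerIntegral f x μ) (hb : HasBochnerIntegral b y μ)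
    (h : ∀ a, ‖f a‖ ≤ b a) : ‖x‖ ≤ y := by
  rw [← hf.2, ← hb.2]
  exact norm_integral_le_of_norm_le hb.1 (ae_of_all _ h)

end HasBochnerIntegral

lemma measurePreserving_prodMk_sub_snd :
    MeasurePreserving fun z : ℝ × ℝ => (z.1 - z.2, z.2) :=
  measurePreserving_sub_prod volume volume

lemma measurePreserving_prodMk_fst_sub :
    MeasurePreserving fun z : ℝ × ℝ => (z.1, z.1 - z.2) :=
  MeasurePreserving.skew_product (g := fun k l : ℝ => k - l) (MeasurePreserving.id volume)
    (measurable_fst.sub measurable_snd)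
    (ae_of_all _ fun k => (Measure.measurePreserving_sub_left volume k).map_eq)

lemma measurePreserving_prodMk_swap : MeasurePreserving fun z : ℝ × ℝ => (z.2, z.1) :=
  Measure.measurePreserving_swap

lemma hasBochnerIntegral_pairs {α β γ : ℝ → ℝ} {x y z : ℝ} (hα : HasBochnerIntegral α x)
    (hβ : HasBochnerIntegral β y) (hγ : HasBochnerIntegral γ z) :
    HasBochnerIntegral (fun z : ℝ × ℝ => α (z.1 - z.2) * (β z.2 + γ z.1)) (x * (y + z)) := by
  simp only [mul_add]
  exact ((hα.mul_prod hβ).comp measurePreserving_prodMk_sub_snd).add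
    ((hα.mul_prod hγ).comp (measurePreserving_prodMk_swap.comp measurePreserving_prodMk_fst_sub))

/-- Any two of the three frequencies in `k = (k - l) + l` are independent coordinates of `ℝ × ℝ`. -/
lemma hasBochnerIntegral_triads {α β : ℝ → ℝ} {x y : ℝ} (hα : HasBochnerIntegral α x)
    (hβ : HasBochnerIntegral β y) :
    HasBochnerIntegral (fun z : ℝ × ℝ => α (z.1 - z.2) * (β z.2 + β z.1)
      + α z.2 * (β (z.1 - z.2) + β z.1) + α z.1 * (β (z.1 - z.2) + β z.2)) (6 * (x * y)) := by
  have hpairs := hasBochnerIntegral_pairs hα hβ hβ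
  have hprod := hα.mul_prod hβ
  have h := (hpairs.add (hpairs.comp measurePreserving_prodMk_fst_sub)).add
    ((hprod.comp measurePreserving_prodMk_fst_sub).add hprod)
  convert h using 1
  · ext z; simp only [sub_sub_cancel]; ring
  · ring

/-- The reality condition `f(-k) = conj (f k)`, satisfied by the Fourier transform of a real-valued
function. -/
def ConjSymm (f : ℝ → ℂ) : Prop := ∀ᵐ k, f (-k) = conj (f k)

/-- The integrand of the trilinear form that gives the rate of change of `∫ V |w|²` under
the flow; `z = (k, l)` stands for the interaction of `k - l` and `l` producing `k`. -/
noncomputable def tripleDensity (V : ℝ → ℝ) (u v w : ℝ → ℂ) (z : ℝ × ℝ) : ℂ :=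
  ((z.1 * V z.1 * Sker (z.1 - z.2) z.2 : ℝ) : ℂ) * (u (z.1 - z.2) * v z.2 * conj (w z.1))

lemma norm_ofReal_mul_Sker (m : ℝ) (a b : ℝ) (x : ℂ) :
    ‖((m * Sker a b : ℝ) : ℂ) * x‖ = |m| * Sker a b * ‖x‖ := by
  rw [norm_mul, Complex.norm_real, Real.norm_eq_abs, abs_mul, abs_of_nonneg (Sker_nonneg a b)]

/-- Exchanging the roles of `k` and `l` moves the multiplier from the output to an input. -/
lemma HasBochnerIntegral.tripleDensity_swap {V : ℝ → ℝ} {u w : ℝ → ℂ} {I : ℂ} (hu : ConjSymm u)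
    (hI : HasBochnerIntegral (tripleDensity V u w w) I) :
    HasBochnerIntegral (fun z : ℝ × ℝ => ((z.2 * V z.2 * Sker (z.1 - z.2) z.2 : ℝ) : ℂ) *
      (u (z.1 - z.2) * w z.2 * conj (w z.1))) (conj I) := by
  refine (hI.conjugate.comp measurePreserving_prodMk_swap).congr ?_
  have hmp : MeasurePreserving fun z : ℝ × ℝ => (z.2 - z.1, z.1) :=
    measurePreserving_prodMk_sub_snd.comp measurePreserving_prodMk_swap
  have hu' : ∀ᵐ z : ℝ × ℝ, u (-(z.2 - z.1)) = conj (u (z.2 - z.1)) :=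
    hmp.quasiMeasurePreserving.ae (Measure.quasiMeasurePreserving_fst.ae hu)
  filter_upwards [hu'] with z hz
  simp only [tripleDensity, map_mul, Complex.conj_ofReal, Complex.conj_conj]
  rw [Sker_sub_comm z.1 z.2, ← hz, neg_sub]
  ring

/-- The three ways of reading a resonant triad `k = (k - l) + l` as an output with two inputs are
equivalent by conjugate symmetry, so their multipliers can be combined. -/
lemma HasBochnerIntegral.tripleDensity_symmetrize {V : ℝ → ℝ} {f : ℝ → ℂ} {I : ℂ}
    (hf : ConjSymm f) (hI : HasBochnerIntegral (tripleDensity V f f f) I) :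
    HasBochnerIntegral (fun z : ℝ × ℝ =>
      ((((z.1 - z.2) * V (z.1 - z.2) + z.2 * V z.2 - z.1 * V z.1) * Sker (z.1 - z.2) z.2 : ℝ) : ℂ) *
        (f (z.1 - z.2) * f z.2 * conj (f z.1))) (conj I + conj I - I) := by
  have hright := hI.tripleDensity_swap hf
  have hleft := hright.comp measurePreserving_prodMk_fst_sub
  refine ((hleft.add hright).sub hI).congr (ae_of_all _ fun z => ?_)
  simp only [tripleDensity, sub_sub_cancel, Sker_comm z.2 (z.1 - z.2)]
  push_cast
  ring

lemma abs_im_integral_tripleDensity_le {C : ℝ} {V : ℝ → ℝ} (hV : IsAdmissibleWeight C V)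
    {f : ℝ → ℂ} (hf : ConjSymm f) (hint : Integrable (tripleDensity V f f f))
    (hA : Integrable fun k => |k| ^ (3 / 2 : ℝ) * ‖f k‖)
    (hE : Integrable fun k => V k * ‖f k‖ ^ 2) :
    |(∫ z, tripleDensity V f f f z).im| ≤
      (1 + 2 * C) * ((∫ k, |k| ^ (3 / 2 : ℝ) * ‖f k‖) * ∫ k, V k * ‖f k‖ ^ 2) := by
  set I := ∫ z, tripleDensity V f f f z
  have hsymm := (HasBochnerIntegral.of_integrable hint).tripleDensity_symmetrize hf
  have hbound := (hasBochnerIntegral_triads (.of_integrable hA) (.of_integrable hE)).const_mul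
    (1 / 2 + C)
  have h := hsymm.norm_le hbound fun z => by
    have htri := hV.abs_triad_mul_le (a := z.1 - z.2) (b := z.2) (c := -z.1) (by ring)
      (Sker_nonneg _ _) (Sker_le_sqrt_abs_left _ _) (Sker_le_sqrt_abs_right _ _)
      (by simpa using Sker_le_sqrt_abs_add (z.1 - z.2) z.2)
      (norm_nonneg (f (z.1 - z.2))) (norm_nonneg (f z.2)) (norm_nonneg (f z.1))
    rw [← hV.even (-z.1), abs_neg, hV.even] at htri
    refine le_of_eq_of_le ?_ (htri.trans_eq (by ring))
    rw [← RCLike.norm_conj (f z.1), ← norm_mul, ← norm_mul, norm_ofReal_mul_Sker, neg_mul,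
      ← sub_eq_add_neg]
  have him : (conj I + conj I - I).im = -3 * I.im := by
    simp only [Complex.sub_im, Complex.add_im, Complex.conj_im]; ring
  have h3 := (Complex.abs_im_le_norm _).trans h
  rw [him, abs_mul] at h3
  norm_num at h3
  linarith

lemma im_integral_tripleDensity_one_eq_zero {f : ℝ → ℂ} (hf : ConjSymm f)
    (hint : Integrable (tripleDensity (fun _ => 1) f f f)) :
    (∫ z, tripleDensity (fun _ => 1) f f f z).im = 0 := by
  have h := congr_arg Complex.im
    ((HasBochnerIntegral.of_integrable hint).tripleDensity_symmetrize hf).2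
  simp only [mul_one, sub_add_cancel, sub_self, zero_mul, Complex.ofReal_zero, integral_zero,
    Complex.zero_im, Complex.sub_im, Complex.add_im, Complex.conj_im] at h
  linarith

lemma abs_im_integral_tripleDensity_one_le {h w : ℝ → ℂ} (hh : ConjSymm h)
    (hint : Integrable (tripleDensity (fun _ => 1) h w w))
    (hA : Integrable fun k => |k| ^ (3 / 2 : ℝ) * ‖h k‖) (hE : Integrable fun k => ‖w k‖ ^ 2) :
    |(∫ z, tripleDensity (fun _ => 1) h w w z).im| ≤
      (∫ k, |k| ^ (3 / 2 : ℝ) * ‖h k‖) * (∫ k, ‖w k‖ ^ 2) / 2 := by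
  set I := ∫ z, tripleDensity (fun _ => 1) h w w z
  have hout : HasBochnerIntegral (tripleDensity (fun _ => 1) h w w) I := .of_integrable hint
  have hbound := (hasBochnerIntegral_pairs (.of_integrable hA) (.of_integrable hE)
    (.of_integrable hE)).const_mul (1 / 2)
  have hdiff := ((hout.tripleDensity_swap hh).sub hout).norm_le hbound fun z => by
    have amgm : ‖w z.2‖ * ‖w z.1‖ ≤ 1 / 2 * (‖w z.2‖ ^ 2 + ‖w z.1‖ ^ 2) := by
      nlinarith [sq_nonneg (‖w z.2‖ - ‖w z.1‖)]
    calc _ = ‖((-(z.1 - z.2) * Sker (z.1 - z.2) z.2 : ℝ) : ℂ)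
            * (h (z.1 - z.2) * w z.2 * conj (w z.1))‖ := by
          rw [tripleDensity]; congr 1; push_cast; ring
      _ = |z.1 - z.2| * Sker (z.1 - z.2) z.2 * ‖h (z.1 - z.2)‖ * (‖w z.2‖ * ‖w z.1‖) := by
          rw [norm_ofReal_mul_Sker, abs_neg, norm_mul, norm_mul, RCLike.norm_conj]; ring
      _ ≤ |z.1 - z.2| * √|z.1 - z.2| * ‖h (z.1 - z.2)‖ *
            (1 / 2 * (‖w z.2‖ ^ 2 + ‖w z.1‖ ^ 2)) := by
          gcongr
          exact Sker_le_sqrt_abs_left _ _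
      _ = _ := by rw [rpow_three_halves (abs_nonneg _)]; ring
  have him : (conj I - I).im = -2 * I.im := by
    simp only [Complex.sub_im, Complex.conj_im]; ring
  have h2 := (Complex.abs_im_le_norm _).trans hdiff
  rw [him, abs_mul] at h2
  norm_num at h2
  linarith
lemma le_mul_exp_of_le_add_integral {E : ℝ → ℝ} {A c T : ℝ} (hc : 0 ≤ c)
    (hE : ContinuousOn E (Icc 0 T))
    (hle : ∀ τ ∈ Icc 0 T, E τ ≤ A + c * ∫ σ in (0 : ℝ)..τ, E σ) :
    ∀ τ ∈ Icc 0 T, E τ ≤ A * Real.exp (c * τ) := by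
  intro τ hτ
  have hT : 0 ≤ T := hτ.1.trans hτ.2
  set y : ℝ → ℝ := fun τ => A + c * ∫ σ in (0 : ℝ)..τ, E σ
  have hy : ContinuousOn y (Icc 0 T) := by
    have h := intervalIntegral.continuousOn_primitive_interval (μ := volume) (f := E) (a := 0)
      (b := T) (by rw [uIcc_of_le hT]; exact hE.integrableOn_Icc)
    rw [uIcc_of_le hT] at h
    exact continuousOn_const.add (continuousOn_const.mul h)
  have hy' : ∀ x ∈ Ico 0 T, HasDerivWithinAt y (c * E x) (Ici x) x := by
    intro x hx
    have hmem : Icc 0 T ∈ 𝓝[>] x := Icc_mem_nhdsGT_of_mem hx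
    have hint : IntervalIntegrable E volume 0 x := by
      refine (hE.mono ?_).intervalIntegrable
      rw [uIcc_of_le hx.1]; exact Icc_subset_Icc_right hx.2.le
    have hderiv := intervalIntegral.integral_hasDerivWithinAt_right hint (s := Ici x) (t := Ioi x)
      ⟨Icc 0 T, hmem, hE.aestronglyMeasurable measurableSet_Icc⟩
      ((hE x ⟨hx.1, hx.2.le⟩).mono_of_mem_nhdsWithin hmem)
    exact (hderiv.const_mul c).const_add A
  have hgronwall := le_gronwallBound_of_liminf_deriv_right_le (δ := A) (K := c) (ε := 0) hy
    (fun x hx r hr => (hy' x hx).liminf_right_slope_le hr) (by simp [y])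
    (fun x hx => by
      rw [add_zero]; exact mul_le_mul_of_nonneg_left (hle x ⟨hx.1, hx.2.le⟩) hc) τ hτ
  rw [gronwallBound_ε0, sub_zero] at hgronwall
  exact (hle τ hτ).trans hgronwall

lemma continuousOn_of_eq_add_integral {E q : ℝ → ℝ} {T : ℝ} (hT : 0 ≤ T)
    (hq : IntegrableOn q (Icc 0 T))
    (hE : ∀ τ ∈ Icc 0 T, E τ = E 0 + ∫ σ in (0 : ℝ)..τ, q σ) : ContinuousOn E (Icc 0 T) := by
  have h := intervalIntegral.continuousOn_primitive_interval (μ := volume) (f := q) (a := 0)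
    (b := T) (by rwa [uIcc_of_le hT])
  rw [uIcc_of_le hT] at h
  exact (continuousOn_const.add h).congr hE

lemma le_mul_exp_of_eq_add_integral {E q : ℝ → ℝ} {c d T : ℝ} (hc : 0 ≤ c) (hd : 0 ≤ d)
    (hE₀ : 0 ≤ E 0) (hq : IntegrableOn q (Icc 0 T))
    (hE : ∀ τ ∈ Icc 0 T, E τ = E 0 + ∫ σ in (0 : ℝ)..τ, q σ)
    (hle : ∀ σ ∈ Icc 0 T, q σ ≤ c * E σ + d) :
    ∀ τ ∈ Icc 0 T, E τ ≤ (E 0 + d * T) * Real.exp (c * T) := by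
  intro τ hτ
  have hT : 0 ≤ T := hτ.1.trans hτ.2
  have hcont := continuousOn_of_eq_add_integral hT hq hE
  have hbound := le_mul_exp_of_le_add_integral (A := E 0 + d * T) hc hcont fun σ hσ => by
    have hsub : Icc 0 σ ⊆ Icc 0 T := Icc_subset_Icc_right hσ.2
    have hEint : IntervalIntegrable E volume 0 σ :=
      (hcont.mono (by rwa [uIcc_of_le hσ.1])).intervalIntegrable
    have hqint : IntervalIntegrable q volume 0 σ := by
      rw [intervalIntegrable_iff, uIoc_of_le hσ.1]
      exact hq.mono_set (Ioc_subset_Icc_self.trans hsub)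
    have h := intervalIntegral.integral_mono_on hσ.1 hqint
      ((hEint.const_mul c).add intervalIntegrable_const) fun x hx => hle x (hsub hx)
    rw [intervalIntegral.integral_add (hEint.const_mul c) intervalIntegrable_const,
      intervalIntegral.integral_const_mul, intervalIntegral.integral_const, sub_zero,
      smul_eq_mul] at h
    rw [hE σ hσ]
    linarith [mul_le_mul_of_nonneg_left hσ.2 hd]
  refine (hbound τ hτ).trans ?_
  have : 0 ≤ E 0 + d * T := by positivity
  gcongr
  exact hτ.2

/-- A bootstrap: the growth hypothesis is only needed as long as `E` stays below a threshold which
its conclusion does not reach. -/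
lemma le_mul_exp_of_bootstrap {E q : ℝ → ℝ} {B c d T : ℝ} (hc : 0 ≤ c) (hd : 0 ≤ d)
    (hE₀ : 0 ≤ E 0) (hq : IntegrableOn q (Icc 0 T))
    (hE : ∀ τ ∈ Icc 0 T, E τ = E 0 + ∫ σ in (0 : ℝ)..τ, q σ)
    (hB : (E 0 + d * T) * Real.exp (c * T) < B)
    (hle : ∀ σ ∈ Icc 0 T, E σ ≤ B → q σ ≤ c * E σ + d) :
    ∀ τ ∈ Icc 0 T, E τ ≤ (E 0 + d * T) * Real.exp (c * T) := by
  have below : ∀ τ ∈ Icc 0 T, (∀ σ ∈ Icc 0 τ, E σ ≤ B) →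
      E τ ≤ (E 0 + d * T) * Real.exp (c * T) := fun τ hτ hEB => by
    have hsub : Icc 0 τ ⊆ Icc 0 T := Icc_subset_Icc_right hτ.2
    have h := le_mul_exp_of_eq_add_integral hc hd hE₀ (hq.mono_set hsub)
      (fun σ hσ => hE σ (hsub hσ)) (fun σ hσ => hle σ (hsub hσ) (hEB σ hσ)) τ ⟨hτ.1, le_rfl⟩
    have hT : 0 ≤ T := hτ.1.trans hτ.2
    have : 0 ≤ E 0 + d * T := by positivity
    exact h.trans (by gcongr; exacts [hτ.2, hτ.2])
  intro τ hτ
  have hT : 0 ≤ T := hτ.1.trans hτ.2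
  have hcont := continuousOn_of_eq_add_integral hT hq hE
  have hE₀B : E 0 ≤ B := calc
    E 0 ≤ E 0 + d * T := le_add_of_nonneg_right (by positivity)
    _ ≤ (E 0 + d * T) * Real.exp (c * T) :=
      le_mul_of_one_le_right (by positivity) (Real.one_le_exp (by positivity))
    _ ≤ B := hB.le
  have cross : ∀ y ∈ Icc 0 T, B < E y → ∃ x ∈ Icc 0 y, E x = B := fun y hy hyB =>
    intermediate_value_Icc hy.1 (hcont.mono (Icc_subset_Icc_right hy.2)) ⟨hE₀B, hyB.le⟩
  refine below τ hτ fun σ hσ => ?_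
  by_contra! hσB
  obtain ⟨x₀, ⟨hx₀, hEx₀⟩, hleast⟩ : ∃ x, IsLeast (Icc 0 T ∩ E ⁻¹' {B}) x := by
    obtain ⟨x, hx, hxB⟩ := cross σ ⟨hσ.1, hσ.2.trans hτ.2⟩ hσB
    exact (isCompact_Icc.of_isClosed_subset (hcont.preimage_isClosed_of_isClosed isClosed_Icc
      isClosed_singleton) inter_subset_left).exists_isLeast
        ⟨x, ⟨hx.1, hx.2.trans (hσ.2.trans hτ.2)⟩, hxB⟩
  have hx₀B := below x₀ hx₀ fun y hy => by
    by_contra! hyB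
    obtain ⟨x, hx, hxB⟩ := cross y ⟨hy.1, hy.2.trans hx₀.2⟩ hyB
    have hyx₀ : y = x₀ :=
      hy.2.antisymm ((hleast ⟨⟨hx.1, hx.2.trans (hy.2.trans hx₀.2)⟩, hxB⟩).trans hx.2)
    exact hyB.ne' (hyx₀ ▸ hEx₀)
  exact (hx₀B.trans_lt hB).ne hEx₀

/-- The evolution `∂_τ w = Q` at almost every frequency on `[a, b]`, with enough integrability to
differentiate the weighted energy `∫ V |w|²` in time. -/
structure IsEnergyFlow (V : ℝ → ℝ) (w Q : ℝ → ℝ → ℂ) (a b : ℝ) : Prop where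
  measurable_weight : Measurable V
  weight_nonneg : ∀ k, 0 ≤ V k
  measurable : Measurable (Function.uncurry w)
  measurable_deriv : Measurable (Function.uncurry Q)
  continuousOn : ∀ᵐ k, ContinuousOn (fun τ => w τ k) (Icc a b)
  continuousOn_deriv : ∀ᵐ k, ContinuousOn (fun τ => Q τ k) (Icc a b)
  hasDerivAt : ∀ᵐ k, ∀ τ ∈ Ioo a b, HasDerivAt (fun τ => w τ k) (Q τ k) τ
  integrable_energy : ∀ τ ∈ Icc a b, Integrable fun k => V k * ‖w τ k‖ ^ 2
  integrable_power : ∀ τ ∈ Icc a b, Integrable fun k => V k * (‖w τ k‖ * ‖Q τ k‖)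
  exists_power_le : ∃ B, ∀ τ ∈ Icc a b, ∫ k, V k * (‖w τ k‖ * ‖Q τ k‖) ≤ B

namespace IsEnergyFlow

variable {V : ℝ → ℝ} {w Q : ℝ → ℝ → ℂ} {a b : ℝ}

lemma mono (h : IsEnergyFlow V w Q a b) {a' b' : ℝ} (ha : a ≤ a') (hb : b' ≤ b) :
    IsEnergyFlow V w Q a' b' := by
  have hsub : Icc a' b' ⊆ Icc a b := Icc_subset_Icc ha hb
  obtain ⟨B, hB⟩ := h.exists_power_le
  exact
    { h with
      continuousOn := h.continuousOn.mono fun k hk => hk.mono hsub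
      continuousOn_deriv := h.continuousOn_deriv.mono fun k hk => hk.mono hsub
      hasDerivAt := h.hasDerivAt.mono fun k hk τ hτ => hk τ (Ioo_subset_Ioo ha hb hτ)
      integrable_energy := fun τ hτ => h.integrable_energy τ (hsub hτ)
      integrable_power := fun τ hτ => h.integrable_power τ (hsub hτ)
      exists_power_le := ⟨B, fun τ hτ => hB τ (hsub hτ)⟩ }

lemma timeReversal (h : IsEnergyFlow V w Q a b) :
    IsEnergyFlow V (fun τ => w (-τ)) (fun τ k => -Q (-τ) k) (-b) (-a) := by
  have hmem : ∀ τ ∈ Icc (-b) (-a), -τ ∈ Icc a b := fun τ hτ =>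
    ⟨by linarith [hτ.2], by linarith [hτ.1]⟩
  have hneg : Measurable fun z : ℝ × ℝ => (-z.1, z.2) := by fun_prop
  obtain ⟨B, hB⟩ := h.exists_power_le
  exact
    { measurable_weight := h.measurable_weight
      weight_nonneg := h.weight_nonneg
      measurable := h.measurable.comp hneg
      measurable_deriv := (h.measurable_deriv.comp hneg).neg
      continuousOn := h.continuousOn.mono fun k hk => hk.comp continuousOn_neg hmem
      continuousOn_deriv := h.continuousOn_deriv.mono fun k hk =>
        (hk.comp continuousOn_neg hmem).neg
      hasDerivAt := h.hasDerivAt.mono fun k hk τ hτ => by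
        simpa [Function.comp_def] using HasDerivAt.scomp τ
          (hk (-τ) ⟨by linarith [hτ.2], by linarith [hτ.1]⟩) (hasDerivAt_neg τ)
      integrable_energy := fun τ hτ => h.integrable_energy _ (hmem τ hτ)
      integrable_power := fun τ hτ => by simpa using h.integrable_power _ (hmem τ hτ)
      exists_power_le := ⟨B, fun τ hτ => by simpa using hB _ (hmem τ hτ)⟩ }

lemma integrable_rate (h : IsEnergyFlow V w Q a b) :
    Integrable (Function.uncurry fun σ k => V k * (2 * (conj (w σ k) * Q σ k).re))
      ((volume.restrict (Icc a b)).prod volume) := by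
  set Φ : ℝ → ℝ → ℝ := fun σ k => V k * (2 * (conj (w σ k) * Q σ k).re)
  have hΦ : Measurable (Function.uncurry Φ) :=
    (h.measurable_weight.comp measurable_snd).mul ((Complex.measurable_re.comp
      ((Complex.continuous_conj.measurable.comp h.measurable).mul h.measurable_deriv)).const_mul 2)
  have hle : ∀ σ k, ‖Φ σ k‖ ≤ 2 * (V k * (‖w σ k‖ * ‖Q σ k‖)) := fun σ k => by
    have hre := Complex.abs_re_le_norm (conj (w σ k) * Q σ k)
    rw [norm_mul, RCLike.norm_conj] at hre
    rw [Real.norm_eq_abs, abs_mul, abs_mul, abs_two, abs_of_nonneg (h.weight_nonneg k)]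
    linarith [mul_le_mul_of_nonneg_left hre (h.weight_nonneg k)]
  have hint : ∀ σ ∈ Icc a b, Integrable (Φ σ) := fun σ hσ =>
    ((h.integrable_power σ hσ).const_mul 2).mono'
      (hΦ.comp measurable_prodMk_left).aestronglyMeasurable (ae_of_all _ (hle σ))
  obtain ⟨B, hB⟩ := h.exists_power_le
  rw [integrable_prod_iff hΦ.aestronglyMeasurable]
  refine ⟨(ae_restrict_mem measurableSet_Icc).mono hint,
    (integrable_const (2 * B)).mono'
      hΦ.norm.stronglyMeasurable.integral_prod_right'.aestronglyMeasurable ?_⟩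
  filter_upwards [ae_restrict_mem measurableSet_Icc] with σ hσ
  rw [Real.norm_of_nonneg (integral_nonneg fun _ => norm_nonneg _)]
  calc ∫ k, ‖Φ σ k‖ ≤ ∫ k, 2 * (V k * (‖w σ k‖ * ‖Q σ k‖)) :=
        integral_mono (hint σ hσ).norm ((h.integrable_power σ hσ).const_mul 2) (hle σ)
    _ ≤ 2 * B := by rw [integral_const_mul]; linarith [hB σ hσ]

lemma integral_rate_apply (h : IsEnergyFlow V w Q a b) {τ : ℝ} (hτ : τ ∈ Icc a b) :
    ∀ᵐ k, ∫ σ in a..τ, V k * (2 * (conj (w σ k) * Q σ k).re) =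
      V k * ‖w τ k‖ ^ 2 - V k * ‖w a k‖ ^ 2 := by
  have hsub : Icc a τ ⊆ Icc a b := Icc_subset_Icc_right hτ.2
  filter_upwards [h.continuousOn, h.continuousOn_deriv, h.hasDerivAt] with k hw hQ hderiv
  refine intervalIntegral.integral_eq_sub_of_hasDerivAt_of_le hτ.1
    (f := fun σ => V k * ‖w σ k‖ ^ 2) ?_ ?_ ?_
  · exact continuousOn_const.mul ((hw.mono hsub).norm.pow 2)
  · intro σ hσ
    convert! (hderiv σ ⟨hσ.1, hσ.2.trans_le hτ.2⟩).norm_sq.const_mul (V k) using 1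
    simp only [Complex.inner]
    ring_nf
  · refine ContinuousOn.intervalIntegrable ?_
    rw [uIcc_of_le hτ.1]
    exact continuousOn_const.mul (continuousOn_const.mul (Complex.continuous_re.comp_continuousOn
      ((Complex.continuous_conj.comp_continuousOn (hw.mono hsub)).mul (hQ.mono hsub))))

lemma energy_eq (h : IsEnergyFlow V w Q a b) {τ : ℝ} (hτ : τ ∈ Icc a b) :
    ∫ k, V k * ‖w τ k‖ ^ 2 = (∫ k, V k * ‖w a k‖ ^ 2) +
      ∫ σ in a..τ, ∫ k, V k * (2 * (conj (w σ k) * Q σ k).re) := by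
  have hint := h.integrable_rate.mono_measure (Measure.prod_mono (Measure.restrict_mono
    (Ioc_subset_Icc_self.trans (Icc_subset_Icc_right hτ.2)) le_rfl) le_rfl)
  have hswap : ∫ σ in a..τ, ∫ k, V k * (2 * (conj (w σ k) * Q σ k).re) =
      ∫ k, ∫ σ in a..τ, V k * (2 * (conj (w σ k) * Q σ k).re) := by
    simp only [intervalIntegral.integral_of_le hτ.1]
    exact integral_integral_swap hint
  rw [hswap, integral_congr_ae (h.integral_rate_apply hτ), integral_sub (h.integrable_energy τ hτ)
    (h.integrable_energy a ⟨le_rfl, hτ.1.trans hτ.2⟩)]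
  ring

lemma energy_le_of_bootstrap_of_nonneg {T B c d : ℝ} (h : IsEnergyFlow V w Q 0 T) (hc : 0 ≤ c)
    (hd : 0 ≤ d) (hB : ((∫ k, V k * ‖w 0 k‖ ^ 2) + d * T) * Real.exp (c * T) < B)
    (hrate : ∀ τ ∈ Icc 0 T, ∫ k, V k * ‖w τ k‖ ^ 2 ≤ B →
      |∫ k, V k * (2 * (conj (w τ k) * Q τ k).re)| ≤ c * (∫ k, V k * ‖w τ k‖ ^ 2) + d) :
    ∀ τ ∈ Icc 0 T, ∫ k, V k * ‖w τ k‖ ^ 2 ≤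
      ((∫ k, V k * ‖w 0 k‖ ^ 2) + d * T) * Real.exp (c * T) :=
  le_mul_exp_of_bootstrap (E := fun τ => ∫ k, V k * ‖w τ k‖ ^ 2) hc hd
    (integral_nonneg fun k => mul_nonneg (h.weight_nonneg k) (by positivity))
    h.integrable_rate.integral_prod_left (fun _ hτ => h.energy_eq hτ) hB
    fun τ hτ hle => (le_abs_self _).trans (hrate τ hτ hle)

lemma energy_le_of_bootstrap {T B c d : ℝ} (h : IsEnergyFlow V w Q (-T) T) (hc : 0 ≤ c)
    (hd : 0 ≤ d) (hB : ((∫ k, V k * ‖w 0 k‖ ^ 2) + d * T) * Real.exp (c * T) < B)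
    (hrate : ∀ τ ∈ Icc (-T) T, ∫ k, V k * ‖w τ k‖ ^ 2 ≤ B →
      |∫ k, V k * (2 * (conj (w τ k) * Q τ k).re)| ≤ c * (∫ k, V k * ‖w τ k‖ ^ 2) + d) :
    ∀ τ ∈ Icc (-T) T, ∫ k, V k * ‖w τ k‖ ^ 2 ≤
      ((∫ k, V k * ‖w 0 k‖ ^ 2) + d * T) * Real.exp (c * T) := by
  intro τ hτ
  have hT : 0 ≤ T := by linarith [hτ.1, hτ.2]
  rcases le_total 0 τ with hτ0 | hτ0
  · exact (h.mono (by linarith) le_rfl).energy_le_of_bootstrap_of_nonneg hc hd hB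
      (fun σ hσ => hrate σ ⟨by linarith [hσ.1], hσ.2⟩) τ ⟨hτ0, hτ.2⟩
  · have hrev := h.timeReversal.mono (a' := 0) (b' := T) (by linarith) (by simp)
    simpa using hrev.energy_le_of_bootstrap_of_nonneg hc hd (by simpa using hB) (fun σ hσ => by
      simpa only [mul_neg, Complex.neg_re, integral_neg, abs_neg] using
        hrate (-σ) ⟨by linarith [hσ.2], by linarith [hσ.1]⟩) (-τ) ⟨by linarith, by linarith [hτ.1]⟩

lemma energy_le {T c d : ℝ} (h : IsEnergyFlow V w Q (-T) T) (hc : 0 ≤ c) (hd : 0 ≤ d)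
    (hrate : ∀ τ ∈ Icc (-T) T, |∫ k, V k * (2 * (conj (w τ k) * Q τ k).re)| ≤
      c * (∫ k, V k * ‖w τ k‖ ^ 2) + d) :
    ∀ τ ∈ Icc (-T) T, ∫ k, V k * ‖w τ k‖ ^ 2 ≤
      ((∫ k, V k * ‖w 0 k‖ ^ 2) + d * T) * Real.exp (c * T) :=
  h.energy_le_of_bootstrap hc hd (lt_add_one _) fun τ hτ _ => hrate τ hτ

end IsEnergyFlow
/-- The weight `1 + |k|^{2s}` of `Hˢ` on the Fourier side. -/
noncomputable def sobolevWeight (s k : ℝ) : ℝ := 1 + |k| ^ (2 * s)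

/-- The Sobolev weight damped below frequency `R`; its energy controls the one carried by
`|k| ≥ R`. -/
noncomputable def tailWeight (s R k : ℝ) : ℝ := sobolevWeight s k * min 1 (|k| / R)

lemma one_le_sobolevWeight (s k : ℝ) : 1 ≤ sobolevWeight s k :=
  le_add_of_nonneg_right (by positivity)

lemma sobolevWeight_pos (s k : ℝ) : 0 < sobolevWeight s k :=
  one_pos.trans_le (one_le_sobolevWeight s k)

lemma abs_rpow_le_sobolevWeight (s k : ℝ) : |k| ^ (2 * s) ≤ sobolevWeight s k :=
  le_add_of_nonneg_left zero_le_one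

@[fun_prop]
lemma measurable_sobolevWeight (s : ℝ) : Measurable (sobolevWeight s) := by
  unfold sobolevWeight; fun_prop

lemma sobolevWeight_le_sobolevWeight {s : ℝ} (hs : 0 ≤ s) {x y : ℝ} (h : |x| ≤ |y|) :
    sobolevWeight s x ≤ sobolevWeight s y := by
  unfold sobolevWeight; gcongr

lemma tailWeight_nonneg {s R : ℝ} (hR : 0 ≤ R) (k : ℝ) : 0 ≤ tailWeight s R k :=
  mul_nonneg (sobolevWeight_pos s k).le (le_min zero_le_one (by positivity))

lemma tailWeight_le_sobolevWeight (s R k : ℝ) : tailWeight s R k ≤ sobolevWeight s k :=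
  mul_le_of_le_one_right (sobolevWeight_pos s k).le (min_le_left _ _)

lemma tailWeight_eq_sobolevWeight {s R k : ℝ} (hR : 0 < R) (hk : R ≤ |k|) :
    tailWeight s R k = sobolevWeight s k := by
  rw [tailWeight, min_eq_left ((one_le_div hR).2 hk), mul_one]

lemma one_add_rpow_le {p t : ℝ} (hp : 1 ≤ p) (ht₀ : 0 ≤ t) (ht : t ≤ 1) :
    (1 + t) ^ p ≤ 1 + 2 ^ p * t := by
  have hconv := (convexOn_rpow hp).2 (x := 1) (y := 2) (mem_Ici.2 zero_le_one)
    (mem_Ici.2 zero_le_two) (sub_nonneg.2 ht) ht₀ (sub_add_cancel 1 t)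
  simp only [smul_eq_mul, Real.one_rpow, mul_one] at hconv
  rw [show 1 - t + t * 2 = 1 + t by ring] at hconv
  linarith

lemma abs_add_eq_one_add_div_mul {x y : ℝ} (hx : 0 ≤ x) (hy : 0 < y) :
    |x + y| = (1 + x / y) * |y| := by
  rw [abs_of_pos hy, abs_of_pos (by positivity)]
  field_simp
  ring

lemma sobolevWeight_add_le {s : ℝ} (hs : 0 ≤ s) {x y : ℝ} (hx : 0 ≤ x) (hy : 0 < y) :
    sobolevWeight s (x + y) ≤ (1 + x / y) ^ (2 * s) * sobolevWeight s y := by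
  have h : 0 ≤ x / y := by positivity
  have hone : 1 ≤ (1 + x / y) ^ (2 * s) := Real.one_le_rpow (by linarith) (by linarith)
  rw [sobolevWeight, sobolevWeight, abs_add_eq_one_add_div_mul hx hy,
    Real.mul_rpow (by linarith) (abs_nonneg y)]
  linarith

lemma tailWeight_add_le {s R : ℝ} (hs : 0 ≤ s) (hR : 0 ≤ R) {x y : ℝ} (hx : 0 ≤ x) (hy : 0 < y) :
    tailWeight s R (x + y) ≤ (1 + x / y) ^ (2 * s + 1) * tailWeight s R y := by
  have h : 0 ≤ x / y := by positivity
  have hmin : min 1 (|x + y| / R) ≤ (1 + x / y) * min 1 (|y| / R) := by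
    rw [abs_add_eq_one_add_div_mul hx hy, mul_min_of_nonneg _ _ (by linarith), mul_div_assoc]
    exact min_le_min_right _ (by linarith)
  have hV := (sobolevWeight_pos s y).le
  rw [Real.rpow_add_one (by positivity)]
  calc tailWeight s R (x + y)
      ≤ ((1 + x / y) ^ (2 * s) * sobolevWeight s y) * ((1 + x / y) * min 1 (|y| / R)) := by
        unfold tailWeight
        gcongr
        exact sobolevWeight_add_le hs hx hy
    _ = (1 + x / y) ^ (2 * s) * (1 + x / y) * tailWeight s R y := by rw [tailWeight]; ring

lemma isAdmissibleWeight_of_rpow_growth {V : ℝ → ℝ} {p : ℝ} (hp : 1 ≤ p) (hV : Measurable V)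
    (hnonneg : ∀ x, 0 ≤ V x) (heven : ∀ x, V |x| = V x)
    (hmono : ∀ {x y}, 0 ≤ x → x ≤ y → V x ≤ V y)
    (hgrowth : ∀ {x y}, 0 ≤ x → 0 < y → V (x + y) ≤ (1 + x / y) ^ p * V y) :
    IsAdmissibleWeight (2 ^ p) V where
  const_nonneg := by positivity
  measurable := hV
  nonneg := hnonneg
  even := heven
  mono := hmono
  growth {x y} hx hxy := by
    rcases (hx.trans hxy).eq_or_lt with rfl | hy
    · simp [le_antisymm hxy hx]
    · have h := one_add_rpow_le hp (div_nonneg hx hy.le) ((div_le_one hy).2 hxy)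
      calc y * V (x + y) ≤ y * ((1 + 2 ^ p * (x / y)) * V y) := by
            have := hnonneg y
            gcongr
            exact (hgrowth hx hy).trans (by gcongr)
        _ = (y + 2 ^ p * x) * V y := by field_simp

lemma isAdmissibleWeight_sobolevWeight {s : ℝ} (hs : 0 ≤ s) :
    IsAdmissibleWeight (2 ^ (2 * s + 1)) (sobolevWeight s) :=
  isAdmissibleWeight_of_rpow_growth (by linarith) (measurable_sobolevWeight s)
    (fun x => (sobolevWeight_pos s x).le) (fun x => by simp [sobolevWeight])
    (fun hx hxy => sobolevWeight_le_sobolevWeight hs (abs_le_abs_of_nonneg hx hxy))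
    fun {x y} hx hy => (sobolevWeight_add_le hs hx hy).trans (by
      have hxy : 0 ≤ x / y := by positivity
      have := (sobolevWeight_pos s y).le
      gcongr <;> linarith)

lemma isAdmissibleWeight_tailWeight {s R : ℝ} (hs : 0 ≤ s) (hR : 0 ≤ R) :
    IsAdmissibleWeight (2 ^ (2 * s + 1)) (tailWeight s R) :=
  isAdmissibleWeight_of_rpow_growth (by linarith) (by unfold tailWeight; fun_prop)
    (tailWeight_nonneg hR) (fun x => by simp [tailWeight, sobolevWeight])
    (fun {x y} hx hxy => by
      have habs := abs_le_abs_of_nonneg hx hxy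
      have := (sobolevWeight_pos s y).le
      unfold tailWeight
      gcongr
      exact sobolevWeight_le_sobolevWeight hs habs)
    (tailWeight_add_le hs hR)

/-- The moment `∫ |k|^j / (1 + |k|^{2s})`, the constant of the Cauchy–Schwarz bounds for
`∫ |k|^{j/2} |f|` by the `Hˢ` norm. -/
noncomputable def sobolevMoment (s j : ℝ) : ℝ := ∫ k : ℝ, |k| ^ j / sobolevWeight s k

lemma one_add_abs_rpow_le {s : ℝ} (hs : 0 ≤ s) (k : ℝ) :
    (1 + |k|) ^ (2 * s) ≤ 2 ^ (2 * s) * sobolevWeight s k := by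
  rcases le_total |k| 1 with hk | hk
  · calc (1 + |k|) ^ (2 * s) ≤ 2 ^ (2 * s) := by gcongr; linarith
      _ ≤ 2 ^ (2 * s) * sobolevWeight s k :=
        le_mul_of_one_le_right (by positivity) (one_le_sobolevWeight s k)
  · calc (1 + |k|) ^ (2 * s) ≤ (2 * |k|) ^ (2 * s) := by gcongr; linarith
      _ = 2 ^ (2 * s) * |k| ^ (2 * s) := Real.mul_rpow zero_le_two (abs_nonneg k)
      _ ≤ 2 ^ (2 * s) * sobolevWeight s k := by gcongr; exact abs_rpow_le_sobolevWeight s k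

lemma integrable_rpow_div_sobolevWeight {s j : ℝ} (hj : 0 ≤ j) (hjs : j + 1 < 2 * s) :
    Integrable fun k => |k| ^ j / sobolevWeight s k := by
  have hdom : Integrable fun k : ℝ => 2 ^ (2 * s) * (1 + ‖k‖) ^ (-(2 * s - j)) :=
    (integrable_one_add_norm (by simp; linarith)).const_mul _
  refine hdom.mono' (Measurable.aestronglyMeasurable (by fun_prop)) (ae_of_all _ fun k => ?_)
  have hV := sobolevWeight_pos s k
  rw [Real.norm_of_nonneg (by positivity), Real.norm_eq_abs, div_le_iff₀ hV]
  calc |k| ^ j ≤ (1 + |k|) ^ j := by gcongr; linarith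
    _ = (1 + |k|) ^ (-(2 * s - j)) * (1 + |k|) ^ (2 * s) := by
        rw [← Real.rpow_add (by positivity)]; ring_nf
    _ ≤ (1 + |k|) ^ (-(2 * s - j)) * (2 ^ (2 * s) * sobolevWeight s k) := by
        gcongr; exact one_add_abs_rpow_le (by linarith) k
    _ = 2 ^ (2 * s) * (1 + |k|) ^ (-(2 * s - j)) * sobolevWeight s k := by ring

lemma hasBochnerIntegral_rpow_three_div {s lam : ℝ} (hs : 2 < s) (hlam : 0 < lam) :
    HasBochnerIntegral (fun k : ℝ => |k| ^ (3 : ℝ) / (lam ^ (2 * s) + |k| ^ (2 * s)))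
      (lam ^ (4 - 2 * s) * sobolevMoment s 3) := by
  have hscale : (fun k : ℝ => |k| ^ (3 : ℝ) / (lam ^ (2 * s) + |k| ^ (2 * s))) = fun k : ℝ =>
      lam ^ (3 - 2 * s) * (fun x => |x| ^ (3 : ℝ) / sobolevWeight s x) (lam⁻¹ * k) := by
    ext k
    simp only [sobolevWeight]
    rw [abs_mul, abs_of_pos (inv_pos.2 hlam), Real.mul_rpow (by positivity) (abs_nonneg k),
      Real.mul_rpow (by positivity) (abs_nonneg k), Real.inv_rpow hlam.le,
      Real.inv_rpow hlam.le, Real.rpow_sub hlam]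
    have : 0 < lam ^ (2 * s) := by positivity
    have : 0 < lam ^ (3 : ℝ) := by positivity
    have : 0 ≤ |k| ^ (2 * s) := by positivity
    field_simp
  rw [hscale]
  refine ⟨((integrable_rpow_div_sobolevWeight (by norm_num)
    (by linarith)).comp_mul_left' (inv_pos.2 hlam).ne').const_mul _, ?_⟩
  rw [integral_const_mul,
    Measure.integral_comp_mul_left (fun x => |x| ^ (3 : ℝ) / sobolevWeight s x) lam⁻¹, inv_inv,
    abs_of_pos hlam, smul_eq_mul, ← mul_assoc, ← Real.rpow_add_one hlam.ne', sobolevMoment]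
  ring_nf

lemma integrable_and_integral_mul_norm_le {m θ : ℝ → ℝ} {f : ℝ → ℂ} (hm₀ : ∀ k, 0 ≤ m k)
    (hθ₀ : ∀ k, 0 < θ k) (hm : Measurable m) (hθ : Measurable θ) (hf : Measurable f)
    (hmθ : Integrable fun k => m k ^ 2 / θ k) (hθf : Integrable fun k => θ k * ‖f k‖ ^ 2) :
    Integrable (fun k => m k * ‖f k‖) ∧
      ∫ k, m k * ‖f k‖ ≤ √((∫ k, m k ^ 2 / θ k) * ∫ k, θ k * ‖f k‖ ^ 2) := by
  have hsq : ∀ k, √(θ k) ^ 2 = θ k := fun k => Real.sq_sqrt (hθ₀ k).le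
  have hpos : ∀ k, 0 < √(θ k) := fun k => Real.sqrt_pos.2 (hθ₀ k)
  have ha : MemLp (fun k => m k / √(θ k)) 2 := by
    refine (memLp_two_iff_integrable_sq (Measurable.aestronglyMeasurable (by fun_prop))).2 ?_
    simpa only [div_pow, hsq] using hmθ
  have hb : MemLp (fun k => √(θ k) * ‖f k‖) 2 := by
    refine (memLp_two_iff_integrable_sq (Measurable.aestronglyMeasurable (by fun_prop))).2 ?_
    simpa only [mul_pow, hsq] using hθf
  have hprod : ∀ k, m k / √(θ k) * (√(θ k) * ‖f k‖) = m k * ‖f k‖ := fun k => by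
    have := (hpos k).ne'
    field_simp
  have hholder := integral_mul_le_Lp_mul_Lq_of_nonneg (μ := volume) Real.HolderConjugate.two_two
    (ae_of_all _ fun k => div_nonneg (hm₀ k) (hpos k).le)
    (ae_of_all _ fun k => mul_nonneg (hpos k).le (norm_nonneg (f k)))
    (by simpa using ha) (by simpa using hb)
  simp only [hprod, Real.rpow_two, mul_pow, div_pow, hsq, ← Real.sqrt_eq_rpow] at hholder
  rw [Real.sqrt_mul (integral_nonneg fun k => div_nonneg (sq_nonneg _) (hθ₀ k).le)]
  exact ⟨(ha.integrable_mul hb).congr (ae_of_all _ hprod), hholder⟩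

/-- Fourier-side membership in `Hˢ`. -/
structure IsSobolev (s : ℝ) (f : ℝ → ℂ) : Prop where
  measurable : Measurable f
  integrable : Integrable fun k => sobolevWeight s k * ‖f k‖ ^ 2

namespace IsSobolev

variable {s : ℝ} {f g : ℝ → ℂ}

lemma integrable_weight (hf : IsSobolev s f) {V : ℝ → ℝ} (hV : Measurable V) (hV₀ : ∀ k, 0 ≤ V k)
    (hle : ∀ k, V k ≤ sobolevWeight s k) : Integrable fun k => V k * ‖f k‖ ^ 2 := by
  have := hf.measurable
  refine hf.integrable.mono' (Measurable.aestronglyMeasurable (by fun_prop))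
    (ae_of_all _ fun k => ?_)
  have := hV₀ k
  rw [Real.norm_of_nonneg (by positivity)]
  gcongr
  exact hle k

lemma integral_weight_le (hf : IsSobolev s f) {V : ℝ → ℝ} (hV : Measurable V)
    (hV₀ : ∀ k, 0 ≤ V k) (hle : ∀ k, V k ≤ sobolevWeight s k) :
    ∫ k, V k * ‖f k‖ ^ 2 ≤ ∫ k, sobolevWeight s k * ‖f k‖ ^ 2 :=
  integral_mono (hf.integrable_weight hV hV₀ hle) hf.integrable fun k => by
    have := hle k
    dsimp only
    gcongr

lemma integrable_normSq (hf : IsSobolev s f) : Integrable fun k => ‖f k‖ ^ 2 := by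
  simpa using hf.integrable_weight measurable_const (fun _ => zero_le_one) (one_le_sobolevWeight s)

lemma memLp_two (hf : IsSobolev s f) : MemLp f 2 :=
  (memLp_two_iff_integrable_sq_norm hf.measurable.aestronglyMeasurable).2 hf.integrable_normSq

lemma integral_normSq_le (hf : IsSobolev s f) :
    ∫ k, ‖f k‖ ^ 2 ≤ ∫ k, sobolevWeight s k * ‖f k‖ ^ 2 := by
  simpa using hf.integral_weight_le measurable_const (fun _ => zero_le_one) (one_le_sobolevWeight s)

lemma integrable_and_integral_rpow_mul_norm_le (hf : IsSobolev s f) {j : ℝ} (hj : 0 ≤ j)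
    (hjs : 2 * j + 1 < 2 * s) : Integrable (fun k => |k| ^ j * ‖f k‖) ∧
      ∫ k, |k| ^ j * ‖f k‖ ≤
        √(sobolevMoment s (2 * j) * ∫ k, sobolevWeight s k * ‖f k‖ ^ 2) := by
  have hsq : ∀ k : ℝ, (|k| ^ j) ^ 2 = |k| ^ (2 * j) := fun k => by
    rw [← Real.rpow_mul_natCast (abs_nonneg k), Nat.cast_ofNat, mul_comm]
  have hmoment := integrable_rpow_div_sobolevWeight (s := s) (j := 2 * j) (by linarith) hjs
  simpa only [hsq, sobolevMoment] using integrable_and_integral_mul_norm_le (m := fun k => |k| ^ j)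
    (fun k => by positivity) (sobolevWeight_pos s) (by fun_prop) (by fun_prop) hf.measurable
    (by simpa only [hsq] using hmoment) hf.integrable

/-- The frequency scale `lam` balances the `L²` norm against the `Hˢ` norm. -/
lemma integral_rpow_three_halves_mul_norm_le (hf : IsSobolev s f) (hs : 2 < s) {lam P : ℝ}
    (hlam : 0 < lam)
    (hP : lam ^ (2 * s) * (∫ k, ‖f k‖ ^ 2) + (∫ k, sobolevWeight s k * ‖f k‖ ^ 2) ≤ P) :
    ∫ k, |k| ^ (3 / 2 : ℝ) * ‖f k‖ ≤ √(lam ^ (4 - 2 * s) * sobolevMoment s 3 * P) := by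
  have hsq : ∀ k : ℝ, (|k| ^ (3 / 2 : ℝ)) ^ 2 = |k| ^ (3 : ℝ) := fun k => by
    rw [← Real.rpow_mul_natCast (abs_nonneg k)]; norm_num
  have hmoment := hasBochnerIntegral_rpow_three_div hs hlam
  have hlow := hf.integrable_normSq.const_mul (lam ^ (2 * s))
  have hhigh := hf.integrable_weight (V := fun k => |k| ^ (2 * s)) (by fun_prop)
    (fun k => by positivity) (abs_rpow_le_sobolevWeight s)
  have hhigh_le := hf.integral_weight_le (V := fun k => |k| ^ (2 * s)) (by fun_prop)
    (fun k => by positivity) (abs_rpow_le_sobolevWeight s)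
  have hsum : Integrable fun k => (lam ^ (2 * s) + |k| ^ (2 * s)) * ‖f k‖ ^ 2 := by
    simpa only [add_mul] using hlow.fun_add hhigh
  have hcs := (integrable_and_integral_mul_norm_le (m := fun k => |k| ^ (3 / 2 : ℝ))
    (θ := fun k => lam ^ (2 * s) + |k| ^ (2 * s)) (f := f) (fun k => by positivity)
    (fun k => by positivity) (by fun_prop) (by fun_prop) hf.measurable
    (by simpa only [hsq] using hmoment.1) hsum).2
  simp only [hsq, add_mul] at hcs
  rw [hmoment.2, integral_add hlow hhigh, integral_const_mul] at hcs
  refine hcs.trans (Real.sqrt_le_sqrt (mul_le_mul_of_nonneg_left (by linarith) ?_))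
  exact mul_nonneg (by positivity)
    (integral_nonneg fun k => div_nonneg (by positivity) (sobolevWeight_pos s k).le)

lemma neg (hf : IsSobolev s f) : IsSobolev s fun k => -f k where
  measurable := hf.measurable.neg
  integrable := by simpa using hf.integrable

lemma add (hf : IsSobolev s f) (hg : IsSobolev s g) : IsSobolev s fun k => f k + g k where
  measurable := hf.measurable.add hg.measurable
  integrable := by
    have := hf.measurable
    have := hg.measurable
    refine ((hf.integrable.const_mul 2).add (hg.integrable.const_mul 2)).mono'
      (Measurable.aestronglyMeasurable (by fun_prop)) (ae_of_all _ fun k => ?_)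
    have hV := sobolevWeight_pos s k
    have hsq : ‖f k + g k‖ ^ 2 ≤ 2 * (‖f k‖ ^ 2 + ‖g k‖ ^ 2) :=
      (by gcongr; exact norm_add_le _ _ : ‖f k + g k‖ ^ 2 ≤ (‖f k‖ + ‖g k‖) ^ 2).trans add_sq_le
    rw [Real.norm_of_nonneg (by positivity)]
    simp only [Pi.add_apply]
    linarith [mul_le_mul_of_nonneg_left hsq hV.le]

lemma sub (hf : IsSobolev s f) (hg : IsSobolev s g) : IsSobolev s fun k => f k - g k := by
  simpa only [sub_eq_add_neg] using hf.add hg.neg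

end IsSobolev

lemma integrable_of_bounded_of_support {C n : ℝ} {F : ℝ → ℝ} (hF : Measurable F)
    (hC : ∀ k, |F k| ≤ C) (hn : ∀ k, n < |k| → F k = 0) : Integrable F := by
  rw [← integrableOn_iff_integrable_of_support_subset (s := Icc (-n) n) fun k hk =>
    abs_le.1 (not_lt.1 (mt (hn k) hk))]
  exact Measure.integrableOn_of_bounded (M := C) measure_Icc_lt_top.ne hF.aestronglyMeasurable
    (ae_of_all _ hC)

lemma isSobolev_of_bounded_of_support {s R n : ℝ} (hs : 0 ≤ s) {f : ℝ → ℂ} (hf : Measurable f)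
    (hR : ∀ k, ‖f k‖ ≤ R) (hn : ∀ k, n < |k| → f k = 0) : IsSobolev s f where
  measurable := hf
  integrable := by
    refine integrable_of_bounded_of_support (C := sobolevWeight s n * R ^ 2) (n := n)
      (by fun_prop) (fun k => ?_) fun k hk => by simp [hn k hk]
    have hV := sobolevWeight_pos s k
    have hVn := sobolevWeight_pos s n
    rw [abs_of_nonneg (by positivity)]
    rcases lt_or_ge n |k| with hk | hk
    · rw [hn k hk]
      simp only [norm_zero, ne_eq, OfNat.ofNat_ne_zero, not_false_eq_true, zero_pow, mul_zero]
      positivity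
    · gcongr
      · exact sobolevWeight_le_sobolevWeight hs (hk.trans (le_abs_self n))
      · exact hR k
/-- The Fourier transform of the bilinear form `a(ψ, φ)`, where `u` and `v` are the Fourier
transforms of `ψ` and `φ`. -/
noncomputable def waveBilinear (u v : ℝ → ℂ) (k : ℝ) : ℂ :=
  ∫ l : ℝ, ((Sker (k - l) l : ℝ) : ℂ) * u (k - l) * v l

/-- The Fourier transform of `-∂_θ a(ψ, φ)`; the equation is `∂_τ f = waveForcing f f`. -/
noncomputable def waveForcing (u v : ℝ → ℂ) (k : ℝ) : ℂ := -Complex.I * k * waveBilinear u v k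

lemma norm_waveForcing (u v : ℝ → ℂ) (k : ℝ) :
    ‖waveForcing u v k‖ = |k| * ‖waveBilinear u v k‖ := by
  rw [waveForcing, norm_mul, norm_mul, norm_neg, Complex.norm_I, one_mul, Complex.norm_real,
    Real.norm_eq_abs]

lemma norm_waveBilinear_integrand_le (u v : ℝ → ℂ) (k l : ℝ) :
    ‖((Sker (k - l) l : ℝ) : ℂ) * u (k - l) * v l‖ ≤ √|k| * (‖u (k - l)‖ * ‖v l‖) := by
  have h := Sker_le_sqrt_abs_add (k - l) l
  rw [sub_add_cancel] at h
  rw [norm_mul, norm_mul, Complex.norm_real, Real.norm_of_nonneg (Sker_nonneg _ _), mul_assoc]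
  gcongr

lemma integrable_mul_norm_comp_sub {u v : ℝ → ℂ} (hu : MemLp u 2) (hv : MemLp v 2) (k : ℝ) :
    Integrable fun l => ‖u (k - l)‖ * ‖v l‖ :=
  (hu.comp_measurePreserving (Measure.measurePreserving_sub_left volume k)).norm.integrable_mul
    hv.norm

lemma integrable_waveBilinear {u v : ℝ → ℂ} (hu : MemLp u 2) (hv : MemLp v 2) (k : ℝ) :
    Integrable fun l : ℝ => ((Sker (k - l) l : ℝ) : ℂ) * u (k - l) * v l := by
  have hu' := (hu.comp_measurePreserving (Measure.measurePreserving_sub_left volume k)).1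
  have hS : Measurable fun l : ℝ => ((Sker (k - l) l : ℝ) : ℂ) := by fun_prop
  exact ((integrable_mul_norm_comp_sub hu hv k).const_mul √|k|).mono'
    ((hS.aestronglyMeasurable.mul hu').mul hv.1)
    (ae_of_all _ (norm_waveBilinear_integrand_le u v k))

lemma norm_waveBilinear_le {u v : ℝ → ℂ} (hu : MemLp u 2) (hv : MemLp v 2) (k : ℝ) :
    ‖waveBilinear u v k‖ ≤ √|k| * (√(∫ l, ‖u l‖ ^ 2) * √(∫ l, ‖v l‖ ^ 2)) := by
  have hu' := hu.comp_measurePreserving (Measure.measurePreserving_sub_left volume k)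
  have hholder := integral_mul_le_Lp_mul_Lq_of_nonneg (μ := volume) Real.HolderConjugate.two_two
    (ae_of_all _ fun l => norm_nonneg (u (k - l))) (ae_of_all _ fun l => norm_nonneg (v l))
    (by simpa using hu'.norm) (by simpa using hv.norm)
  simp only [Real.rpow_two, ← Real.sqrt_eq_rpow] at hholder
  rw [integral_sub_left_eq_self (fun l => ‖u l‖ ^ 2) volume k] at hholder
  calc ‖waveBilinear u v k‖ ≤ ∫ l, √|k| * (‖u (k - l)‖ * ‖v l‖) :=
        norm_integral_le_of_norm_le ((integrable_mul_norm_comp_sub hu hv k).const_mul _)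
          (ae_of_all _ (norm_waveBilinear_integrand_le u v k))
    _ ≤ √|k| * (√(∫ l, ‖u l‖ ^ 2) * √(∫ l, ‖v l‖ ^ 2)) := by
        rw [integral_const_mul]; gcongr

lemma norm_waveBilinear_self_le {u : ℝ → ℂ} (hu : MemLp u 2) (k : ℝ) :
    ‖waveBilinear u u k‖ ≤ √|k| * ∫ l, ‖u l‖ ^ 2 := by
  simpa only [Real.mul_self_sqrt (integral_nonneg fun l => sq_nonneg ‖u l‖)] using
    norm_waveBilinear_le hu hu k

lemma norm_waveForcing_self_le {u : ℝ → ℂ} (hu : MemLp u 2) (k : ℝ) :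
    ‖waveForcing u u k‖ ≤ |k| * √|k| * ∫ l, ‖u l‖ ^ 2 := by
  rw [norm_waveForcing, mul_assoc]
  gcongr
  exact norm_waveBilinear_self_le hu k

lemma waveBilinear_comm (u v : ℝ → ℂ) (k : ℝ) : waveBilinear u v k = waveBilinear v u k := by
  rw [waveBilinear, ← integral_sub_left_eq_self _ volume k]
  refine integral_congr_ae (ae_of_all _ fun l => ?_)
  simp only [sub_sub_cancel, Sker_comm l]
  ring

lemma waveBilinear_add_right {u v w : ℝ → ℂ} (hu : MemLp u 2) (hv : MemLp v 2) (hw : MemLp w 2)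
    (k : ℝ) : waveBilinear u (v + w) k = waveBilinear u v k + waveBilinear u w k := by
  simp only [waveBilinear]
  rw [← integral_add (integrable_waveBilinear hu hv k) (integrable_waveBilinear hu hw k)]
  simp only [Pi.add_apply, mul_add]

lemma waveBilinear_sub_right {u v w : ℝ → ℂ} (hu : MemLp u 2) (hv : MemLp v 2) (hw : MemLp w 2)
    (k : ℝ) : waveBilinear u (v - w) k = waveBilinear u v k - waveBilinear u w k := by
  simp only [waveBilinear]
  rw [← integral_sub (integrable_waveBilinear hu hv k) (integrable_waveBilinear hu hw k)]
  simp only [Pi.sub_apply, mul_sub]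

lemma waveBilinear_add_sub {f g : ℝ → ℂ} (hf : MemLp f 2) (hg : MemLp g 2) (k : ℝ) :
    waveBilinear (g + f) (g - f) k = waveBilinear g g k - waveBilinear f f k := by
  rw [waveBilinear_sub_right (hg.add hf) hg hf, waveBilinear_comm _ g, waveBilinear_comm _ f,
    waveBilinear_add_right hg hg hf, waveBilinear_add_right hf hg hf, waveBilinear_comm f g]
  ring

lemma waveForcing_add_sub {f g : ℝ → ℂ} (hf : MemLp f 2) (hg : MemLp g 2) (k : ℝ) :
    waveForcing (g + f) (g - f) k = waveForcing g g k - waveForcing f f k := by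
  simp only [waveForcing, waveBilinear_add_sub hf hg, mul_sub]

lemma norm_waveBilinear_sub_le {f g : ℝ → ℂ} (hf : MemLp f 2) (hg : MemLp g 2) (k : ℝ) :
    ‖waveBilinear g g k - waveBilinear f f k‖ ≤
      √|k| * (√(∫ l, ‖g l + f l‖ ^ 2) * √(∫ l, ‖g l - f l‖ ^ 2)) := by
  rw [← waveBilinear_add_sub hf hg]
  exact norm_waveBilinear_le (hg.add hf) (hg.sub hf) k

lemma measurable_waveForcing_uncurry {u v : ℝ → ℝ → ℂ} (hu : Measurable (Function.uncurry u))
    (hv : Measurable (Function.uncurry v)) :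
    Measurable (Function.uncurry fun τ k => waveForcing (u τ) (v τ) k) := by
  have : Measurable fun z : (ℝ × ℝ) × ℝ => u z.1.1 (z.1.2 - z.2) :=
    hu.comp (by fun_prop : Measurable fun z : (ℝ × ℝ) × ℝ => (z.1.1, z.1.2 - z.2))
  have : Measurable fun z : (ℝ × ℝ) × ℝ => v z.1.1 z.2 :=
    hv.comp (by fun_prop : Measurable fun z : (ℝ × ℝ) × ℝ => (z.1.1, z.2))
  have hint : Measurable fun z : (ℝ × ℝ) × ℝ =>
      ((Sker (z.1.2 - z.2) z.2 : ℝ) : ℂ) * u z.1.1 (z.1.2 - z.2) * v z.1.1 z.2 := by fun_prop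
  have hB : Measurable (Function.uncurry fun τ k => waveBilinear (u τ) (v τ) k) :=
    (hint.stronglyMeasurable.integral_prod_right (ν := volume)).measurable
  exact Measurable.mul (by fun_prop) hB

lemma measurable_waveForcing {u v : ℝ → ℂ} (hu : Measurable u) (hv : Measurable v) :
    Measurable (waveForcing u v) :=
  (measurable_waveForcing_uncurry (u := fun _ => u) (v := fun _ => v) (hu.comp measurable_snd)
    (hv.comp measurable_snd)).comp (measurable_prodMk_left (x := (0 : ℝ)))

lemma waveForcing_neg_eq_conj {f : ℝ → ℂ} (hf : ∀ k, f (-k) = conj (f k)) (k : ℝ) :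
    waveForcing f f (-k) = conj (waveForcing f f k) := by
  have hB : waveBilinear f f (-k) = conj (waveBilinear f f k) := by
    rw [waveBilinear, waveBilinear, ← integral_conj, ← integral_neg_eq_self]
    refine integral_congr_ae (ae_of_all _ fun l => ?_)
    simp only [show -k - -l = -(k - l) by ring, Sker_neg, hf, map_mul, Complex.conj_ofReal]
  simp only [waveForcing, hB, map_mul, map_neg, Complex.conj_I, Complex.conj_ofReal,
    Complex.ofReal_neg]
  ring

lemma waveForcing_smul_smul (c : ℝ) (u v : ℝ → ℂ) (k : ℝ) :
    waveForcing (c • u) (c • v) k = c ^ 2 • waveForcing u v k := by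
  have hB : waveBilinear (c • u) (c • v) k = c ^ 2 • waveBilinear u v k := by
    rw [waveBilinear, waveBilinear, ← integral_smul]
    refine integral_congr_ae (ae_of_all _ fun l => ?_)
    simp only [Pi.smul_apply, Complex.real_smul]
    push_cast
    ring
  simp only [waveForcing, hB, Complex.real_smul]
  ring

@[fun_prop]
lemma measurable_tripleDensity {V : ℝ → ℝ} {u v w : ℝ → ℂ} (hV : Measurable V)
    (hu : Measurable u) (hv : Measurable v) (hw : Measurable w) :
    Measurable (tripleDensity V u v w) := by
  have hconj : Measurable fun z : ℝ × ℝ => conj (w z.1) :=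
    Complex.continuous_conj.measurable.comp (hw.comp measurable_fst)
  unfold tripleDensity
  fun_prop

/-- The output frequency in the multiplier is distributed over the inputs by `|k| ≤ |k - l| + |l|`,
and the kernel costs `√|k - l|`. -/
lemma norm_tripleDensity_one_le (u v w : ℝ → ℂ) (z : ℝ × ℝ) :
    ‖tripleDensity (fun _ => 1) u v w z‖ ≤
      |z.1 - z.2| ^ (3 / 2 : ℝ) * ‖u (z.1 - z.2)‖ * (‖v z.2‖ ^ 2 / 2 + ‖w z.1‖ ^ 2 / 2) +
      |z.1 - z.2| ^ (1 / 2 : ℝ) * ‖u (z.1 - z.2)‖ *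
        (|z.2| ^ 2 * ‖v z.2‖ ^ 2 / 2 + ‖w z.1‖ ^ 2 / 2) := by
  have hS := Sker_nonneg (z.1 - z.2) z.2
  have htri : |z.1| ≤ |z.1 - z.2| + |z.2| := by simpa using abs_add_le (z.1 - z.2) z.2
  rw [tripleDensity, norm_ofReal_mul_Sker, mul_one, norm_mul, norm_mul, RCLike.norm_conj,
    rpow_three_halves (abs_nonneg _), ← Real.sqrt_eq_rpow]
  calc |z.1| * Sker (z.1 - z.2) z.2 * (‖u (z.1 - z.2)‖ * ‖v z.2‖ * ‖w z.1‖)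
      ≤ (|z.1 - z.2| + |z.2|) * √|z.1 - z.2| * (‖u (z.1 - z.2)‖ * ‖v z.2‖ * ‖w z.1‖) := by
        gcongr
        exact Sker_le_sqrt_abs_left _ _
    _ = |z.1 - z.2| * √|z.1 - z.2| * ‖u (z.1 - z.2)‖ * (‖v z.2‖ * ‖w z.1‖) +
          √|z.1 - z.2| * ‖u (z.1 - z.2)‖ * (|z.2| * ‖v z.2‖ * ‖w z.1‖) := by ring
    _ ≤ _ := by
        gcongr
        · linarith [two_mul_le_add_sq ‖v z.2‖ ‖w z.1‖]
        · rw [← mul_pow]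
          linarith [two_mul_le_add_sq (|z.2| * ‖v z.2‖) ‖w z.1‖]

lemma integrable_tripleDensity_one_and_integral_norm_le {u v w : ℝ → ℂ} (hu : Measurable u)
    (hv : Measurable v) (hw : Measurable w) (hu₃ : Integrable fun k => |k| ^ (3 / 2 : ℝ) * ‖u k‖)
    (hu₁ : Integrable fun k => |k| ^ (1 / 2 : ℝ) * ‖u k‖) (hv₀ : Integrable fun k => ‖v k‖ ^ 2)
    (hv₂ : Integrable fun k => |k| ^ 2 * ‖v k‖ ^ 2) (hw₀ : Integrable fun k => ‖w k‖ ^ 2) :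
    Integrable (tripleDensity (fun _ => 1) u v w) ∧
      ∫ z, ‖tripleDensity (fun _ => 1) u v w z‖ ≤
        (∫ k, |k| ^ (3 / 2 : ℝ) * ‖u k‖) * ((∫ k, ‖v k‖ ^ 2) / 2 + (∫ k, ‖w k‖ ^ 2) / 2) +
        (∫ k, |k| ^ (1 / 2 : ℝ) * ‖u k‖) *
          ((∫ k, |k| ^ 2 * ‖v k‖ ^ 2) / 2 + (∫ k, ‖w k‖ ^ 2) / 2) := by
  have half : ∀ {F : ℝ → ℝ}, Integrable F →
      HasBochnerIntegral (fun k => F k / 2) ((∫ k, F k) / 2) :=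
    fun hF => ⟨hF.div_const 2, integral_div 2 _⟩
  have hbound := (hasBochnerIntegral_pairs (.of_integrable hu₃) (half hv₀) (half hw₀)).add
    (hasBochnerIntegral_pairs (.of_integrable hu₁) (half hv₂) (half hw₀))
  have hint := hbound.1.mono'
    (measurable_tripleDensity measurable_const hu hv hw).aestronglyMeasurable
    (ae_of_all _ (norm_tripleDensity_one_le u v w))
  refine ⟨hint, ?_⟩
  rw [← hbound.2]
  exact integral_mono hint.norm hbound.1 (norm_tripleDensity_one_le u v w)

lemma tripleDensity_weight (V : ℝ → ℝ) (u v w : ℝ → ℂ) :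
    tripleDensity (fun _ => 1) u v (fun k => (V k : ℂ) * w k) = tripleDensity V u v w := by
  ext z
  simp only [tripleDensity, map_mul, Complex.conj_ofReal]
  push_cast
  ring

lemma integral_tripleDensity_fiber (V : ℝ → ℝ) (u v w : ℝ → ℂ) (k : ℝ) :
    ∫ l, tripleDensity V u v w (k, l) = Complex.I * V k * (conj (w k) * waveForcing u v k) := by
  have hfactor : ∀ l : ℝ, tripleDensity V u v w (k, l) =
      k * V k * conj (w k) * (((Sker (k - l) l : ℝ) : ℂ) * u (k - l) * v l) := fun l => by
    simp only [tripleDensity]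
    push_cast
    ring
  simp only [hfactor, integral_const_mul, waveForcing]
  rw [← waveBilinear]
  linear_combination (k * V k * conj (w k) * waveBilinear u v k) * Complex.I_mul_I

lemma integrable_power_and_integral_power_le {V : ℝ → ℝ} {u v w : ℝ → ℂ} (hV₀ : ∀ k, 0 ≤ V k)
    (hint : Integrable (tripleDensity V u v w)) :
    Integrable (fun k => V k * (‖w k‖ * ‖waveForcing u v k‖)) ∧
      ∫ k, V k * (‖w k‖ * ‖waveForcing u v k‖) ≤ ∫ z, ‖tripleDensity V u v w z‖ := by
  have hfiber : ∀ k, V k * (‖w k‖ * ‖waveForcing u v k‖) =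
      ‖∫ l, tripleDensity V u v w (k, l)‖ := fun k => by
    rw [integral_tripleDensity_fiber, norm_mul, norm_mul, norm_mul, Complex.norm_I, one_mul,
      Complex.norm_real, Real.norm_of_nonneg (hV₀ k), RCLike.norm_conj]
  simp only [hfiber]
  refine ⟨hint.integral_prod_left.norm, ?_⟩
  rw [Measure.volume_eq_prod, integral_prod _ hint.norm]
  exact integral_mono hint.integral_prod_left.norm hint.norm.integral_prod_left
    fun k => norm_integral_le_integral_norm _

lemma integral_power_eq {V : ℝ → ℝ} {u v w : ℝ → ℂ} (hint : Integrable (tripleDensity V u v w)) :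
    ∫ k, V k * (2 * (conj (w k) * waveForcing u v k).re) =
      2 * (∫ z, tripleDensity V u v w z).im := by
  have him := integral_im hint.integral_prod_left
  rw [Measure.volume_eq_prod, integral_prod _ hint]
  simp only [integral_tripleDensity_fiber, RCLike.im_eq_complex_im] at him ⊢
  rw [← him, ← integral_const_mul]
  refine integral_congr_ae (ae_of_all _ fun k => ?_)
  simp only [mul_assoc, Complex.I_mul_im, Complex.re_ofReal_mul]
  ring
/-- A bound for the trilinear form in terms of Sobolev energies at most `P`. -/
noncomputable def powerBound (s P : ℝ) : ℝ :=
  √(sobolevMoment s 3 * P) * P + √(sobolevMoment s 1 * P) * P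

lemma sobolevMoment_nonneg (s j : ℝ) : 0 ≤ sobolevMoment s j :=
  integral_nonneg fun k => div_nonneg (by positivity) (sobolevWeight_pos s k).le

lemma powerBound_nonneg (s : ℝ) {P : ℝ} (hP : 0 ≤ P) : 0 ≤ powerBound s P := by
  unfold powerBound; positivity

lemma abs_sq_le_sobolevWeight {s : ℝ} (hs : 1 ≤ s) (k : ℝ) : |k| ^ 2 ≤ sobolevWeight s k := by
  rcases le_total |k| 1 with hk | hk
  · exact (pow_le_one₀ (abs_nonneg k) hk).trans (one_le_sobolevWeight s k)
  · rw [← Real.rpow_natCast]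
    exact (Real.rpow_le_rpow_of_exponent_le hk (by push_cast; linarith)).trans
      (abs_rpow_le_sobolevWeight s k)

lemma IsSobolev.integrable_tripleDensity_and_integral_norm_le {s P : ℝ} (hs : 2 < s)
    {u v w : ℝ → ℂ} {V : ℝ → ℝ} (hu : IsSobolev s u) (hv : IsSobolev s v) (hw : Measurable w)
    (hV : Measurable V) (huP : ∫ k, sobolevWeight s k * ‖u k‖ ^ 2 ≤ P)
    (hvP : ∫ k, sobolevWeight s k * ‖v k‖ ^ 2 ≤ P) (hVw : Integrable fun k => V k ^ 2 * ‖w k‖ ^ 2)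
    (hVwP : ∫ k, V k ^ 2 * ‖w k‖ ^ 2 ≤ P) :
    Integrable (tripleDensity V u v w) ∧ ∫ z, ‖tripleDensity V u v w z‖ ≤ powerBound s P := by
  have : 0 ≤ P := (integral_nonneg fun k => by positivity).trans hVwP
  have hmoment := fun j => sobolevMoment_nonneg s j
  have hsq : ∀ k, ‖(V k : ℂ) * w k‖ ^ 2 = V k ^ 2 * ‖w k‖ ^ 2 := fun k => by
    rw [norm_mul, mul_pow, Complex.norm_real, Real.norm_eq_abs, sq_abs]
  have h₃ := hu.integrable_and_integral_rpow_mul_norm_le (j := 3 / 2) (by norm_num) (by linarith)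
  have h₁ := hu.integrable_and_integral_rpow_mul_norm_le (j := 1 / 2) (by norm_num) (by linarith)
  norm_num only [] at h₃ h₁
  have hsq₂ := abs_sq_le_sobolevWeight (s := s) (by linarith)
  have hv₂ := hv.integrable_weight (V := fun k => |k| ^ 2) (by fun_prop)
    (fun k => by positivity) hsq₂
  have hv₂P := hv.integral_weight_le (V := fun k => |k| ^ 2) (by fun_prop)
    (fun k => by positivity) hsq₂
  obtain ⟨hint, hle⟩ := integrable_tripleDensity_one_and_integral_norm_le (w := fun k => V k * w k)
    hu.measurable hv.measurable (by fun_prop) h₃.1 h₁.1 hv.integrable_normSq hv₂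
    (by simpa only [hsq] using hVw)
  rw [tripleDensity_weight] at hint hle
  simp only [hsq] at hle
  refine ⟨hint, hle.trans ?_⟩
  unfold powerBound
  have hv₀ := hv.integral_normSq_le
  have : ∫ k, |k| ^ (3 / 2 : ℝ) * ‖u k‖ ≤ √(sobolevMoment s 3 * P) := h₃.2.trans (by
    gcongr; exact hmoment 3)
  have : ∫ k, |k| ^ (1 / 2 : ℝ) * ‖u k‖ ≤ √(sobolevMoment s 1 * P) := h₁.2.trans (by
    gcongr; exact hmoment 1)
  gcongr <;> linarith

section Ode

variable {E : Type*} [NormedAddCommGroup E]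

lemma exists_continuous_hasDerivAt_of_lipschitz [NormedSpace ℝ E] [CompleteSpace E] {F : E → E}
    {K L : NNReal} (hF : LipschitzWith K F) (hL : ∀ x, ‖F x‖ ≤ L) (x₀ : E) {T : ℝ} (hT : 0 ≤ T) :
    ∃ α : ℝ → E, α 0 = x₀ ∧ Continuous α ∧ ∀ t ∈ Ioo (-T) T, HasDerivAt α (F (α t)) t := by
  have h₀ : (0 : ℝ) ∈ Icc (-T) T := ⟨by linarith, hT⟩
  have hpl : IsPicardLindelof (fun _ : ℝ => F) (tmin := -T) (tmax := T) ⟨0, h₀⟩ x₀ (L * ⟨T, hT⟩)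
      0 L K := by
    refine ⟨fun _ _ => hF.lipschitzOnWith, fun _ _ => continuousOn_const, fun _ _ x _ => hL x, ?_⟩
    simp only [sub_zero, zero_sub, neg_neg, max_self, NNReal.coe_zero]
    exact le_rfl
  obtain ⟨α, hα₀, hα⟩ := hpl.exists_eq_forall_mem_Icc_hasDerivWithinAt₀
  have hle : -T ≤ T := by linarith
  have hext : ∀ t ∈ Icc (-T) T, IccExtend hle ((Icc (-T) T).domRestrict α) t = α t := fun t ht =>
    IccExtend_of_mem hle _ ht
  refine ⟨IccExtend hle ((Icc (-T) T).domRestrict α), (hext 0 h₀).trans hα₀,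
    (ContinuousOn.domRestrict fun t ht => (hα t ht).continuousWithinAt).Icc_extend', fun t ht => ?_⟩
  rw [hext t (Ioo_subset_Icc_self ht)]
  refine ((hα t (Ioo_subset_Icc_self ht)).hasDerivAt (Icc_mem_nhds ht.1 ht.2)).congr_of_eventuallyEq
    ?_
  filter_upwards [Icc_mem_nhds ht.1 ht.2] with σ hσ using hext σ hσ

/-- The factor by which the radial retraction onto the ball of radius `R` rescales `x`. -/
noncomputable def retractionFactor (R : ℝ) (x : E) : ℝ := (max 1 (‖x‖ / R))⁻¹

lemma retractionFactor_nonneg (R : ℝ) (x : E) : 0 ≤ retractionFactor R x := by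
  unfold retractionFactor; positivity

lemma retractionFactor_le_one (R : ℝ) (x : E) : retractionFactor R x ≤ 1 :=
  inv_le_one_of_one_le₀ (le_max_left _ _)

lemma retractionFactor_eq_one {R : ℝ} {x : E} (hx : ‖x‖ ≤ R) : retractionFactor R x = 1 := by
  rw [retractionFactor, max_eq_left (div_le_one_of_le₀ hx ((norm_nonneg x).trans hx)), inv_one]

lemma retractionFactor_mul_norm_le {R : ℝ} (hR : 0 < R) (x : E) :
    retractionFactor R x * ‖x‖ ≤ R := by
  rw [retractionFactor, inv_mul_le_iff₀ (by positivity), ← div_le_iff₀ hR]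
  exact le_max_right _ _

lemma continuous_retractionFactor (R : ℝ) : Continuous (retractionFactor R : E → ℝ) := by
  unfold retractionFactor
  exact (by fun_prop : Continuous fun x : E => max 1 (‖x‖ / R)).inv₀ fun x => by positivity

lemma abs_retractionFactor_sub_mul_norm_le {R : ℝ} (hR : 0 < R) (x y : E) :
    |retractionFactor R x - retractionFactor R y| * ‖x‖ ≤ ‖x - y‖ := by
  set a := max 1 (‖x‖ / R) with ha
  set b := max 1 (‖y‖ / R) with hb
  have ha₁ : 1 ≤ a := le_max_left _ _
  have hb₁ : 1 ≤ b := le_max_left _ _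
  have hab : |b - a| ≤ ‖x - y‖ / R := by
    rw [ha, hb, max_comm 1, max_comm 1]
    refine (abs_max_sub_max_le_abs _ _ _).trans ?_
    rw [← sub_div, abs_div, abs_of_pos hR, norm_sub_rev]
    gcongr
    exact abs_norm_sub_norm_le y x
  have hsub : a⁻¹ - b⁻¹ = (b - a) * b⁻¹ * a⁻¹ := by field_simp
  have hax : a⁻¹ * ‖x‖ ≤ R := retractionFactor_mul_norm_le hR x
  calc |a⁻¹ - b⁻¹| * ‖x‖ = |b - a| * b⁻¹ * (a⁻¹ * ‖x‖) := by
        rw [hsub, abs_mul, abs_mul, abs_of_nonneg (by positivity : 0 ≤ b⁻¹),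
          abs_of_nonneg (by positivity : 0 ≤ a⁻¹)]
        ring
    _ ≤ ‖x - y‖ / R * 1 * R := by gcongr; exact inv_le_one_of_one_le₀ hb₁
    _ = ‖x - y‖ := by field_simp

lemma norm_retractionFactor_smul_sub_le [NormedSpace ℝ E] {R : ℝ} (hR : 0 < R) (x y : E) :
    ‖retractionFactor R x • x - retractionFactor R y • y‖ ≤ 2 * ‖x - y‖ := by
  have hsplit : retractionFactor R x • x - retractionFactor R y • y =
      (retractionFactor R x - retractionFactor R y) • x + retractionFactor R y • (x - y) := by
    module
  calc ‖retractionFactor R x • x - retractionFactor R y • y‖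
      ≤ |retractionFactor R x - retractionFactor R y| * ‖x‖ +
        retractionFactor R y * ‖x - y‖ := by
        rw [hsplit]
        refine (norm_add_le _ _).trans_eq ?_
        rw [norm_smul, norm_smul, Real.norm_eq_abs,
          Real.norm_of_nonneg (retractionFactor_nonneg R y)]
    _ ≤ ‖x - y‖ + 1 * ‖x - y‖ :=
        add_le_add (abs_retractionFactor_sub_mul_norm_le hR x y)
          (by gcongr; exact retractionFactor_le_one R y)
    _ = 2 * ‖x - y‖ := by ring

/-- A quadratic vector field becomes globally Lipschitz and bounded after precomposition with the
radial retraction onto a ball, so the modified equation has a solution for all time. -/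
lemma exists_hasDerivAt_retraction [NormedSpace ℝ E] [CompleteSpace E] {F : E → E}
    {c R T : ℝ} (hc : 0 ≤ c) (hR : 0 < R) (hT : 0 ≤ T) (hF₀ : F 0 = 0)
    (hF : ∀ x y, ‖F x - F y‖ ≤ c * (‖x + y‖ * ‖x - y‖)) (x₀ : E) :
    ∃ α : ℝ → E, α 0 = x₀ ∧ Continuous α ∧
      ∀ t ∈ Ioo (-T) T, HasDerivAt α (F (retractionFactor R (α t) • α t)) t := by
  have hball : ∀ x : E, ‖retractionFactor R x • x‖ ≤ R := fun x => by
    rw [norm_smul, Real.norm_of_nonneg (retractionFactor_nonneg R x)]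
    exact retractionFactor_mul_norm_le hR x
  have hlip : LipschitzWith ⟨c * (2 * R * 2), by positivity⟩
      fun x => F (retractionFactor R x • x) := .of_dist_le_mul fun x y => by
    have hsum := (norm_add_le _ _).trans (add_le_add (hball x) (hball y))
    rw [dist_eq_norm, dist_eq_norm]
    calc _ ≤ c * ((R + R) * (2 * ‖x - y‖)) := (hF _ _).trans (by
          gcongr; exact norm_retractionFactor_smul_sub_le hR x y)
      _ = c * (2 * R * 2) * ‖x - y‖ := by ring
  refine exists_continuous_hasDerivAt_of_lipschitz (L := ⟨c * (R * R), by positivity⟩) hlip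
    (fun x => ?_) x₀ hT
  have hzero := hF (retractionFactor R x • x) 0
  rw [hF₀, sub_zero, sub_zero, add_zero] at hzero
  refine hzero.trans ?_
  have := hball x
  change _ ≤ c * (R * R)
  gcongr

end Ode
lemma continuous_of_norm_sub_le {E : Type*} [NormedAddCommGroup E] {F : E → E} {c : ℝ}
    (hF : ∀ x y, ‖F x - F y‖ ≤ c * (‖x + y‖ * ‖x - y‖)) : Continuous F := by
  refine continuous_iff_continuousAt.2 fun y => tendsto_iff_norm_sub_tendsto_zero.2 ?_
  have hlim : Tendsto (fun x => c * (‖x + y‖ * ‖x - y‖)) (𝓝 y) (𝓝 (c * (‖y + y‖ * ‖y - y‖))) :=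
    Continuous.tendsto (by fun_prop) y
  rw [sub_self, norm_zero, mul_zero, mul_zero] at hlim
  exact squeeze_zero (fun x => norm_nonneg _) (fun x => hF x y) hlim

lemma integral_le_of_bounded_of_support {C n : ℝ} {F : ℝ → ℝ} (hn₀ : 0 ≤ n) (hF : Measurable F)
    (hC : ∀ k, |F k| ≤ C) (hn : ∀ k, n < |k| → F k = 0) : ∫ k, F k ≤ 2 * n * C := by
  have hsupp : ∀ k ∉ Icc (-n) n, F k = 0 := fun k hk => hn k (not_le.1 (mt abs_le.1 hk))
  rw [← setIntegral_eq_integral_of_forall_compl_eq_zero hsupp]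
  calc ∫ k in Icc (-n) n, F k ≤ ∫ _ in Icc (-n) n, C :=
        integral_mono (integrable_of_bounded_of_support hF hC hn).integrableOn
          (integrable_const C) fun k => (le_abs_self _).trans (hC k)
    _ = 2 * n * C := by
        simp only [integral_const, smul_eq_mul, measureReal_restrict_apply_univ,
          Real.volume_real_Icc, max_eq_left (by linarith : 0 ≤ n - -n)]
        ring

/-- The forcing `waveForcing u u` restricted to the frequencies `|k| ≤ n`. -/
noncomputable def truncatedForcing (n : ℝ) (u : ℝ → ℂ) (k : ℝ) : ℂ :=
  if |k| ≤ n then waveForcing u u k else 0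

lemma measurable_truncatedForcing_uncurry (n : ℝ) {u : ℝ → ℝ → ℂ}
    (hu : Measurable (Function.uncurry u)) :
    Measurable (Function.uncurry fun τ k => truncatedForcing n (u τ) k) :=
  Measurable.ite (measurableSet_le (by fun_prop) measurable_const)
    (measurable_waveForcing_uncurry hu hu) measurable_const

lemma truncatedForcing_neg_eq_conj (n : ℝ) {u : ℝ → ℂ} (hu : ∀ k, u (-k) = conj (u k)) (k : ℝ) :
    truncatedForcing n u (-k) = conj (truncatedForcing n u k) := by
  simp only [truncatedForcing, abs_neg, waveForcing_neg_eq_conj hu]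
  split_ifs <;> simp

lemma truncatedForcing_smul (n c : ℝ) (u : ℝ → ℂ) (k : ℝ) :
    truncatedForcing n (c • u) k = c ^ 2 • truncatedForcing n u k := by
  simp only [truncatedForcing, waveForcing_smul_smul, smul_ite, smul_zero]

lemma norm_truncatedForcing_le {n : ℝ} {u : ℝ → ℂ} (hu : MemLp u 2) (k : ℝ) :
    ‖truncatedForcing n u k‖ ≤ n * √n * ∫ l, ‖u l‖ ^ 2 := by
  unfold truncatedForcing
  split_ifs with hk
  · have := (abs_nonneg k).trans hk
    exact (norm_waveForcing_self_le hu k).trans (by gcongr)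
  · rw [norm_zero]
    rcases le_total 0 n with hn | hn
    · positivity
    · simp [Real.sqrt_eq_zero_of_nonpos hn]

lemma norm_truncatedForcing_sub_le {n : ℝ} {f g : ℝ → ℂ} (hf : MemLp f 2) (hg : MemLp g 2) (k : ℝ) :
    ‖truncatedForcing n g k - truncatedForcing n f k‖ ≤
      |n| * √n * (√(∫ l, ‖g l + f l‖ ^ 2) * √(∫ l, ‖g l - f l‖ ^ 2)) := by
  unfold truncatedForcing
  split_ifs with hk
  · rw [waveForcing, waveForcing, ← mul_sub, norm_mul, norm_mul, norm_neg, Complex.norm_I, one_mul,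
      Complex.norm_real, Real.norm_eq_abs, mul_assoc]
    have hn := hk.trans (le_abs_self n)
    calc |k| * ‖waveBilinear g g k - waveBilinear f f k‖
        ≤ |n| * (√|k| * (√(∫ l, ‖g l + f l‖ ^ 2) * √(∫ l, ‖g l - f l‖ ^ 2))) := by
          gcongr; exact norm_waveBilinear_sub_le hf hg k
      _ ≤ _ := by gcongr
  · rw [sub_zero, norm_zero]
    positivity

/-- The state space of the truncated equation: bounded measurable functions supported in `[-n, n]`
with `f(-k) = conj (f k)`. The uniform norm makes evaluation at a single frequency continuous. -/
def galerkinSpace (n : ℝ) : Submodule ℝ (lp (fun _ : ℝ => ℂ) ⊤) where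
  carrier := {x | Measurable (x : ℝ → ℂ) ∧ (∀ k, n < |k| → x k = 0) ∧ ∀ k, x (-k) = conj (x k)}
  add_mem' := by
    rintro x y ⟨hxm, hxs, hxc⟩ ⟨hym, hys, hyc⟩
    exact ⟨hxm.add hym, fun k hk => by simp [hxs k hk, hys k hk], fun k => by simp [hxc k, hyc k]⟩
  zero_mem' := ⟨measurable_const (a := (0 : ℂ)), by simp, by simp⟩
  smul_mem' := by
    rintro c x ⟨hxm, hxs, hxc⟩
    exact ⟨hxm.const_smul c, fun k hk => by simp [hxs k hk], fun k => by simp [hxc k]⟩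

lemma isClosed_galerkinSpace (n : ℝ) :
    IsClosed (galerkinSpace n : Set (lp (fun _ : ℝ => ℂ) ⊤)) := by
  refine IsSeqClosed.isClosed fun x y hx hxy => ?_
  have hlim : ∀ k, Tendsto (fun i => x i k) atTop (𝓝 (y k)) := fun k =>
    tendsto_iff_norm_sub_tendsto_zero.2 (squeeze_zero (fun _ => norm_nonneg _)
      (fun i => lp.norm_apply_le_norm ENNReal.top_ne_zero (x i - y) k)
      (tendsto_iff_norm_sub_tendsto_zero.1 hxy))
  refine ⟨measurable_of_tendsto_metrizable (fun i => (hx i).1) (tendsto_pi_nhds.2 hlim),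
    fun k hk => tendsto_nhds_unique (hlim k) ?_, fun k => tendsto_nhds_unique (hlim (-k)) ?_⟩
  · simp [(hx _).2.1 k hk]
  · exact ((Complex.continuous_conj.tendsto (y k)).comp (hlim k)).congr fun i =>
      ((hx i).2.2 k).symm

namespace galerkinSpace

variable {n : ℝ}

instance : CompleteSpace (galerkinSpace n) := (isClosed_galerkinSpace n).completeSpace_coe

lemma norm_apply_le (x : galerkinSpace n) (k : ℝ) : ‖x.1 k‖ ≤ ‖x‖ :=
  lp.norm_apply_le_norm ENNReal.top_ne_zero x.1 k

lemma norm_le {x : galerkinSpace n} {R : ℝ} (hR : 0 ≤ R) (hx : ∀ k, ‖x.1 k‖ ≤ R) : ‖x‖ ≤ R :=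
  lp.norm_le_of_forall_le (f := x.1) hR hx

/-- Evaluation at the frequency `k`. -/
noncomputable def eval (k : ℝ) : galerkinSpace n →L[ℝ] ℂ :=
  LinearMap.mkContinuous
    { toFun := fun x => x.1 k
      map_add' := fun _ _ => rfl
      map_smul' := fun _ _ => rfl } 1 fun x => (norm_apply_le x k).trans_eq (one_mul _).symm

lemma memLp_two (x : galerkinSpace n) : MemLp (x.1 : ℝ → ℂ) 2 := by
  refine (isSobolev_of_bounded_of_support (s := 0) le_rfl x.2.1 (norm_apply_le x) x.2.2.1).memLp_two

lemma sqrt_integral_normSq_le (hn : 0 ≤ n) (x : galerkinSpace n) :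
    √(∫ k, ‖x.1 k‖ ^ 2) ≤ √(2 * n) * ‖x‖ := by
  refine (Real.sqrt_le_sqrt ?_).trans_eq (by
    rw [Real.sqrt_mul (by positivity : 0 ≤ 2 * n) (‖x‖ ^ 2), Real.sqrt_sq (norm_nonneg x)])
  refine integral_le_of_bounded_of_support hn (x.2.1.norm.pow_const 2) (fun k => ?_) fun k hk => by
    simp [x.2.2.1 k hk]
  rw [abs_of_nonneg (by positivity)]
  gcongr
  exact norm_apply_le x k

/-- The truncated forcing as a vector field on the state space. -/
noncomputable def field (x : galerkinSpace n) : galerkinSpace n :=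
  ⟨⟨truncatedForcing n x.1, memℓp_infty ⟨n * √n * ∫ l, ‖x.1 l‖ ^ 2, by
      rintro _ ⟨k, rfl⟩; exact norm_truncatedForcing_le (memLp_two x) k⟩⟩,
    (measurable_truncatedForcing_uncurry n (u := fun _ => x.1) (x.2.1.comp measurable_snd)).comp
      (measurable_prodMk_left (x := (0 : ℝ))),
    fun _ hk => if_neg (not_le.2 hk), truncatedForcing_neg_eq_conj n x.2.2.2⟩

lemma field_zero : field (0 : galerkinSpace n) = 0 := by
  ext k
  change truncatedForcing n (0 : ℝ → ℂ) k = 0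
  simp [truncatedForcing, waveForcing, waveBilinear]

lemma norm_field_sub_le (hn : 0 ≤ n) (x y : galerkinSpace n) :
    ‖field x - field y‖ ≤ n * √n * (2 * n) * (‖x + y‖ * ‖x - y‖) := by
  refine norm_le (by positivity) fun k => ?_
  calc ‖truncatedForcing n x.1 k - truncatedForcing n y.1 k‖
      ≤ |n| * √n * (√(∫ l, ‖x.1 l + y.1 l‖ ^ 2) * √(∫ l, ‖x.1 l - y.1 l‖ ^ 2)) :=
        norm_truncatedForcing_sub_le (memLp_two y) (memLp_two x) k
    _ ≤ n * √n * (√(2 * n) * ‖x + y‖ * (√(2 * n) * ‖x - y‖)) := by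
        rw [abs_of_nonneg hn]
        gcongr
        exacts [sqrt_integral_normSq_le hn (x + y), sqrt_integral_normSq_le hn (x - y)]
    _ = n * √n * (√(2 * n) * √(2 * n)) * (‖x + y‖ * ‖x - y‖) := by ring
    _ = n * √n * (2 * n) * (‖x + y‖ * ‖x - y‖) := by rw [Real.mul_self_sqrt (by positivity)]

lemma field_smul_apply (c : ℝ) (x : galerkinSpace n) (k : ℝ) :
    (field (c • x)).1 k = c ^ 2 • truncatedForcing n x.1 k :=
  truncatedForcing_smul n c x.1 k

end galerkinSpace

lemma integrable_and_integral_mul_normSq_le {n M C : ℝ} {W : ℝ → ℝ} {f : ℝ → ℂ} (hn : 0 ≤ n)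
    (hW : Measurable W) (hW₀ : ∀ k, 0 ≤ W k) (hWM : ∀ k, |k| ≤ n → W k ≤ M) (hf : Measurable f)
    (hC : ∀ k, ‖f k‖ ≤ C) (hsupp : ∀ k, n < |k| → f k = 0) :
    Integrable (fun k => W k * ‖f k‖ ^ 2) ∧ ∫ k, W k * ‖f k‖ ^ 2 ≤ 2 * n * (M * C ^ 2) := by
  have hmeas : Measurable fun k => W k * ‖f k‖ ^ 2 := hW.mul (hf.norm.pow_const 2)
  have hzero : ∀ k, n < |k| → W k * ‖f k‖ ^ 2 = 0 := fun k hk => by simp [hsupp k hk]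
  have hbound : ∀ k, |W k * ‖f k‖ ^ 2| ≤ M * C ^ 2 := fun k => by
    rw [abs_of_nonneg (mul_nonneg (hW₀ k) (sq_nonneg _))]
    rcases lt_or_ge n |k| with hk | hk
    · rw [hzero k hk]
      exact mul_nonneg ((hW₀ 0).trans (hWM 0 (by simpa using hn))) (sq_nonneg C)
    · exact mul_le_mul (hWM k hk) (by gcongr; exact hC k) (sq_nonneg _) ((hW₀ k).trans (hWM k hk))
  exact ⟨integrable_of_bounded_of_support hmeas hbound hzero,
    integral_le_of_bounded_of_support hn hmeas hbound hzero⟩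

lemma conj_mul_truncatedForcing {n : ℝ} {w : ℝ → ℂ} (hw : ∀ k, n < |k| → w k = 0) (u : ℝ → ℂ)
    (k : ℝ) : conj (w k) * truncatedForcing n u k = conj (w k) * waveForcing u u k := by
  unfold truncatedForcing
  split_ifs with hk
  · rfl
  · simp [hw k (not_le.1 hk)]

/-- `f` is a bounded solution of `∂_τ f = θ² • truncatedForcing n f` on `(-T, T)`. The factor `θ`
is produced by the retraction that makes the vector field Lipschitz; the truncated equation itself
is the case `θ = 1`. -/
structure IsGalerkinFlow (n T : ℝ) (θ : ℝ → ℝ) (f : ℝ → ℝ → ℂ) : Prop where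
  measurable : Measurable (Function.uncurry f)
  eq_zero_of_lt : ∀ τ k, n < |k| → f τ k = 0
  conj_symm : ∀ τ k, f τ (-k) = conj (f τ k)
  exists_norm_le : ∃ C, ∀ τ ∈ Icc (-T) T, ∀ k, ‖f τ k‖ ≤ C
  continuous : ∀ k, Continuous fun τ => f τ k
  continuous_forcing : ∀ k, Continuous fun τ => truncatedForcing n (f τ) k
  continuous_factor : Continuous θ
  factor_nonneg : ∀ τ, 0 ≤ θ τ
  factor_le_one : ∀ τ, θ τ ≤ 1
  hasDerivAt : ∀ k, ∀ τ ∈ Ioo (-T) T,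
    HasDerivAt (fun τ => f τ k) (θ τ ^ 2 • truncatedForcing n (f τ) k) τ

namespace IsGalerkinFlow

variable {n s T : ℝ} {θ : ℝ → ℝ} {f : ℝ → ℝ → ℂ} {V : ℝ → ℝ}

lemma measurable_apply (h : IsGalerkinFlow n T θ f) (τ : ℝ) : Measurable (f τ) :=
  h.measurable.comp measurable_prodMk_left

lemma isSobolev (h : IsGalerkinFlow n T θ f) (hs : 0 ≤ s) {τ : ℝ} (hτ : τ ∈ Icc (-T) T) :
    IsSobolev s (f τ) := by
  obtain ⟨C, hC⟩ := h.exists_norm_le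
  exact isSobolev_of_bounded_of_support hs (h.measurable_apply τ) (hC τ hτ) (h.eq_zero_of_lt τ)

lemma exists_integral_norm_tripleDensity_le (h : IsGalerkinFlow n T θ f) (hn : 0 ≤ n) (hs : 2 < s)
    (hV : Measurable V) (hV₀ : ∀ k, 0 ≤ V k) (hle : ∀ k, V k ≤ sobolevWeight s k) :
    ∃ B, ∀ τ ∈ Icc (-T) T, Integrable (tripleDensity V (f τ) (f τ) (f τ)) ∧
      ∫ z, ‖tripleDensity V (f τ) (f τ) (f τ) z‖ ≤ B := by
  obtain ⟨C, hC⟩ := h.exists_norm_le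
  refine ⟨powerBound s (2 * n * (sobolevWeight s n ^ 2 * C ^ 2)), fun τ hτ => ?_⟩
  have hnorm : ∀ k, |k| ≤ n → sobolevWeight s k ≤ sobolevWeight s n := fun k hk =>
    sobolevWeight_le_sobolevWeight (by linarith) (hk.trans (le_abs_self n))
  have henergy : ∫ k, sobolevWeight s k * ‖f τ k‖ ^ 2 ≤
      2 * n * (sobolevWeight s n ^ 2 * C ^ 2) :=
    (integrable_and_integral_mul_normSq_le hn (measurable_sobolevWeight s)
      (fun k => (sobolevWeight_pos s k).le)
      (fun k hk => (hnorm k hk).trans (le_self_pow₀ (one_le_sobolevWeight s n) two_ne_zero))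
      (h.measurable_apply τ) (hC τ hτ) (h.eq_zero_of_lt τ)).2
  obtain ⟨hint, hweighted⟩ := integrable_and_integral_mul_normSq_le hn (hV.pow_const 2)
    (fun k => sq_nonneg (V k)) (fun k hk => pow_le_pow_left₀ (hV₀ k) ((hle k).trans (hnorm k hk)) 2)
    (h.measurable_apply τ) (hC τ hτ) (h.eq_zero_of_lt τ)
  have hf := h.isSobolev (by linarith : 0 ≤ s) hτ
  exact hf.integrable_tripleDensity_and_integral_norm_le hs hf (h.measurable_apply τ) hV henergy
    henergy hint hweighted

lemma power_eq (h : IsGalerkinFlow n T θ f) (V : ℝ → ℝ) (τ k : ℝ) :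
    V k * (‖f τ k‖ * ‖θ τ ^ 2 • truncatedForcing n (f τ) k‖) =
      θ τ ^ 2 * (V k * (‖f τ k‖ * ‖waveForcing (f τ) (f τ) k‖)) := by
  have hnorm := congrArg norm (conj_mul_truncatedForcing (h.eq_zero_of_lt τ) (f τ) k)
  rw [norm_mul, norm_mul, RCLike.norm_conj] at hnorm
  rw [norm_smul, Real.norm_of_nonneg (sq_nonneg _), mul_left_comm ‖f τ k‖, hnorm]
  ring

lemma isEnergyFlow (h : IsGalerkinFlow n T θ f) (hn : 0 ≤ n) (hs : 2 < s) (hV : Measurable V)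
    (hV₀ : ∀ k, 0 ≤ V k) (hle : ∀ k, V k ≤ sobolevWeight s k) :
    IsEnergyFlow V f (fun τ k => θ τ ^ 2 • truncatedForcing n (f τ) k) (-T) T := by
  obtain ⟨B, hB⟩ := h.exists_integral_norm_tripleDensity_le hn hs hV hV₀ hle
  have hpower := fun τ hτ => integrable_power_and_integral_power_le hV₀ (hB τ hτ).1
  exact
    { measurable_weight := hV
      weight_nonneg := hV₀
      measurable := h.measurable
      measurable_deriv := ((h.continuous_factor.measurable.comp measurable_fst).pow_const 2).smul
        (measurable_truncatedForcing_uncurry n h.measurable)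
      continuousOn := .of_forall fun k => (h.continuous k).continuousOn
      continuousOn_deriv := .of_forall fun k =>
        ((h.continuous_factor.pow 2).smul (h.continuous_forcing k)).continuousOn
      hasDerivAt := .of_forall h.hasDerivAt
      integrable_energy := fun τ hτ =>
        (h.isSobolev (by linarith) hτ).integrable_weight hV hV₀ hle
      integrable_power := fun τ hτ => by
        simp only [h.power_eq]
        exact (hpower τ hτ).1.const_mul _
      exists_power_le := ⟨B, fun τ hτ => by
        simp only [h.power_eq]
        rw [integral_const_mul]
        exact (mul_le_of_le_one_left
          (integral_nonneg fun k => mul_nonneg (hV₀ k) (by positivity))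
          (pow_le_one₀ (h.factor_nonneg τ) (h.factor_le_one τ))).trans
          ((hpower τ hτ).2.trans (hB τ hτ).2)⟩ }

lemma integral_rate_eq (h : IsGalerkinFlow n T θ f) {τ : ℝ}
    (hint : Integrable (tripleDensity V (f τ) (f τ) (f τ))) :
    ∫ k, V k * (2 * (conj (f τ k) * (θ τ ^ 2 • truncatedForcing n (f τ) k)).re) =
      θ τ ^ 2 * (2 * (∫ z, tripleDensity V (f τ) (f τ) (f τ) z).im) := by
  rw [← integral_power_eq hint, ← integral_const_mul]
  congr 1 with k
  rw [mul_smul_comm, conj_mul_truncatedForcing (h.eq_zero_of_lt τ), Complex.smul_re, smul_eq_mul]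
  ring

lemma integral_normSq_le (h : IsGalerkinFlow n T θ f) (hn : 0 ≤ n) :
    ∀ τ ∈ Icc (-T) T, ∫ k, ‖f τ k‖ ^ 2 ≤ ∫ k, ‖f 0 k‖ ^ 2 := by
  have hle : ∀ k, (1 : ℝ) ≤ sobolevWeight 3 k := one_le_sobolevWeight 3
  obtain ⟨B, hB⟩ := h.exists_integral_norm_tripleDensity_le hn (by norm_num) measurable_const
    (fun _ => zero_le_one) hle
  have henergy := (h.isEnergyFlow hn (by norm_num) measurable_const (fun _ => zero_le_one)
    hle).energy_le (c := 0) (d := 0) le_rfl le_rfl fun τ hτ => by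
      rw [h.integral_rate_eq (hB τ hτ).1, im_integral_tripleDensity_one_eq_zero
        (.of_forall (h.conj_symm τ)) (hB τ hτ).1]
      simp
  simpa using henergy

lemma norm_le (h : IsGalerkinFlow n T θ f) (hn : 0 ≤ n) {τ : ℝ} (hτ : τ ∈ Ioo (-T) T) (k : ℝ) :
    ‖f τ k‖ ≤ ‖f 0 k‖ + n * √n * (∫ l, ‖f 0 l‖ ^ 2) * T := by
  have hderiv : ∀ σ ∈ Ioo (-T) T, ‖θ σ ^ 2 • truncatedForcing n (f σ) k‖ ≤
      n * √n * ∫ l, ‖f 0 l‖ ^ 2 := fun σ hσ => by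
    have hσ' := Ioo_subset_Icc_self hσ
    rw [norm_smul, Real.norm_of_nonneg (sq_nonneg _)]
    refine (mul_le_of_le_one_left (norm_nonneg _)
      (pow_le_one₀ (h.factor_nonneg σ) (h.factor_le_one σ))).trans
      ((norm_truncatedForcing_le (h.isSobolev le_rfl hσ').memLp_two k).trans ?_)
    gcongr n * √n * ?_
    exact h.integral_normSq_le hn σ hσ'
  have hsub := (convex_Ioo (-T) T).norm_image_sub_le_of_norm_hasDerivWithin_le
    (fun σ hσ => (h.hasDerivAt k σ hσ).hasDerivWithinAt) hderiv
    (⟨by linarith [hτ.1, hτ.2], by linarith [hτ.1, hτ.2]⟩ : (0 : ℝ) ∈ Ioo (-T) T) hτ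
  have habs : ‖τ - 0‖ ≤ T := by
    rw [sub_zero, Real.norm_eq_abs]
    exact (abs_lt.2 hτ).le
  calc ‖f τ k‖ ≤ ‖f 0 k‖ + ‖f τ k - f 0 k‖ := norm_le_insert' _ _
    _ ≤ ‖f 0 k‖ + n * √n * (∫ l, ‖f 0 l‖ ^ 2) * T := by
        gcongr
        exact hsub.trans (by gcongr)

lemma of_factor_eq_one (h : IsGalerkinFlow n T θ f) (hθ : ∀ τ ∈ Ioo (-T) T, θ τ = 1) :
    IsGalerkinFlow n T 1 f :=
  { h with
    continuous_factor := continuous_const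
    factor_nonneg := fun _ => zero_le_one
    factor_le_one := fun _ => le_rfl
    hasDerivAt := fun k τ hτ => by
      simpa only [hθ τ hτ, Pi.one_apply] using h.hasDerivAt k τ hτ }

end IsGalerkinFlow

lemma galerkinSpace.isGalerkinFlow {n R T : ℝ} (hn : 0 ≤ n) {α : ℝ → galerkinSpace n}
    (hα : Continuous α)
    (hderiv : ∀ τ ∈ Ioo (-T) T, HasDerivAt α (field (retractionFactor R (α τ) • α τ)) τ) :
    IsGalerkinFlow n T (fun τ => retractionFactor R (α τ)) fun τ k => (α τ).1 k where
  measurable := measurable_uncurry_of_continuous_of_measurable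
    (u := fun τ k => (α τ).1 k) (fun k => (eval k).continuous.comp hα) fun τ => (α τ).2.1
  eq_zero_of_lt τ := (α τ).2.2.1
  conj_symm τ := (α τ).2.2.2
  exists_norm_le := by
    obtain ⟨C, hC⟩ := isCompact_Icc.exists_bound_of_continuousOn hα.continuousOn
    exact ⟨C, fun τ hτ k => (norm_apply_le (α τ) k).trans (hC τ hτ)⟩
  continuous k := (eval k).continuous.comp hα
  continuous_forcing k := (eval k).continuous.comp
    ((continuous_of_norm_sub_le (norm_field_sub_le hn)).comp hα)
  continuous_factor := (continuous_retractionFactor R).comp hα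
  factor_nonneg τ := retractionFactor_nonneg R (α τ)
  factor_le_one τ := retractionFactor_le_one R (α τ)
  hasDerivAt k τ hτ := by
    rw [← field_smul_apply]
    exact (eval k).hasFDerivAt.comp_hasDerivAt τ (hderiv τ hτ)

lemma exists_isGalerkinFlow {n C T : ℝ} (hn : 0 ≤ n) (hT : 0 ≤ T) {g : ℝ → ℂ} (hg : Measurable g)
    (hsupp : ∀ k, n < |k| → g k = 0) (hconj : ∀ k, g (-k) = conj (g k)) (hC : ∀ k, ‖g k‖ ≤ C) :
    ∃ f, IsGalerkinFlow n T 1 f ∧ f 0 = g := by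
  let x₀ : galerkinSpace n :=
    ⟨⟨g, memℓp_infty ⟨C, by rintro _ ⟨k, rfl⟩; exact hC k⟩⟩, hg, hsupp, hconj⟩
  have hC₀ : 0 ≤ C := (norm_nonneg _).trans (hC 0)
  set R := C + n * √n * (∫ l, ‖g l‖ ^ 2) * T + 1
  have hR : 0 < R := by positivity
  obtain ⟨α, hα₀, hα, hderiv⟩ := exists_hasDerivAt_retraction (by positivity) hR hT
    galerkinSpace.field_zero (galerkinSpace.norm_field_sub_le hn) x₀
  have hflow := galerkinSpace.isGalerkinFlow hn hα hderiv
  have hinit : (fun k => (α 0).1 k) = g := by rw [hα₀]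
  refine ⟨_, hflow.of_factor_eq_one fun τ hτ => retractionFactor_eq_one ?_, hinit⟩
  refine galerkinSpace.norm_le hR.le fun k => ?_
  have hbound := hflow.norm_le hn hτ k
  rw [hα₀] at hbound
  exact hbound.trans (by linarith [hC k, show ‖x₀.1 k‖ ≤ C from hC k])

lemma rpow_div_mul_sq_eq {s M N : ℝ} (hs : s ≠ 0) (hM : 0 < M) (hN : 0 < N) :
    ((M / N) ^ (1 / s)) ^ (4 - 2 * s) * M ^ 2 = (N ^ (1 - 2 / s) * M ^ (2 / s)) ^ 2 := by
  have hexp : 1 / s * (4 - 2 * s) = 4 / s - 2 := by field_simp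
  calc ((M / N) ^ (1 / s)) ^ (4 - 2 * s) * M ^ 2
      = M ^ (4 / s - 2) / N ^ (4 / s - 2) * M ^ (2 : ℝ) := by
        rw [← Real.rpow_mul (by positivity), hexp, Real.div_rpow hM.le hN.le, Real.rpow_two]
    _ = N ^ (2 - 4 / s) * M ^ (4 / s) := by
        rw [div_eq_mul_inv, ← Real.rpow_neg hN.le, mul_right_comm, ← Real.rpow_add hM, neg_sub,
          sub_add_cancel, mul_comm]
    _ = (N ^ (1 - 2 / s) * M ^ (2 / s)) ^ 2 := by
        rw [mul_pow, ← Real.rpow_mul_natCast hN.le, ← Real.rpow_mul_natCast hM.le]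
        congr 2 <;> push_cast <;> ring

lemma IsSobolev.integral_rpow_three_halves_mul_norm_le_interpolation {s M N : ℝ} {f : ℝ → ℂ}
    (hf : IsSobolev s f) (hs : 2 < s) (hM : 0 < M) (hN : 0 < N) (hfN : ∫ k, ‖f k‖ ^ 2 ≤ N ^ 2)
    (hfM : ∫ k, sobolevWeight s k * ‖f k‖ ^ 2 ≤ 4 * M ^ 2) :
    ∫ k, |k| ^ (3 / 2 : ℝ) * ‖f k‖ ≤
      √(5 * sobolevMoment s 3) * (N ^ (1 - 2 / s) * M ^ (2 / s)) := by
  have hs₀ : s ≠ 0 := by positivity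
  -- The scale at which the `L²` part and the `Hˢ` part of the energy balance.
  set lam := (M / N) ^ (1 / s)
  have hlam : lam ^ (2 * s) = M ^ 2 / N ^ 2 := by
    rw [← Real.rpow_mul (by positivity), show 1 / s * (2 * s) = 2 by field_simp, Real.rpow_two,
      div_pow]
  refine (hf.integral_rpow_three_halves_mul_norm_le hs (lam := lam) (P := 5 * M ^ 2)
    (by positivity) ?_).trans_eq ?_
  · rw [hlam]
    calc M ^ 2 / N ^ 2 * (∫ k, ‖f k‖ ^ 2) + ∫ k, sobolevWeight s k * ‖f k‖ ^ 2
        ≤ M ^ 2 / N ^ 2 * N ^ 2 + 4 * M ^ 2 := by gcongr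
      _ = 5 * M ^ 2 := by field_simp; norm_num
  · rw [show lam ^ (4 - 2 * s) * sobolevMoment s 3 * (5 * M ^ 2) =
        5 * sobolevMoment s 3 * (lam ^ (4 - 2 * s) * M ^ 2) by ring, rpow_div_mul_sq_eq hs₀ hM hN,
      Real.sqrt_mul' _ (sq_nonneg _), Real.sqrt_sq (by positivity)]

/-- The constant `K_s` of the lifespan `1 / (K_s N^(1 - 2/s) M^(2/s))`. Up to the summand `1`, which
makes it visibly positive, it is the growth rate of the `Hˢ` energy as long as that energy stays
below four times its initial bound. -/
noncomputable def lifespanConst (s : ℝ) : ℝ :=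
  1 + 2 * (1 + 2 * 2 ^ (2 * s + 1)) * √(5 * sobolevMoment s 3)

lemma lifespanConst_pos (s : ℝ) : 0 < lifespanConst s := by
  unfold lifespanConst
  positivity

namespace IsGalerkinFlow

variable {n s T : ℝ} {θ : ℝ → ℝ} {f : ℝ → ℝ → ℂ} {V : ℝ → ℝ}

lemma abs_integral_rate_le {A C τ : ℝ} (h : IsGalerkinFlow n T θ f) (hn : 0 ≤ n) (hs : 2 < s)
    (hV : IsAdmissibleWeight C V) (hle : ∀ k, V k ≤ sobolevWeight s k) (hτ : τ ∈ Icc (-T) T)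
    (hA : ∫ k, |k| ^ (3 / 2 : ℝ) * ‖f τ k‖ ≤ A) :
    |∫ k, V k * (2 * (conj (f τ k) * (θ τ ^ 2 • truncatedForcing n (f τ) k)).re)| ≤
      2 * (1 + 2 * C) * A * ∫ k, V k * ‖f τ k‖ ^ 2 := by
  obtain ⟨B, hB⟩ := h.exists_integral_norm_tripleDensity_le hn hs hV.measurable hV.nonneg hle
  have hf := h.isSobolev (by linarith : 0 ≤ s) hτ
  have hE : 0 ≤ ∫ k, V k * ‖f τ k‖ ^ 2 :=
    integral_nonneg fun k => mul_nonneg (hV.nonneg k) (sq_nonneg _)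
  have hC := hV.const_nonneg
  rw [h.integral_rate_eq (hB τ hτ).1, abs_mul, abs_mul, abs_two, abs_of_nonneg (sq_nonneg (θ τ))]
  calc θ τ ^ 2 * (2 * |(∫ z, tripleDensity V (f τ) (f τ) (f τ) z).im|)
      ≤ 2 * |(∫ z, tripleDensity V (f τ) (f τ) (f τ) z).im| :=
        mul_le_of_le_one_left (by positivity)
          (pow_le_one₀ (h.factor_nonneg τ) (h.factor_le_one τ))
    _ ≤ 2 * ((1 + 2 * C) * ((∫ k, |k| ^ (3 / 2 : ℝ) * ‖f τ k‖) * ∫ k, V k * ‖f τ k‖ ^ 2)) := by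
        gcongr
        exact abs_im_integral_tripleDensity_le hV (.of_forall (h.conj_symm τ)) (hB τ hτ).1
          (hf.integrable_and_integral_rpow_mul_norm_le (by norm_num) (by linarith)).1
          (hf.integrable_weight hV.measurable hV.nonneg hle)
    _ ≤ 2 * ((1 + 2 * C) * (A * ∫ k, V k * ‖f τ k‖ ^ 2)) := by gcongr
    _ = 2 * (1 + 2 * C) * A * ∫ k, V k * ‖f τ k‖ ^ 2 := by ring

variable {M N : ℝ}

lemma abs_integral_rate_le_lifespanConst {τ : ℝ} (h : IsGalerkinFlow n T θ f) (hn : 0 ≤ n)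
    (hs : 2 < s) (hM : 0 < M) (hN : 0 < N) (hfN : ∫ k, ‖f 0 k‖ ^ 2 ≤ N ^ 2)
    (hV : IsAdmissibleWeight (2 ^ (2 * s + 1)) V) (hle : ∀ k, V k ≤ sobolevWeight s k)
    (hτ : τ ∈ Icc (-T) T) (hfM : ∫ k, sobolevWeight s k * ‖f τ k‖ ^ 2 ≤ 4 * M ^ 2) :
    |∫ k, V k * (2 * (conj (f τ k) * (θ τ ^ 2 • truncatedForcing n (f τ) k)).re)| ≤
      lifespanConst s * N ^ (1 - 2 / s) * M ^ (2 / s) * ∫ k, V k * ‖f τ k‖ ^ 2 := by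
  refine (h.abs_integral_rate_le hn hs hV hle hτ
    ((h.isSobolev (by linarith) hτ).integral_rpow_three_halves_mul_norm_le_interpolation hs hM hN
      ((h.integral_normSq_le hn τ hτ).trans hfN) hfM)).trans ?_
  refine mul_le_mul_of_nonneg_right ?_
    (integral_nonneg fun k => mul_nonneg (hV.nonneg k) (sq_nonneg _))
  have hD : 0 ≤ N ^ (1 - 2 / s) * M ^ (2 / s) := by positivity
  unfold lifespanConst
  linarith

lemma energy_le (h : IsGalerkinFlow n T θ f) (hn : 0 ≤ n) (hs : 2 < s) (hM : 0 < M) (hN : 0 < N)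
    (hfN : ∫ k, ‖f 0 k‖ ^ 2 ≤ N ^ 2) (hfM : ∫ k, sobolevWeight s k * ‖f 0 k‖ ^ 2 ≤ M ^ 2)
    (hT : lifespanConst s * N ^ (1 - 2 / s) * M ^ (2 / s) * T ≤ 1)
    (hV : IsAdmissibleWeight (2 ^ (2 * s + 1)) V) (hle : ∀ k, V k ≤ sobolevWeight s k) :
    ∀ τ ∈ Icc (-T) T, ∫ k, V k * ‖f τ k‖ ^ 2 ≤ 4 * ∫ k, V k * ‖f 0 k‖ ^ 2 := by
  set c := lifespanConst s * N ^ (1 - 2 / s) * M ^ (2 / s)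
  have hc : 0 ≤ c := by have := lifespanConst_pos s; positivity
  have hexp : Real.exp (c * T) < 4 :=
    (Real.exp_le_exp.2 hT).trans_lt (Real.exp_one_lt_three.trans (by norm_num))
  have hsob := isAdmissibleWeight_sobolevWeight (s := s) (by linarith)
  have hbound : ∀ τ ∈ Icc (-T) T, ∫ k, sobolevWeight s k * ‖f τ k‖ ^ 2 ≤ 4 * M ^ 2 := by
    have hgrow : ((∫ k, sobolevWeight s k * ‖f 0 k‖ ^ 2) + 0 * T) * Real.exp (c * T) <
        4 * M ^ 2 := by
      rw [zero_mul, add_zero, mul_comm 4]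
      calc _ ≤ M ^ 2 * Real.exp (c * T) := by gcongr
        _ < M ^ 2 * 4 := by gcongr
    refine fun τ hτ => ((h.isEnergyFlow hn hs hsob.measurable hsob.nonneg
      fun _ => le_rfl).energy_le_of_bootstrap hc le_rfl hgrow
        (fun σ hσ hσM => ?_) τ hτ).trans hgrow.le
    rw [add_zero]
    exact h.abs_integral_rate_le_lifespanConst hn hs hM hN hfN hsob (fun _ => le_rfl) hσ hσM
  intro τ hτ
  refine ((h.isEnergyFlow hn hs hV.measurable hV.nonneg hle).energy_le hc le_rfl
    (fun σ hσ => ?_) τ hτ).trans ?_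
  · rw [add_zero]
    exact h.abs_integral_rate_le_lifespanConst hn hs hM hN hfN hV hle hσ (hbound σ hσ)
  · rw [zero_mul, add_zero, mul_comm 4]
    gcongr
    exact integral_nonneg fun k => mul_nonneg (hV.nonneg k) (sq_nonneg _)

end IsGalerkinFlow

section EnergyOfSum

variable {s P Q : ℝ} {f g : ℝ → ℂ}

lemma IsSobolev.integral_weight_add_le (hf : IsSobolev s f) (hg : IsSobolev s g) {V : ℝ → ℝ}
    (hV : Measurable V) (hV₀ : ∀ k, 0 ≤ V k) (hle : ∀ k, V k ≤ sobolevWeight s k)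
    (hfP : ∫ k, V k * ‖f k‖ ^ 2 ≤ P) (hgP : ∫ k, V k * ‖g k‖ ^ 2 ≤ Q) :
    ∫ k, V k * ‖f k + g k‖ ^ 2 ≤ 2 * P + 2 * Q := by
  have hfV := (hf.integrable_weight hV hV₀ hle).const_mul 2
  have hgV := (hg.integrable_weight hV hV₀ hle).const_mul 2
  calc ∫ k, V k * ‖f k + g k‖ ^ 2
      ≤ ∫ k, (2 * (V k * ‖f k‖ ^ 2) + 2 * (V k * ‖g k‖ ^ 2)) := by
        refine integral_mono ((hf.add hg).integrable_weight hV hV₀ hle) (hfV.add hgV) fun k => ?_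
        have hnorm : ‖f k + g k‖ ^ 2 ≤ 2 * (‖f k‖ ^ 2 + ‖g k‖ ^ 2) :=
          (pow_le_pow_left₀ (norm_nonneg _) (norm_add_le _ _) 2).trans add_sq_le
        have := mul_le_mul_of_nonneg_left hnorm (hV₀ k)
        simpa only [Pi.add_apply, mul_add, mul_left_comm] using this
    _ = 2 * (∫ k, V k * ‖f k‖ ^ 2) + 2 * ∫ k, V k * ‖g k‖ ^ 2 := by
        rw [integral_add hfV hgV, integral_const_mul, integral_const_mul]
    _ ≤ 2 * P + 2 * Q := by gcongr

lemma IsSobolev.integral_weight_sub_le (hf : IsSobolev s f) (hg : IsSobolev s g) {V : ℝ → ℝ}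
    (hV : Measurable V) (hV₀ : ∀ k, 0 ≤ V k) (hle : ∀ k, V k ≤ sobolevWeight s k)
    (hfP : ∫ k, V k * ‖f k‖ ^ 2 ≤ P) (hgP : ∫ k, V k * ‖g k‖ ^ 2 ≤ Q) :
    ∫ k, V k * ‖f k - g k‖ ^ 2 ≤ 2 * P + 2 * Q := by
  simpa only [sub_eq_add_neg] using
    hf.integral_weight_add_le hg.neg hV hV₀ hle hfP (by simpa only [norm_neg] using hgP)

lemma IsSobolev.energy_add_le (hf : IsSobolev s f) (hg : IsSobolev s g)
    (hfP : ∫ k, sobolevWeight s k * ‖f k‖ ^ 2 ≤ P) (hgP : ∫ k, sobolevWeight s k * ‖g k‖ ^ 2 ≤ Q) :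
    ∫ k, sobolevWeight s k * ‖f k + g k‖ ^ 2 ≤ 2 * P + 2 * Q :=
  hf.integral_weight_add_le hg (measurable_sobolevWeight s) (fun k => (sobolevWeight_pos s k).le)
    (fun _ => le_rfl) hfP hgP

lemma IsSobolev.energy_sub_le (hf : IsSobolev s f) (hg : IsSobolev s g)
    (hfP : ∫ k, sobolevWeight s k * ‖f k‖ ^ 2 ≤ P) (hgP : ∫ k, sobolevWeight s k * ‖g k‖ ^ 2 ≤ Q) :
    ∫ k, sobolevWeight s k * ‖f k - g k‖ ^ 2 ≤ 2 * P + 2 * Q :=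
  hf.integral_weight_sub_le hg (measurable_sobolevWeight s) (fun k => (sobolevWeight_pos s k).le)
    (fun _ => le_rfl) hfP hgP

end EnergyOfSum

/-- `f` solves `∂_τ f = waveForcing f f` on `(-T, T)` up to a relative error `ε |k|` at frequency
`k`, with `Hˢ` energy at most `P`; `f'` is its time derivative. The Galerkin flow truncated at `n`
has `ε = 1 / n`, an exact solution has `ε = 0`. -/
structure IsApproxSolution (s ε P T : ℝ) (f f' : ℝ → ℝ → ℂ) : Prop where
  measurable : Measurable (Function.uncurry f)
  measurable_deriv : Measurable (Function.uncurry f')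
  isSobolev : ∀ τ ∈ Icc (-T) T, IsSobolev s (f τ)
  energy_le : ∀ τ ∈ Icc (-T) T, ∫ k, sobolevWeight s k * ‖f τ k‖ ^ 2 ≤ P
  conjSymm : ∀ τ ∈ Icc (-T) T, ConjSymm (f τ)
  continuousOn : ∀ᵐ k, ContinuousOn (fun τ => f τ k) (Icc (-T) T)
  continuousOn_deriv : ∀ᵐ k, ContinuousOn (fun τ => f' τ k) (Icc (-T) T)
  hasDerivAt : ∀ᵐ k, ∀ τ ∈ Ioo (-T) T, HasDerivAt (fun τ => f τ k) (f' τ k) τ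
  norm_error_le : ∀ τ ∈ Icc (-T) T, ∀ᵐ k,
    ‖f' τ k - waveForcing (f τ) (f τ) k‖ ≤ ε * (|k| * ‖waveForcing (f τ) (f τ) k‖)

section Difference

variable {s P : ℝ} {h w : ℝ → ℂ}

lemma IsSobolev.integrable_tripleDensity_one_and_integral_norm_le (hs : 2 < s) (hh : IsSobolev s h)
    (hw : IsSobolev s w) (hhP : ∫ k, sobolevWeight s k * ‖h k‖ ^ 2 ≤ P)
    (hwP : ∫ k, sobolevWeight s k * ‖w k‖ ^ 2 ≤ P) :
    Integrable (tripleDensity (fun _ => 1) h w w) ∧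
      ∫ z, ‖tripleDensity (fun _ => 1) h w w z‖ ≤ powerBound s P :=
  hh.integrable_tripleDensity_and_integral_norm_le hs hw hw.measurable measurable_const hhP hwP
    (by simpa using hw.integrable_normSq) (by simpa using hw.integral_normSq_le.trans hwP)

lemma IsSobolev.integrable_abs_mul_power_and_integral_le (hs : 2 < s) {f : ℝ → ℂ}
    (hf : IsSobolev s f) (hw : IsSobolev s w) (hfP : ∫ k, sobolevWeight s k * ‖f k‖ ^ 2 ≤ P)
    (hwP : ∫ k, sobolevWeight s k * ‖w k‖ ^ 2 ≤ P) :
    Integrable (fun k => |k| * (‖w k‖ * ‖waveForcing f f k‖)) ∧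
      ∫ k, |k| * (‖w k‖ * ‖waveForcing f f k‖) ≤ powerBound s P := by
  have hle := abs_sq_le_sobolevWeight (by linarith : 1 ≤ s)
  have hmeas : Measurable fun k : ℝ => |k| ^ 2 := by fun_prop
  obtain ⟨hint, hbound⟩ := hf.integrable_tripleDensity_and_integral_norm_le hs hf hw.measurable
    (by fun_prop : Measurable fun k : ℝ => |k|) hfP hfP
    (hw.integrable_weight hmeas (fun k => sq_nonneg _) hle)
    ((hw.integral_weight_le hmeas (fun k => sq_nonneg _) hle).trans hwP)
  obtain ⟨hpow, hpow_le⟩ := integrable_power_and_integral_power_le abs_nonneg hint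
  exact ⟨hpow, hpow_le.trans hbound⟩

/-- The exponential rate at which the `L²` distance of two solutions with `Hˢ` energy at most `P`
can grow. -/
noncomputable def stabilityRate (s P : ℝ) : ℝ := √(sobolevMoment s 3 * (4 * P))

lemma IsSobolev.abs_integral_power_le (hs : 2 < s) (hh : IsSobolev s h) (hw : IsSobolev s w)
    (hconj : ConjSymm h) (hhP : ∫ k, sobolevWeight s k * ‖h k‖ ^ 2 ≤ 4 * P)
    (hwP : ∫ k, sobolevWeight s k * ‖w k‖ ^ 2 ≤ 4 * P) :
    |∫ k, 2 * (conj (w k) * waveForcing h w k).re| ≤ stabilityRate s P * ∫ k, ‖w k‖ ^ 2 := by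
  obtain ⟨hint, -⟩ := hh.integrable_tripleDensity_one_and_integral_norm_le hs hw hhP hwP
  obtain ⟨hA, hA_le⟩ := hh.integrable_and_integral_rpow_mul_norm_le (j := 3 / 2) (by norm_num)
    (by linarith)
  rw [show (2 * (3 / 2) : ℝ) = 3 by norm_num] at hA_le
  have heq := integral_power_eq hint
  simp only [one_mul] at heq
  rw [heq, abs_mul, abs_two]
  have hbound := abs_im_integral_tripleDensity_one_le hconj hint hA hw.integrable_normSq
  have hm := sobolevMoment_nonneg s 3
  calc 2 * |(∫ z, tripleDensity (fun _ => 1) h w w z).im|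
      ≤ (∫ k, |k| ^ (3 / 2 : ℝ) * ‖h k‖) * ∫ k, ‖w k‖ ^ 2 := by linarith
    _ ≤ stabilityRate s P * ∫ k, ‖w k‖ ^ 2 := by
        refine mul_le_mul_of_nonneg_right (hA_le.trans (Real.sqrt_le_sqrt ?_))
          (integral_nonneg fun k => sq_nonneg _)
        gcongr

end Difference

lemma integrable_power_of_error {w q q₀ : ℝ → ℂ} {R : ℝ → ℝ} (hw : Measurable w)
    (hq : Measurable q) (hR : Integrable R) (hq₀ : Integrable fun k => ‖w k‖ * ‖q₀ k‖)
    (hle : ∀ᵐ k, ‖w k‖ * ‖q k - q₀ k‖ ≤ R k) :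
    Integrable (fun k => ‖w k‖ * ‖q k‖) ∧
      ∫ k, ‖w k‖ * ‖q k‖ ≤ (∫ k, ‖w k‖ * ‖q₀ k‖) + ∫ k, R k := by
  have hbound : ∀ᵐ k, ‖w k‖ * ‖q k‖ ≤ ‖w k‖ * ‖q₀ k‖ + R k := hle.mono fun k hk => by
    calc ‖w k‖ * ‖q k‖ ≤ ‖w k‖ * (‖q₀ k‖ + ‖q k - q₀ k‖) := by gcongr; exact norm_le_insert' _ _
      _ ≤ ‖w k‖ * ‖q₀ k‖ + R k := by rw [mul_add]; gcongr
  have hint : Integrable fun k => ‖w k‖ * ‖q k‖ := (hq₀.add hR).mono'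
    (hw.norm.mul hq.norm).aestronglyMeasurable
    (hbound.mono fun k hk => by rwa [Real.norm_of_nonneg (by positivity)])
  exact ⟨hint, (integral_mono_ae hint (hq₀.add hR) hbound).trans_eq (integral_add hq₀ hR)⟩

lemma abs_integral_power_le_of_error {w q q₀ : ℝ → ℂ} {R : ℝ → ℝ} (hw : Measurable w)
    (hq : Measurable q) (hmq₀ : Measurable q₀) (hR : Integrable R)
    (hq₀ : Integrable fun k => ‖w k‖ * ‖q₀ k‖) (hle : ∀ᵐ k, ‖w k‖ * ‖q k - q₀ k‖ ≤ R k) :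
    |∫ k, 2 * (conj (w k) * q k).re| ≤ |∫ k, 2 * (conj (w k) * q₀ k).re| + 2 * ∫ k, R k := by
  have hre : ∀ {p : ℝ → ℂ}, Measurable p → Integrable (fun k => ‖w k‖ * ‖p k‖) →
      Integrable fun k => 2 * (conj (w k) * p k).re := fun {p} hp hint =>
    ((hint.congr (.of_forall fun k => by simp)).mono'
      ((Complex.continuous_conj.measurable.comp hw).mul hp).aestronglyMeasurable
      (.of_forall fun k => (norm_mul (conj (w k)) (p k)).le)).re.const_mul 2
  have hi := hre hq (integrable_power_of_error hw hq hR hq₀ hle).1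
  have hi₀ := hre hmq₀ hq₀
  have hdiff : |(∫ k, 2 * (conj (w k) * q k).re) - ∫ k, 2 * (conj (w k) * q₀ k).re| ≤
      2 * ∫ k, R k := by
    rw [← integral_sub hi hi₀, ← integral_const_mul, ← Real.norm_eq_abs]
    refine norm_integral_le_of_norm_le (hR.const_mul 2) (hle.mono fun k hk => ?_)
    rw [← mul_sub, ← Complex.sub_re, ← mul_sub, norm_mul, Real.norm_two]
    gcongr
    exact (Complex.abs_re_le_norm _).trans (by rwa [norm_mul, RCLike.norm_conj])
  linarith [abs_sub_abs_le_abs_sub (∫ k, 2 * (conj (w k) * q k).re)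
    (∫ k, 2 * (conj (w k) * q₀ k).re)]

namespace IsApproxSolution

variable {s ε δ P T : ℝ} {f f' g g' : ℝ → ℝ → ℂ}

lemma ae_norm_mul_norm_sub_le (hf : IsApproxSolution s ε P T f f')
    (hg : IsApproxSolution s δ P T g g') {τ : ℝ} (hτ : τ ∈ Icc (-T) T) (w : ℝ → ℂ) :
    ∀ᵐ k, ‖w k‖ * ‖f' τ k - g' τ k - waveForcing (f τ + g τ) (f τ - g τ) k‖ ≤
      ε * (|k| * (‖w k‖ * ‖waveForcing (f τ) (f τ) k‖)) +
        δ * (|k| * (‖w k‖ * ‖waveForcing (g τ) (g τ) k‖)) := by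
  filter_upwards [hf.norm_error_le τ hτ, hg.norm_error_le τ hτ] with k hfk hgk
  rw [waveForcing_add_sub (hg.isSobolev τ hτ).memLp_two (hf.isSobolev τ hτ).memLp_two,
    sub_sub_sub_comm]
  refine (mul_le_mul_of_nonneg_left ((norm_sub_le _ _).trans (add_le_add hfk hgk))
    (norm_nonneg _)).trans_eq ?_
  ring

lemma energy_nonneg (hf : IsApproxSolution s ε P T f f') {τ : ℝ} (hτ : τ ∈ Icc (-T) T) : 0 ≤ P :=
  (integral_nonneg fun k => mul_nonneg (sobolevWeight_pos s k).le (sq_nonneg _)).trans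
    (hf.energy_le τ hτ)

lemma energy_add_le (hf : IsApproxSolution s ε P T f f') (hg : IsApproxSolution s δ P T g g')
    {τ : ℝ} (hτ : τ ∈ Icc (-T) T) : ∫ k, sobolevWeight s k * ‖f τ k + g τ k‖ ^ 2 ≤ 4 * P := by
  have := (hf.isSobolev τ hτ).energy_add_le (hg.isSobolev τ hτ) (hf.energy_le τ hτ)
    (hg.energy_le τ hτ)
  linarith

lemma energy_sub_le (hf : IsApproxSolution s ε P T f f') (hg : IsApproxSolution s δ P T g g')
    {τ : ℝ} (hτ : τ ∈ Icc (-T) T) : ∫ k, sobolevWeight s k * ‖f τ k - g τ k‖ ^ 2 ≤ 4 * P := by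
  have := (hf.isSobolev τ hτ).energy_sub_le (hg.isSobolev τ hτ) (hf.energy_le τ hτ)
    (hg.energy_le τ hτ)
  linarith

lemma integrable_error_and_integral_le (hs : 2 < s) (hε : 0 ≤ ε) (hδ : 0 ≤ δ)
    (hf : IsApproxSolution s ε P T f f') (hg : IsApproxSolution s δ P T g g') {τ : ℝ}
    (hτ : τ ∈ Icc (-T) T) :
    Integrable (fun k => ε * (|k| * (‖f τ k - g τ k‖ * ‖waveForcing (f τ) (f τ) k‖)) +
        δ * (|k| * (‖f τ k - g τ k‖ * ‖waveForcing (g τ) (g τ) k‖))) ∧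
      ∫ k, (ε * (|k| * (‖f τ k - g τ k‖ * ‖waveForcing (f τ) (f τ) k‖)) +
        δ * (|k| * (‖f τ k - g τ k‖ * ‖waveForcing (g τ) (g τ) k‖))) ≤
      (ε + δ) * powerBound s (4 * P) := by
  have hP := hf.energy_nonneg hτ
  have hfτ := hf.isSobolev τ hτ
  have hgτ := hg.isSobolev τ hτ
  have hfP := hf.energy_le τ hτ
  have hgP := hg.energy_le τ hτ
  have hdiff := hf.energy_sub_le hg hτ
  obtain ⟨hrf, hrf_le⟩ := hfτ.integrable_abs_mul_power_and_integral_le hs (hfτ.sub hgτ)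
    (by linarith) hdiff
  obtain ⟨hrg, hrg_le⟩ := hgτ.integrable_abs_mul_power_and_integral_le hs (hfτ.sub hgτ)
    (by linarith) hdiff
  refine ⟨(hrf.const_mul ε).add (hrg.const_mul δ), ?_⟩
  rw [integral_add (hrf.const_mul ε) (hrg.const_mul δ), integral_const_mul, integral_const_mul,
    add_mul]
  gcongr

lemma power_difference (hs : 2 < s) (hε : 0 ≤ ε) (hδ : 0 ≤ δ)
    (hf : IsApproxSolution s ε P T f f') (hg : IsApproxSolution s δ P T g g') {τ : ℝ}
    (hτ : τ ∈ Icc (-T) T) :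
    (Integrable (fun k => ‖f τ k - g τ k‖ * ‖f' τ k - g' τ k‖) ∧
      ∫ k, ‖f τ k - g τ k‖ * ‖f' τ k - g' τ k‖ ≤ (1 + (ε + δ)) * powerBound s (4 * P)) ∧
    |∫ k, 2 * (conj (f τ k - g τ k) * (f' τ k - g' τ k)).re| ≤
      stabilityRate s P * (∫ k, ‖f τ k - g τ k‖ ^ 2) + 2 * (ε + δ) * powerBound s (4 * P) := by
  have hsum := (hf.isSobolev τ hτ).add (hg.isSobolev τ hτ)
  have hw := (hf.isSobolev τ hτ).sub (hg.isSobolev τ hτ)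
  have hconj : ConjSymm fun k => f τ k + g τ k := by
    filter_upwards [hf.conjSymm τ hτ, hg.conjSymm τ hτ] with k hfk hgk
    simp [hfk, hgk]
  obtain ⟨hint, hbound⟩ := hsum.integrable_tripleDensity_one_and_integral_norm_le hs hw
    (hf.energy_add_le hg hτ) (hf.energy_sub_le hg hτ)
  obtain ⟨hpow, hpow_le⟩ := integrable_power_and_integral_power_le (fun _ => zero_le_one) hint
  simp only [one_mul] at hpow hpow_le
  have herror := hf.ae_norm_mul_norm_sub_le hg hτ fun k => f τ k - g τ k
  obtain ⟨hR, hR_le⟩ := hf.integrable_error_and_integral_le hs hε hδ hg hτ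
  have hq : Measurable fun k => f' τ k - g' τ k :=
    (hf.measurable_deriv.comp measurable_prodMk_left).sub
      (hg.measurable_deriv.comp measurable_prodMk_left)
  have hforcing := hsum.abs_integral_power_le hs hw hconj (hf.energy_add_le hg hτ)
    (hf.energy_sub_le hg hτ)
  constructor
  · refine (integrable_power_of_error hw.measurable hq hR hpow herror).imp_right fun hle => ?_
    linarith
  · have := abs_integral_power_le_of_error hw.measurable hq
      (measurable_waveForcing hsum.measurable hw.measurable) hR hpow herror
    linarith

lemma isEnergyFlow_sub (hs : 2 < s) (hε : 0 ≤ ε) (hδ : 0 ≤ δ) (hf : IsApproxSolution s ε P T f f')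
    (hg : IsApproxSolution s δ P T g g') :
    IsEnergyFlow (fun _ => 1) (fun τ k => f τ k - g τ k) (fun τ k => f' τ k - g' τ k) (-T) T where
  measurable_weight := measurable_const
  weight_nonneg _ := zero_le_one
  measurable := hf.measurable.sub hg.measurable
  measurable_deriv := hf.measurable_deriv.sub hg.measurable_deriv
  continuousOn := hf.continuousOn.mp (hg.continuousOn.mono fun _ hgk hfk => hfk.sub hgk)
  continuousOn_deriv :=
    hf.continuousOn_deriv.mp (hg.continuousOn_deriv.mono fun _ hgk hfk => hfk.sub hgk)
  hasDerivAt := hf.hasDerivAt.mp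
    (hg.hasDerivAt.mono fun _ hgk hfk τ hτ => (hfk τ hτ).sub (hgk τ hτ))
  integrable_energy τ hτ := by
    simpa using ((hf.isSobolev τ hτ).sub (hg.isSobolev τ hτ)).integrable_normSq
  integrable_power τ hτ := by simpa using (power_difference hs hε hδ hf hg hτ).1.1
  exists_power_le := ⟨_, fun τ hτ => by simpa using (power_difference hs hε hδ hf hg hτ).1.2⟩

theorem integral_normSq_sub_le (hs : 2 < s) (hε : 0 ≤ ε) (hδ : 0 ≤ δ)
    (hf : IsApproxSolution s ε P T f f') (hg : IsApproxSolution s δ P T g g') :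
    ∀ τ ∈ Icc (-T) T, ∫ k, ‖f τ k - g τ k‖ ^ 2 ≤
      ((∫ k, ‖f 0 k - g 0 k‖ ^ 2) + 2 * (ε + δ) * powerBound s (4 * P) * T) *
        Real.exp (stabilityRate s P * T) := by
  intro τ hτ
  have hP := hf.energy_nonneg hτ
  have hd : 0 ≤ 2 * (ε + δ) * powerBound s (4 * P) := by
    have := powerBound_nonneg s (by positivity : 0 ≤ 4 * P)
    positivity
  have henergy := (isEnergyFlow_sub hs hε hδ hf hg).energy_le (c := stabilityRate s P)
    (Real.sqrt_nonneg _) hd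
    (fun σ hσ => by simpa only [one_mul] using (power_difference hs hε hδ hf hg hσ).2) τ hτ
  simpa only [one_mul] using henergy

end IsApproxSolution

lemma integrable_and_integral_le_of_tendsto {α : Type*} [MeasurableSpace α] {μ : Measure α}
    {φ : ℕ → α → ℝ} {ψ : α → ℝ} {C : ℝ} (hφ : ∀ n, Integrable (φ n) μ) (hφ₀ : ∀ n x, 0 ≤ φ n x)
    (hlim : ∀ x, Tendsto (fun n => φ n x) atTop (𝓝 (ψ x))) (hC : ∀ n, ∫ x, φ n x ∂μ ≤ C) :
    Integrable ψ μ ∧ ∫ x, ψ x ∂μ ≤ C := by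
  have hψ₀ : ∀ x, 0 ≤ ψ x := fun x => ge_of_tendsto' (hlim x) fun n => hφ₀ n x
  have hψ : AEStronglyMeasurable ψ μ :=
    aestronglyMeasurable_of_tendsto_ae atTop (fun n => (hφ n).1) (.of_forall hlim)
  have hfatou : ∫⁻ x, ENNReal.ofReal (ψ x) ∂μ ≤ ENNReal.ofReal C :=
    calc ∫⁻ x, ENNReal.ofReal (ψ x) ∂μ
        = ∫⁻ x, liminf (fun n => ENNReal.ofReal (φ n x)) atTop ∂μ :=
          lintegral_congr fun x => (ENNReal.tendsto_ofReal (hlim x)).liminf_eq.symm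
      _ ≤ liminf (fun n => ∫⁻ x, ENNReal.ofReal (φ n x) ∂μ) atTop :=
          lintegral_liminf_le' fun n => (hφ n).1.aemeasurable.ennreal_ofReal
      _ ≤ ENNReal.ofReal C := liminf_le_of_frequently_le' (.of_forall fun n => by
          rw [← ofReal_integral_eq_lintegral_ofReal (hφ n) (.of_forall (hφ₀ n))]
          exact ENNReal.ofReal_le_ofReal (hC n))
  have hint : Integrable ψ μ :=
    (lintegral_ofReal_ne_top_iff_integrable hψ (.of_forall hψ₀)).1
      (hfatou.trans_lt ENNReal.ofReal_lt_top).ne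
  refine ⟨hint, ?_⟩
  rwa [← ofReal_integral_eq_lintegral_ofReal hint (.of_forall hψ₀), ENNReal.ofReal_le_ofReal_iff
    ((integral_nonneg (hφ₀ 0)).trans (hC 0))] at hfatou

lemma IsSobolev.norm_waveForcing_self_sub_le {s P : ℝ} {f g : ℝ → ℂ} (hf : IsSobolev s f)
    (hg : IsSobolev s g) (hfP : ∫ k, sobolevWeight s k * ‖f k‖ ^ 2 ≤ P)
    (hgP : ∫ k, sobolevWeight s k * ‖g k‖ ^ 2 ≤ P) (k : ℝ) :
    ‖waveForcing g g k - waveForcing f f k‖ ≤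
      |k| * √|k| * √(4 * P) * √(∫ l, ‖g l - f l‖ ^ 2) := by
  have hsum : ∫ l, ‖g l + f l‖ ^ 2 ≤ 4 * P := by
    have := (hg.add hf).integral_normSq_le.trans (hg.energy_add_le hf hgP hfP)
    linarith
  rw [← waveForcing_add_sub hf.memLp_two hg.memLp_two, norm_waveForcing]
  calc |k| * ‖waveBilinear (g + f) (g - f) k‖
      ≤ |k| * (√|k| * (√(∫ l, ‖g l + f l‖ ^ 2) * √(∫ l, ‖g l - f l‖ ^ 2))) := by
        gcongr
        exact norm_waveBilinear_le (hg.memLp_two.add hf.memLp_two)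
          (hg.memLp_two.sub hf.memLp_two) k
    _ ≤ |k| * (√|k| * (√(4 * P) * √(∫ l, ‖g l - f l‖ ^ 2))) := by gcongr
    _ = _ := by ring

section Galerkin

variable {s n P T : ℝ} {f : ℝ → ℝ → ℂ}

lemma norm_truncatedForcing_sub_waveForcing_le (hn : 0 < n) (u : ℝ → ℂ) (k : ℝ) :
    ‖truncatedForcing n u k - waveForcing u u k‖ ≤ 1 / n * (|k| * ‖waveForcing u u k‖) := by
  unfold truncatedForcing
  split_ifs with hk
  · rw [sub_self, norm_zero]
    positivity
  · rw [zero_sub, norm_neg, ← mul_assoc, one_div_mul_eq_div]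
    exact le_mul_of_one_le_left (norm_nonneg _) ((one_le_div hn).2 (not_le.1 hk).le)

namespace IsGalerkinFlow

lemma hasDerivAt_truncatedForcing (h : IsGalerkinFlow n T 1 f) (k : ℝ) :
    ∀ τ ∈ Ioo (-T) T, HasDerivAt (fun τ => f τ k) (truncatedForcing n (f τ) k) τ := by
  simpa using h.hasDerivAt k

lemma isApproxSolution (h : IsGalerkinFlow n T 1 f) (hn : 0 < n) (hs : 0 ≤ s)
    (hP : ∀ τ ∈ Icc (-T) T, ∫ k, sobolevWeight s k * ‖f τ k‖ ^ 2 ≤ P) :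
    IsApproxSolution s (1 / n) P T f fun τ k => truncatedForcing n (f τ) k where
  measurable := h.measurable
  measurable_deriv := measurable_truncatedForcing_uncurry n h.measurable
  isSobolev _ := h.isSobolev hs
  energy_le := hP
  conjSymm τ _ := .of_forall (h.conj_symm τ)
  continuousOn := .of_forall fun k => (h.continuous k).continuousOn
  continuousOn_deriv := .of_forall fun k => (h.continuous_forcing k).continuousOn
  hasDerivAt := .of_forall h.hasDerivAt_truncatedForcing
  norm_error_le τ _ := .of_forall (norm_truncatedForcing_sub_waveForcing_le hn (f τ))

lemma continuous_waveForcing (h : IsGalerkinFlow n T 1 f) {k : ℝ} (hk : |k| ≤ n) :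
    Continuous fun τ => waveForcing (f τ) (f τ) k := by
  simpa only [truncatedForcing, if_pos hk] using h.continuous_forcing k

lemma eq_add_integral (h : IsGalerkinFlow n T 1 f) {k : ℝ} (hk : |k| ≤ n) {τ : ℝ}
    (hτ : τ ∈ Icc (-T) T) : f τ k = f 0 k + ∫ σ in (0 : ℝ)..τ, waveForcing (f σ) (f σ) k := by
  have hcont := h.continuous_waveForcing hk
  have hderiv : ∀ σ ∈ Ioo (-T) T,
      HasDerivAt (fun τ => f τ k) (waveForcing (f σ) (f σ) k) σ := by
    simpa only [truncatedForcing, if_pos hk] using h.hasDerivAt_truncatedForcing k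
  have hT : 0 ≤ T := by linarith [hτ.1, hτ.2]
  have hftc : ∀ σ ∈ Icc (-T) T,
      ∫ ρ in (-T)..σ, waveForcing (f ρ) (f ρ) k = f σ k - f (-T) k := fun σ hσ =>
    intervalIntegral.integral_eq_sub_of_hasDerivAt_of_le hσ.1 (h.continuous k).continuousOn
      (fun ρ hρ => hderiv ρ ⟨hρ.1, hρ.2.trans_le hσ.2⟩) (hcont.intervalIntegrable _ _)
  have := intervalIntegral.integral_interval_sub_left (μ := volume)
    (hcont.intervalIntegrable (-T) τ) (hcont.intervalIntegrable (-T) 0)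
  rw [← this, hftc τ hτ, hftc 0 ⟨by linarith, hT⟩]
  ring

end IsGalerkinFlow

end Galerkin

open Classical in
lemma exists_measurable_neg_eq_conj_ae_eq {f : ℝ → ℂ} (hf : Measurable f) (hconj : ConjSymm f) :
    ∃ g : ℝ → ℂ, Measurable g ∧ (∀ k, g (-k) = conj (g k)) ∧ ∀ᵐ k, g k = f k := by
  refine ⟨fun k => if f (-k) = conj (f k) then f k else 0, ?_, fun k => ?_, ?_⟩
  · exact hf.ite (measurableSet_eq_fun (by fun_prop) (Complex.continuous_conj.measurable.comp hf))
      measurable_const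
  · have hiff : f k = conj (f (-k)) ↔ f (-k) = conj (f k) :=
      ⟨fun h => by rw [h, Complex.conj_conj], fun h => by rw [h, Complex.conj_conj]⟩
    simp only [neg_neg, hiff]
    split_ifs with h
    · exact h
    · exact (map_zero _).symm
  · filter_upwards [hconj] with k hk
    exact if_pos hk

/-- The part of `g` with frequency and amplitude at most `n`: a bounded, compactly supported
approximation of `g`. -/
noncomputable def cutoff (n : ℝ) (g : ℝ → ℂ) (k : ℝ) : ℂ :=
  if |k| ≤ n ∧ ‖g k‖ ≤ n then g k else 0

section Cutoff

variable {s n : ℝ} {g : ℝ → ℂ}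

lemma measurable_cutoff (n : ℝ) (hg : Measurable g) : Measurable (cutoff n g) :=
  hg.ite ((measurableSet_le measurable_norm measurable_const).inter
    (measurableSet_le hg.norm measurable_const)) measurable_const

lemma norm_cutoff_le_norm (n : ℝ) (g : ℝ → ℂ) (k : ℝ) : ‖cutoff n g k‖ ≤ ‖g k‖ := by
  unfold cutoff
  split_ifs <;> simp

lemma norm_cutoff_le (hn : 0 ≤ n) (g : ℝ → ℂ) (k : ℝ) : ‖cutoff n g k‖ ≤ n := by
  unfold cutoff
  split_ifs with h
  · exact h.2
  · simpa using hn

lemma cutoff_eq_zero {k : ℝ} (hk : n < |k|) : cutoff n g k = 0 :=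
  if_neg fun h => hk.not_ge h.1

lemma cutoff_neg_eq_conj (hg : ∀ k, g (-k) = conj (g k)) (n k : ℝ) :
    cutoff n g (-k) = conj (cutoff n g k) := by
  simp only [cutoff, abs_neg, hg, RCLike.norm_conj, apply_ite conj, map_zero]

lemma norm_cutoff_sub_cutoff_le {m : ℝ} (hnm : n ≤ m) (g : ℝ → ℂ) (k : ℝ) :
    ‖cutoff m g k - cutoff n g k‖ ≤ ‖g k - cutoff n g k‖ := by
  unfold cutoff
  split_ifs with hm hn hn
  · rfl
  · rfl
  · exact absurd ⟨hn.1.trans hnm, hn.2.trans hnm⟩ hm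
  · simp

lemma exists_abs_le_and_cutoff_eq (g : ℝ → ℂ) (k : ℝ) :
    ∃ N : ℕ, ∀ n : ℕ, N ≤ n → |k| ≤ n + 1 ∧ cutoff (n + 1) g k = g k := by
  obtain ⟨N, hN⟩ := exists_nat_ge (max |k| ‖g k‖)
  refine ⟨N, fun n hn => ?_⟩
  have hle : max |k| ‖g k‖ ≤ (n : ℝ) + 1 := by
    have : (N : ℝ) ≤ n := by exact_mod_cast hn
    linarith
  exact ⟨(le_max_left _ _).trans hle,
    if_pos ⟨(le_max_left _ _).trans hle, (le_max_right _ _).trans hle⟩⟩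

lemma isSobolev_cutoff (n : ℝ) (hg : IsSobolev s g) : IsSobolev s (cutoff n g) where
  measurable := measurable_cutoff n hg.measurable
  integrable := by
    have := measurable_cutoff n hg.measurable
    have := measurable_sobolevWeight s
    refine hg.integrable.mono' (by fun_prop) (.of_forall fun k => ?_)
    have := (sobolevWeight_pos s k).le
    rw [Real.norm_of_nonneg (by positivity)]
    gcongr
    exact norm_cutoff_le_norm n g k

lemma integral_weight_cutoff_le (n : ℝ) (hg : IsSobolev s g) {V : ℝ → ℝ} (hV : Measurable V)
    (hV₀ : ∀ k, 0 ≤ V k) (hle : ∀ k, V k ≤ sobolevWeight s k) :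
    ∫ k, V k * ‖cutoff n g k‖ ^ 2 ≤ ∫ k, V k * ‖g k‖ ^ 2 :=
  integral_mono ((isSobolev_cutoff n hg).integrable_weight hV hV₀ hle)
    (hg.integrable_weight hV hV₀ hle) fun k => by
      have := hV₀ k
      have := norm_cutoff_le_norm n g k
      dsimp only
      gcongr

lemma tendsto_integral_normSq_sub_cutoff (hg : IsSobolev s g) :
    Tendsto (fun n : ℕ => ∫ k, ‖g k - cutoff (n + 1) g k‖ ^ 2) atTop (𝓝 0) := by
  have := hg.measurable
  have := fun n : ℕ => measurable_cutoff ((n : ℝ) + 1) hg.measurable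
  rw [← integral_zero ℝ ℝ]
  refine tendsto_integral_of_dominated_convergence (fun k => ‖g k‖ ^ 2) (fun n => by fun_prop)
    hg.integrable_normSq (fun n => .of_forall fun k => ?_) (.of_forall fun k => ?_)
  · rw [Real.norm_of_nonneg (by positivity)]
    unfold cutoff
    split_ifs <;> simp
  · obtain ⟨N, hN⟩ := exists_abs_le_and_cutoff_eq g k
    refine tendsto_const_nhds.congr' ?_
    filter_upwards [eventually_ge_atTop N] with n hn
    simp [(hN n hn).2]

end Cutoff

/-- The bound on the `Hˢ` energy, on the lifespan, of the solution issued from `g`. -/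
noncomputable def energyBound (s : ℝ) (g : ℝ → ℂ) : ℝ := 4 * ∫ k, sobolevWeight s k * ‖g k‖ ^ 2

lemma energyBound_nonneg (s : ℝ) (g : ℝ → ℂ) : 0 ≤ energyBound s g :=
  mul_nonneg zero_le_four
    (integral_nonneg fun k => mul_nonneg (sobolevWeight_pos s k).le (sq_nonneg _))

/-- The bound that the stability estimate gives for the squared `L²` distance between the Galerkin
approximation of index `n` and those of larger index. -/
noncomputable def galerkinError (s T : ℝ) (g : ℝ → ℂ) (n : ℕ) : ℝ :=
  ((∫ k, ‖g k - cutoff (n + 1) g k‖ ^ 2) +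
      2 * (1 / (n + 1) + 1 / (n + 1)) * powerBound s (4 * energyBound s g) * T) *
    Real.exp (stabilityRate s (energyBound s g) * T)

lemma tendsto_galerkinError {s T : ℝ} {g : ℝ → ℂ} (hg : IsSobolev s g) :
    Tendsto (fun n => galerkinError s T g n) atTop (𝓝 0) := by
  have hinv := tendsto_one_div_add_atTop_nhds_zero_nat (𝕜 := ℝ)
  have hsource := (((hinv.add hinv).const_mul 2).mul_const
    (powerBound s (4 * energyBound s g))).mul_const T
  simpa [galerkinError] using ((tendsto_integral_normSq_sub_cutoff hg).add hsource).mul_const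
    (Real.exp (stabilityRate s (energyBound s g) * T))

/-- Solutions of the truncated equations at the levels `n + 1`, issued from the cutoffs of `g`, that
obey the a priori energy estimate. -/
structure IsGalerkinSequence (s T : ℝ) (g : ℝ → ℂ) (F : ℕ → ℝ → ℝ → ℂ) : Prop where
  isGalerkinFlow : ∀ n : ℕ, IsGalerkinFlow (n + 1) T 1 (F n)
  initial : ∀ n : ℕ, F n 0 = cutoff (n + 1) g
  integral_weight_le : ∀ n V, IsAdmissibleWeight (2 ^ (2 * s + 1)) V →
    (∀ k, V k ≤ sobolevWeight s k) → ∀ τ ∈ Icc (-T) T,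
      ∫ k, V k * ‖F n τ k‖ ^ 2 ≤ 4 * ∫ k, V k * ‖g k‖ ^ 2

lemma exists_isGalerkinSequence {s T M N : ℝ} {g : ℝ → ℂ} (hs : 2 < s) (hT : 0 ≤ T)
    (hg : IsSobolev s g) (hconj : ∀ k, g (-k) = conj (g k)) (hM : 0 < M) (hN : 0 < N)
    (hgN : ∫ k, ‖g k‖ ^ 2 ≤ N ^ 2) (hgM : ∫ k, sobolevWeight s k * ‖g k‖ ^ 2 ≤ M ^ 2)
    (hlife : lifespanConst s * N ^ (1 - 2 / s) * M ^ (2 / s) * T ≤ 1) :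
    ∃ F, IsGalerkinSequence s T g F := by
  have hpos : ∀ n : ℕ, (0 : ℝ) ≤ n + 1 := fun n => by positivity
  have hexists := fun n : ℕ => exists_isGalerkinFlow (hpos n) hT
    (measurable_cutoff (n + 1) hg.measurable) (fun k => cutoff_eq_zero)
    (cutoff_neg_eq_conj hconj (n + 1)) (norm_cutoff_le (hpos n) g)
  choose F hF hF₀ using hexists
  have henergy : ∀ n {V : ℝ → ℝ}, Measurable V → (∀ k, 0 ≤ V k) →
      (∀ k, V k ≤ sobolevWeight s k) → ∫ k, V k * ‖F n 0 k‖ ^ 2 ≤ ∫ k, V k * ‖g k‖ ^ 2 :=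
    fun n V hV hV₀ hle => by simpa only [hF₀] using integral_weight_cutoff_le (n + 1) hg hV hV₀ hle
  refine ⟨F, hF, hF₀, fun n V hV hle τ hτ => ?_⟩
  have hN' : ∫ k, ‖F n 0 k‖ ^ 2 ≤ N ^ 2 := by
    have := henergy n measurable_const (fun _ => zero_le_one) (one_le_sobolevWeight s)
    simp only [one_mul] at this
    exact this.trans hgN
  have hM' := (henergy n (measurable_sobolevWeight s) (fun k => (sobolevWeight_pos s k).le)
    fun _ => le_rfl).trans hgM
  refine ((hF n).energy_le (hpos n) hs hM hN hN' hM' hlife hV hle τ hτ).trans ?_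
  exact mul_le_mul_of_nonneg_left (henergy n hV.measurable hV.nonneg hle) zero_le_four

namespace IsGalerkinSequence

variable {s T : ℝ} {g : ℝ → ℂ} {F : ℕ → ℝ → ℝ → ℂ}

lemma energy_le (h : IsGalerkinSequence s T g F) (hs : 0 ≤ s) (n : ℕ) :
    ∀ τ ∈ Icc (-T) T, ∫ k, sobolevWeight s k * ‖F n τ k‖ ^ 2 ≤ energyBound s g :=
  h.integral_weight_le n _ (isAdmissibleWeight_sobolevWeight hs) fun _ => le_rfl

lemma isSobolev (h : IsGalerkinSequence s T g F) (hs : 0 ≤ s) (n : ℕ) {τ : ℝ}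
    (hτ : τ ∈ Icc (-T) T) : IsSobolev s (F n τ) :=
  (h.isGalerkinFlow n).isSobolev hs hτ

lemma integral_normSq_sub_le (h : IsGalerkinSequence s T g F) (hs : 2 < s) (hT : 0 ≤ T)
    (hg : IsSobolev s g) {n m : ℕ} (hnm : n ≤ m) :
    ∀ τ ∈ Icc (-T) T, ∫ k, ‖F m τ k - F n τ k‖ ^ 2 ≤ galerkinError s T g n := by
  intro τ hτ
  have hs₀ : 0 ≤ s := by linarith
  have happrox : ∀ n : ℕ, IsApproxSolution s (1 / (n + 1)) (energyBound s g) T (F n) _ := fun n =>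
    (h.isGalerkinFlow n).isApproxSolution (by positivity) hs₀ (h.energy_le hs₀ n)
  have hnm' : (n : ℝ) ≤ m := by exact_mod_cast hnm
  have hP := powerBound_nonneg s (mul_nonneg zero_le_four (energyBound_nonneg s g))
  have hinitial : ∫ k, ‖cutoff (m + 1) g k - cutoff (n + 1) g k‖ ^ 2 ≤
      ∫ k, ‖g k - cutoff (n + 1) g k‖ ^ 2 := by
    have hcut := fun n : ℕ => isSobolev_cutoff (n + 1) hg
    refine integral_mono ((hcut m).sub (hcut n)).integrable_normSq
      (hg.sub (hcut n)).integrable_normSq fun k => ?_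
    exact pow_le_pow_left₀ (norm_nonneg _) (norm_cutoff_sub_cutoff_le (by linarith) g k) 2
  refine ((happrox m).integral_normSq_sub_le hs (by positivity) (by positivity) (happrox n)
    τ hτ).trans ?_
  rw [galerkinError, h.initial, h.initial]
  gcongr

lemma norm_sub_le (h : IsGalerkinSequence s T g F) (hs : 2 < s) (hT : 0 ≤ T)
    (hg : IsSobolev s g) {n m : ℕ} (hnm : n ≤ m) {k : ℝ} (hk : |k| ≤ n + 1)
    (hinitial : cutoff (n + 1) g k = cutoff (m + 1) g k) :
    ∀ τ ∈ Icc (-T) T, ‖F m τ k - F n τ k‖ ≤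
      |k| * √|k| * √(4 * energyBound s g) * √(galerkinError s T g n) * T := by
  intro τ hτ
  have hs₀ : 0 ≤ s := by linarith
  have hkm : |k| ≤ m + 1 := hk.trans (by gcongr)
  have hforcing := fun i (hi : |k| ≤ (i : ℕ) + 1) =>
    ((h.isGalerkinFlow i).continuous_waveForcing hi).intervalIntegrable (μ := volume) 0 τ
  rw [(h.isGalerkinFlow n).eq_add_integral hk hτ, (h.isGalerkinFlow m).eq_add_integral hkm hτ,
    h.initial, h.initial, hinitial, add_sub_add_left_eq_sub,
    ← intervalIntegral.integral_sub (hforcing m hkm) (hforcing n hk)]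
  refine (intervalIntegral.norm_integral_le_of_norm_le_const fun σ hσ => ?_).trans
    (mul_le_mul_of_nonneg_left (by simpa using abs_le.2 hτ) (by positivity))
  have hσ' : σ ∈ Icc (-T) T := uIcc_subset_Icc ⟨by linarith, hT⟩ hτ (uIoc_subset_uIcc hσ)
  refine ((h.isSobolev hs₀ n hσ').norm_waveForcing_self_sub_le (h.isSobolev hs₀ m hσ')
    (h.energy_le hs₀ n σ hσ') (h.energy_le hs₀ m σ hσ') k).trans ?_
  gcongr
  exact h.integral_normSq_sub_le hs hT hg hnm σ hσ'

lemma cauchySeq (h : IsGalerkinSequence s T g F) (hs : 2 < s) (hg : IsSobolev s g) {τ : ℝ}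
    (hτ : τ ∈ Icc (-T) T) (k : ℝ) : CauchySeq fun n => F n τ k := by
  have hT : 0 ≤ T := by linarith [hτ.1, hτ.2]
  obtain ⟨N, hN⟩ := exists_abs_le_and_cutoff_eq g k
  rw [← cauchySeq_shift N]
  refine cauchySeq_of_le_tendsto_0'
    (fun n => |k| * √|k| * √(4 * energyBound s g) * √(galerkinError s T g (n + N)) * T)
    (fun n m hnm => ?_) ?_
  · have hnN := hN (n + N) (by omega)
    rw [dist_comm, dist_eq_norm]
    exact h.norm_sub_le hs hT hg (by omega) hnN.1
      (hnN.2.trans (hN (m + N) (by omega)).2.symm) τ hτ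
  · have := ((Real.continuous_sqrt.tendsto 0).comp (tendsto_galerkinError (T := T) hg)).comp
      (tendsto_add_atTop_nat N)
    simpa using (this.const_mul (|k| * √|k| * √(4 * energyBound s g))).mul_const T

end IsGalerkinSequence

/-- A solution of the Duhamel equation on `[-T, T]` with datum `g`, in every mode, that inherits the
energy estimate of the Galerkin approximations for all admissible weights. -/
structure IsControlledSolution (s T : ℝ) (g : ℝ → ℂ) (f : ℝ → ℝ → ℂ) : Prop where
  measurable : Measurable (Function.uncurry f)
  conj_symm : ∀ τ ∈ Icc (-T) T, ∀ k, f τ (-k) = conj (f τ k)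
  isSobolev : ∀ τ ∈ Icc (-T) T, IsSobolev s (f τ)
  integral_weight_le : ∀ V, IsAdmissibleWeight (2 ^ (2 * s + 1)) V →
    (∀ k, V k ≤ sobolevWeight s k) → ∀ τ ∈ Icc (-T) T,
      ∫ k, V k * ‖f τ k‖ ^ 2 ≤ 4 * ∫ k, V k * ‖g k‖ ^ 2
  eq_add_integral : ∀ k, ∀ τ ∈ Icc (-T) T,
    f τ k = g k + ∫ σ in (0 : ℝ)..τ, waveForcing (f σ) (f σ) k

/-- The pointwise limit of a sequence of Galerkin approximations. -/
noncomputable def galerkinLimit (F : ℕ → ℝ → ℝ → ℂ) (τ k : ℝ) : ℂ :=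
  limUnder atTop fun n => F n τ k

namespace IsGalerkinSequence

variable {s T : ℝ} {g : ℝ → ℂ} {F : ℕ → ℝ → ℝ → ℂ}

lemma measurable_galerkinLimit (h : IsGalerkinSequence s T g F) :
    Measurable (Function.uncurry (galerkinLimit F)) :=
  (StronglyMeasurable.limUnder (l := atTop) fun n =>
    (h.isGalerkinFlow n).measurable.stronglyMeasurable).measurable

lemma tendsto_galerkinLimit (h : IsGalerkinSequence s T g F) (hs : 2 < s) (hg : IsSobolev s g)
    {τ : ℝ} (hτ : τ ∈ Icc (-T) T) (k : ℝ) :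
    Tendsto (fun n => F n τ k) atTop (𝓝 (galerkinLimit F τ k)) :=
  (h.cauchySeq hs hg hτ k).tendsto_limUnder

lemma integrable_and_integral_galerkinLimit_le (h : IsGalerkinSequence s T g F) (hs : 2 < s)
    (hg : IsSobolev s g) {V : ℝ → ℝ} (hV : IsAdmissibleWeight (2 ^ (2 * s + 1)) V)
    (hle : ∀ k, V k ≤ sobolevWeight s k) {τ : ℝ} (hτ : τ ∈ Icc (-T) T) :
    Integrable (fun k => V k * ‖galerkinLimit F τ k‖ ^ 2) ∧
      ∫ k, V k * ‖galerkinLimit F τ k‖ ^ 2 ≤ 4 * ∫ k, V k * ‖g k‖ ^ 2 :=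
  integrable_and_integral_le_of_tendsto
    (fun n => (h.isSobolev (by linarith) n hτ).integrable_weight hV.measurable hV.nonneg hle)
    (fun _ k => mul_nonneg (hV.nonneg k) (sq_nonneg _))
    (fun k => (((h.tendsto_galerkinLimit hs hg hτ k).norm).pow 2).const_mul (V k))
    fun n => h.integral_weight_le n V hV hle τ hτ

lemma isSobolev_galerkinLimit (h : IsGalerkinSequence s T g F) (hs : 2 < s) (hg : IsSobolev s g)
    {τ : ℝ} (hτ : τ ∈ Icc (-T) T) : IsSobolev s (galerkinLimit F τ) where
  measurable := h.measurable_galerkinLimit.comp measurable_prodMk_left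
  integrable := (h.integrable_and_integral_galerkinLimit_le hs hg
    (isAdmissibleWeight_sobolevWeight (by linarith)) (fun _ => le_rfl) hτ).1

lemma energy_galerkinLimit_le (h : IsGalerkinSequence s T g F) (hs : 2 < s) (hg : IsSobolev s g)
    {τ : ℝ} (hτ : τ ∈ Icc (-T) T) :
    ∫ k, sobolevWeight s k * ‖galerkinLimit F τ k‖ ^ 2 ≤ energyBound s g :=
  (h.integrable_and_integral_galerkinLimit_le hs hg
    (isAdmissibleWeight_sobolevWeight (by linarith)) (fun _ => le_rfl) hτ).2

lemma integral_normSq_galerkinLimit_sub_le (h : IsGalerkinSequence s T g F) (hs : 2 < s)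
    (hg : IsSobolev s g) {τ : ℝ} (hτ : τ ∈ Icc (-T) T) (n : ℕ) :
    ∫ k, ‖galerkinLimit F τ k - F n τ k‖ ^ 2 ≤ galerkinError s T g n := by
  have hs₀ : 0 ≤ s := by linarith
  have hT : 0 ≤ T := by linarith [hτ.1, hτ.2]
  refine (integrable_and_integral_le_of_tendsto (φ := fun m k => ‖F (m + n) τ k - F n τ k‖ ^ 2)
    (fun m => ((h.isSobolev hs₀ _ hτ).sub (h.isSobolev hs₀ n hτ)).integrable_normSq)
    (fun _ _ => sq_nonneg _) (fun k => ?_)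
    fun m => h.integral_normSq_sub_le hs hT hg (by omega) τ hτ).2
  exact ((((h.tendsto_galerkinLimit hs hg hτ k).comp (tendsto_add_atTop_nat n)).sub_const
    (F n τ k)).norm).pow 2

lemma tendsto_waveForcing (h : IsGalerkinSequence s T g F) (hs : 2 < s) (hg : IsSobolev s g)
    {τ : ℝ} (hτ : τ ∈ Icc (-T) T) (k : ℝ) :
    Tendsto (fun n => waveForcing (F n τ) (F n τ) k) atTop
      (𝓝 (waveForcing (galerkinLimit F τ) (galerkinLimit F τ) k)) := by
  have hs₀ : 0 ≤ s := by linarith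
  rw [tendsto_iff_norm_sub_tendsto_zero]
  refine squeeze_zero (g := fun n =>
    |k| * √|k| * √(4 * energyBound s g) * √(galerkinError s T g n)) (fun n => norm_nonneg _)
    (fun n => ?_) ?_
  · rw [norm_sub_rev]
    refine ((h.isSobolev hs₀ n hτ).norm_waveForcing_self_sub_le (h.isSobolev_galerkinLimit hs hg hτ)
      (h.energy_le hs₀ n τ hτ) (h.energy_galerkinLimit_le hs hg hτ) k).trans ?_
    gcongr
    exact h.integral_normSq_galerkinLimit_sub_le hs hg hτ n
  · have := (Real.continuous_sqrt.tendsto 0).comp (tendsto_galerkinError (T := T) hg)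
    simpa using this.const_mul (|k| * √|k| * √(4 * energyBound s g))

lemma galerkinLimit_eq_add_integral (h : IsGalerkinSequence s T g F) (hs : 2 < s)
    (hg : IsSobolev s g) {τ : ℝ} (hτ : τ ∈ Icc (-T) T) (k : ℝ) :
    galerkinLimit F τ k =
      g k + ∫ σ in (0 : ℝ)..τ, waveForcing (galerkinLimit F σ) (galerkinLimit F σ) k := by
  have hs₀ : 0 ≤ s := by linarith
  obtain ⟨N, hN⟩ := exists_abs_le_and_cutoff_eq g k
  have hmem : ∀ σ ∈ uIoc 0 τ, σ ∈ Icc (-T) T := fun σ hσ =>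
    uIcc_subset_Icc (by constructor <;> linarith [hτ.1, hτ.2]) hτ (uIoc_subset_uIcc hσ)
  have hbound : ∀ n, ∀ σ ∈ uIoc 0 τ,
      ‖waveForcing (F n σ) (F n σ) k‖ ≤ |k| * √|k| * energyBound s g := fun n σ hσ => by
    have hF := h.isSobolev hs₀ n (hmem σ hσ)
    refine (norm_waveForcing_self_le hF.memLp_two k).trans ?_
    gcongr
    exact hF.integral_normSq_le.trans (h.energy_le hs₀ n σ (hmem σ hσ))
  have hmeas : ∀ n, Measurable fun σ => waveForcing (F n σ) (F n σ) k := fun n => by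
    have hF := (h.isGalerkinFlow n).measurable
    exact (measurable_waveForcing_uncurry hF hF).comp measurable_prodMk_right
  have hintegral : Tendsto (fun n => ∫ σ in (0 : ℝ)..τ, waveForcing (F n σ) (F n σ) k) atTop
      (𝓝 (∫ σ in (0 : ℝ)..τ, waveForcing (galerkinLimit F σ) (galerkinLimit F σ) k)) :=
    intervalIntegral.tendsto_integral_filter_of_dominated_convergence _
      (.of_forall fun n => (hmeas n).aestronglyMeasurable)
      (.of_forall fun n => .of_forall (hbound n)) intervalIntegrable_const
      (.of_forall fun σ hσ => h.tendsto_waveForcing hs hg (hmem σ hσ) k)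
  refine tendsto_nhds_unique (h.tendsto_galerkinLimit hs hg hτ k)
    ((tendsto_const_nhds.add hintegral).congr' ?_)
  filter_upwards [eventually_ge_atTop N] with n hn
  rw [(h.isGalerkinFlow n).eq_add_integral (hN n hn).1 hτ, h.initial, (hN n hn).2]

theorem isControlledSolution_galerkinLimit (h : IsGalerkinSequence s T g F) (hs : 2 < s)
    (hg : IsSobolev s g) : IsControlledSolution s T g (galerkinLimit F) where
  measurable := h.measurable_galerkinLimit
  conj_symm τ hτ k := by
    refine tendsto_nhds_unique (h.tendsto_galerkinLimit hs hg hτ (-k)) ?_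
    simpa only [(h.isGalerkinFlow _).conj_symm, Function.comp_def] using
      (Complex.continuous_conj.tendsto _).comp (h.tendsto_galerkinLimit hs hg hτ k)
  isSobolev _ := h.isSobolev_galerkinLimit hs hg
  integral_weight_le _ hV hle _ hτ := (h.integrable_and_integral_galerkinLimit_le hs hg hV hle hτ).2
  eq_add_integral k _ hτ := h.galerkinLimit_eq_add_integral hs hg hτ k

end IsGalerkinSequence

section TailEnergy

variable {s R : ℝ}

lemma tendsto_integral_tailWeight {g : ℝ → ℂ} (hg : IsSobolev s g) :
    Tendsto (fun n : ℕ => ∫ k, tailWeight s (n + 1) k * ‖g k‖ ^ 2) atTop (𝓝 0) := by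
  have := hg.measurable
  rw [← integral_zero ℝ ℝ]
  refine tendsto_integral_of_dominated_convergence _
    (fun n => (by unfold tailWeight; fun_prop : Measurable _).aestronglyMeasurable) hg.integrable
    (fun n => .of_forall fun k => ?_) (.of_forall fun k => ?_)
  · have := tailWeight_nonneg (s := s) (by positivity : (0 : ℝ) ≤ n + 1) k
    rw [Real.norm_of_nonneg (by positivity)]
    gcongr
    exact tailWeight_le_sobolevWeight s _ k
  · have hinv := tendsto_one_div_add_atTop_nhds_zero_nat (𝕜 := ℝ)
    have hmin : Tendsto (fun n : ℕ => min 1 (|k| / (n + 1))) atTop (𝓝 (min 1 0)) :=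
      tendsto_const_nhds.min (by simpa [div_eq_mul_inv] using hinv.const_mul |k|)
    simpa [tailWeight] using (hmin.const_mul (sobolevWeight s k)).mul_const (‖g k‖ ^ 2)

lemma IsSobolev.energy_le_add_integral_tailWeight {w : ℝ → ℂ} (hw : IsSobolev s w) (hs : 0 ≤ s)
    (hR : 0 < R) {B : ℝ} (hB : ∀ k, |k| ≤ R → ‖w k‖ ≤ B) :
    ∫ k, sobolevWeight s k * ‖w k‖ ^ 2 ≤
      2 * R * (sobolevWeight s R * B ^ 2) + ∫ k, tailWeight s R k * ‖w k‖ ^ 2 := by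
  have htail := hw.integrable_weight (isAdmissibleWeight_tailWeight hs hR.le).measurable
    (tailWeight_nonneg hR.le) (tailWeight_le_sobolevWeight s R)
  have hw_meas := hw.measurable
  rw [← sub_le_iff_le_add, ← integral_sub hw.integrable htail]
  refine integral_le_of_bounded_of_support hR.le (by unfold tailWeight; fun_prop) (fun k => ?_)
    fun k hk => by rw [tailWeight_eq_sobolevWeight hR hk.le, sub_self]
  have hdiff := sub_nonneg.2 (tailWeight_le_sobolevWeight s R k)
  have hle : sobolevWeight s k - tailWeight s R k ≤ sobolevWeight s k :=
    sub_le_self _ (tailWeight_nonneg hR.le k)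
  rw [← sub_mul, abs_of_nonneg (mul_nonneg hdiff (sq_nonneg _))]
  rcases le_or_gt |k| R with hk | hk
  · gcongr
    · exact (sobolevWeight_pos s R).le
    · exact hle.trans (sobolevWeight_le_sobolevWeight hs (hk.trans (le_abs_self R)))
    · exact hB k hk
  · rw [tailWeight_eq_sobolevWeight hR hk.le, sub_self, zero_mul]
    exact mul_nonneg (sobolevWeight_pos s R).le (sq_nonneg _)

end TailEnergy

namespace IsControlledSolution

variable {s T : ℝ} {g : ℝ → ℂ} {f : ℝ → ℝ → ℂ} {τ τ₀ : ℝ}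

lemma norm_waveForcing_le (h : IsControlledSolution s T g f) (hs : 0 ≤ s) (hτ : τ ∈ Icc (-T) T)
    (k : ℝ) : ‖waveForcing (f τ) (f τ) k‖ ≤ |k| * √|k| * energyBound s g := by
  refine (norm_waveForcing_self_le (h.isSobolev τ hτ).memLp_two k).trans ?_
  gcongr
  exact (h.isSobolev τ hτ).integral_normSq_le.trans (h.integral_weight_le _
    (isAdmissibleWeight_sobolevWeight hs) (fun _ => le_rfl) τ hτ)

lemma norm_sub_le (h : IsControlledSolution s T g f) (hs : 0 ≤ s) (hτ : τ ∈ Icc (-T) T)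
    (hτ₀ : τ₀ ∈ Icc (-T) T) (k : ℝ) :
    ‖f τ k - f τ₀ k‖ ≤ |k| * √|k| * energyBound s g * |τ - τ₀| := by
  have h₀ : (0 : ℝ) ∈ Icc (-T) T := by constructor <;> linarith [hτ.1, hτ.2]
  have hbound : ∀ {a b : ℝ}, a ∈ Icc (-T) T → b ∈ Icc (-T) T → ∀ σ ∈ uIoc a b,
      ‖waveForcing (f σ) (f σ) k‖ ≤ |k| * √|k| * energyBound s g := fun ha hb σ hσ =>
    h.norm_waveForcing_le hs (uIcc_subset_Icc ha hb (uIoc_subset_uIcc hσ)) k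
  have hmeas : Measurable fun σ => waveForcing (f σ) (f σ) k :=
    (measurable_waveForcing_uncurry h.measurable h.measurable).comp measurable_prodMk_right
  have hint : ∀ b ∈ Icc (-T) T,
      IntervalIntegrable (fun σ => waveForcing (f σ) (f σ) k) volume 0 b := fun b hb =>
    (intervalIntegrable_const (c := |k| * √|k| * energyBound s g)).mono_fun'
      hmeas.aestronglyMeasurable (ae_restrict_of_forall_mem measurableSet_uIoc (hbound h₀ hb))
  rw [h.eq_add_integral k τ hτ, h.eq_add_integral k τ₀ hτ₀, add_sub_add_left_eq_sub,
    intervalIntegral.integral_interval_sub_left (hint τ hτ) (hint τ₀ hτ₀)]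
  exact intervalIntegral.norm_integral_le_of_norm_le_const (hbound hτ₀ hτ)

lemma energy_sub_le (h : IsControlledSolution s T g f) (hs : 0 ≤ s) (hτ : τ ∈ Icc (-T) T)
    (hτ₀ : τ₀ ∈ Icc (-T) T) {R : ℝ} (hR : 0 < R) :
    ∫ k, sobolevWeight s k * ‖f τ k - f τ₀ k‖ ^ 2 ≤
      2 * R * (sobolevWeight s R * (R * √R * energyBound s g * |τ - τ₀|) ^ 2) +
        16 * ∫ k, tailWeight s R k * ‖g k‖ ^ 2 := by
  have hV := isAdmissibleWeight_tailWeight (s := s) hs hR.le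
  have hle := tailWeight_le_sobolevWeight s R
  have htail := (h.isSobolev τ hτ).integral_weight_sub_le (h.isSobolev τ₀ hτ₀) hV.measurable
    hV.nonneg hle (h.integral_weight_le _ hV hle τ hτ) (h.integral_weight_le _ hV hle τ₀ hτ₀)
  have hP := energyBound_nonneg s g
  refine (((h.isSobolev τ hτ).sub (h.isSobolev τ₀ hτ₀)).energy_le_add_integral_tailWeight hs hR
    (B := R * √R * energyBound s g * |τ - τ₀|)
    fun k hk => (h.norm_sub_le hs hτ hτ₀ k).trans (by gcongr)).trans ?_
  linarith

/-- Each mode is Lipschitz in time, so low frequencies are continuous; the tail energy is small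
uniformly in time by the energy estimate for the tail weights. -/
theorem tendsto_energy_sub (h : IsControlledSolution s T g f) (hs : 0 ≤ s) (hg : IsSobolev s g)
    (hτ₀ : τ₀ ∈ Icc (-T) T) :
    Tendsto (fun τ => ∫ k, sobolevWeight s k * ‖f τ k - f τ₀ k‖ ^ 2) (𝓝[Icc (-T) T] τ₀)
      (𝓝 0) := by
  refine tendsto_order.2 ⟨fun a ha => .of_forall fun τ => ha.trans_le (integral_nonneg fun k =>
    mul_nonneg (sobolevWeight_pos s k).le (sq_nonneg _)), fun ε hε => ?_⟩
  have htail : Tendsto (fun n : ℕ => 16 * ∫ k, tailWeight s (n + 1) k * ‖g k‖ ^ 2) atTop (𝓝 0) := by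
    simpa using (tendsto_integral_tailWeight hg).const_mul 16
  obtain ⟨n, hn⟩ := (htail.eventually_lt_const hε).exists
  have hR : (0 : ℝ) < n + 1 := by positivity
  set R : ℝ := n + 1
  have hcont : Continuous fun τ =>
      2 * R * (sobolevWeight s R * (R * √R * energyBound s g * |τ - τ₀|) ^ 2) +
        16 * ∫ k, tailWeight s R k * ‖g k‖ ^ 2 := by fun_prop
  have hlow := (hcont.tendsto τ₀).mono_left (nhdsWithin_le_nhds (s := Icc (-T) T))
  filter_upwards [hlow.eventually_lt_const (by simpa using hn), self_mem_nhdsWithin] with τ hlt hτ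
  exact (h.energy_sub_le hs hτ hτ₀ hR).trans_lt hlt

end IsControlledSolution

/-- A solution of the Duhamel equation with datum `f₀` on `(-T, T)` that is continuous in time with
values in `Hˢ`: the class in which the initial value problem is well posed. -/
structure IsSolution (s T : ℝ) (f₀ : ℝ → ℂ) (f : ℝ → ℝ → ℂ) : Prop where
  measurable : Measurable (Function.uncurry f)
  initial : ∀ᵐ k, f 0 k = f₀ k
  conjSymm : ∀ τ ∈ Ioo (-T) T, ConjSymm (f τ)
  integrable : ∀ τ ∈ Ioo (-T) T, Integrable fun k => sobolevWeight s k * ‖f τ k‖ ^ 2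
  tendsto_energy_sub : ∀ τ₀ ∈ Ioo (-T) T,
    Tendsto (fun τ => ∫ k, sobolevWeight s k * ‖f τ k - f τ₀ k‖ ^ 2) (𝓝[Ioo (-T) T] τ₀) (𝓝 0)
  duhamel : ∀ᵐ k : ℝ, ∀ τ ∈ Ioo (-T) T,
    f τ k = f₀ k - Complex.I * (k : ℂ) * ∫ σ in (0 : ℝ)..τ, waveBilinear (f σ) (f σ) k

namespace IsSolution

variable {s T : ℝ} {f₀ : ℝ → ℂ} {f g : ℝ → ℝ → ℂ}

lemma isSobolev (h : IsSolution s T f₀ f) {τ : ℝ} (hτ : τ ∈ Ioo (-T) T) : IsSobolev s (f τ) :=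
  ⟨h.measurable.comp measurable_prodMk_left, h.integrable τ hτ⟩

lemma exists_eventually_energy_le (h : IsSolution s T f₀ f) {τ₀ : ℝ} (hτ₀ : τ₀ ∈ Ioo (-T) T) :
    ∃ C, ∀ᶠ τ in 𝓝[Ioo (-T) T] τ₀, ∫ k, sobolevWeight s k * ‖f τ k‖ ^ 2 ≤ C := by
  refine ⟨2 * (∫ k, sobolevWeight s k * ‖f τ₀ k‖ ^ 2) + 2 * 1, ?_⟩
  filter_upwards [(h.tendsto_energy_sub τ₀ hτ₀).eventually_le_const one_pos, self_mem_nhdsWithin]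
    with τ hle hτ
  simpa only [Pi.sub_apply, add_sub_cancel] using
    (h.isSobolev hτ₀).energy_add_le ((h.isSobolev hτ).sub (h.isSobolev hτ₀)) le_rfl hle

lemma exists_energy_le (h : IsSolution s T f₀ f) {K : Set ℝ} (hK : IsCompact K)
    (hKT : K ⊆ Ioo (-T) T) : ∃ C, ∀ τ ∈ K, ∫ k, sobolevWeight s k * ‖f τ k‖ ^ 2 ≤ C := by
  refine hK.induction_on
    (p := fun A => ∃ C, ∀ τ ∈ A, ∫ k, sobolevWeight s k * ‖f τ k‖ ^ 2 ≤ C) ⟨0, by simp⟩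
    (fun A B hAB ⟨C, hC⟩ => ⟨C, fun τ hτ => hC τ (hAB hτ)⟩)
    (fun A B ⟨C, hC⟩ ⟨C', hC'⟩ => ⟨max C C', fun τ hτ => hτ.elim
      (fun hA => (hC τ hA).trans (le_max_left _ _)) fun hB => (hC' τ hB).trans (le_max_right _ _)⟩)
    fun τ₀ hτ₀ => ?_
  obtain ⟨C, hC⟩ := h.exists_eventually_energy_le (hKT hτ₀)
  exact ⟨_, nhdsWithin_mono _ hKT hC, C, fun τ hτ => hτ⟩

lemma continuousOn_waveForcing (h : IsSolution s T f₀ f) (k : ℝ) :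
    ContinuousOn (fun τ => waveForcing (f τ) (f τ) k) (Ioo (-T) T) := by
  intro τ₀ hτ₀
  obtain ⟨C, hC⟩ := h.exists_eventually_energy_le hτ₀
  set P := max C (∫ k, sobolevWeight s k * ‖f τ₀ k‖ ^ 2)
  have hlim : Tendsto (fun τ => |k| * √|k| * √(4 * P) *
      √(∫ l, sobolevWeight s l * ‖f τ l - f τ₀ l‖ ^ 2)) (𝓝[Ioo (-T) T] τ₀) (𝓝 0) := by
    simpa using (h.tendsto_energy_sub τ₀ hτ₀).sqrt.const_mul (|k| * √|k| * √(4 * P))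
  rw [ContinuousWithinAt, tendsto_iff_norm_sub_tendsto_zero]
  refine squeeze_zero' (.of_forall fun τ => norm_nonneg _) ?_ hlim
  filter_upwards [hC, self_mem_nhdsWithin] with τ hle hτ
  refine ((h.isSobolev hτ₀).norm_waveForcing_self_sub_le (h.isSobolev hτ) (le_max_right _ _)
    (hle.trans (le_max_left _ _)) k).trans (mul_le_mul_of_nonneg_left (Real.sqrt_le_sqrt ?_)
      (by positivity))
  exact ((h.isSobolev hτ).sub (h.isSobolev hτ₀)).integral_normSq_le

lemma hasDerivAt (h : IsSolution s T f₀ f) :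
    ∀ᵐ k, ∀ τ ∈ Ioo (-T) T, HasDerivAt (fun τ => f τ k) (waveForcing (f τ) (f τ) k) τ := by
  filter_upwards [h.duhamel] with k hk τ hτ
  have hnhds : Ioo (-T) T ∈ 𝓝 τ := isOpen_Ioo.mem_nhds hτ
  have h₀ : (0 : ℝ) ∈ Ioo (-T) T := by constructor <;> linarith [hτ.1, hτ.2]
  have hcont := h.continuousOn_waveForcing k
  have hmeas : Measurable fun σ => waveForcing (f σ) (f σ) k :=
    (measurable_waveForcing_uncurry h.measurable h.measurable).comp measurable_prodMk_right
  have hderiv := (intervalIntegral.integral_hasDerivAt_right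
    (hcont.mono (ordConnected_Ioo.uIcc_subset h₀ hτ)).intervalIntegrable
    hmeas.stronglyMeasurable.stronglyMeasurableAtFilter (hcont.continuousAt hnhds)).const_add (f₀ k)
  refine hderiv.congr_of_eventuallyEq ?_
  filter_upwards [hnhds] with σ hσ
  rw [hk σ hσ]
  simp only [waveForcing, intervalIntegral.integral_const_mul]
  ring

lemma isApproxSolution (h : IsSolution s T f₀ f) {T' P : ℝ} (hT' : T' < T)
    (hP : ∀ τ ∈ Icc (-T') T', ∫ k, sobolevWeight s k * ‖f τ k‖ ^ 2 ≤ P) :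
    IsApproxSolution s 0 P T' f fun τ k => waveForcing (f τ) (f τ) k :=
  have hsub : Icc (-T') T' ⊆ Ioo (-T) T := Icc_subset_Ioo (neg_lt_neg hT') hT'
  { measurable := h.measurable
    measurable_deriv := measurable_waveForcing_uncurry h.measurable h.measurable
    isSobolev := fun _ hτ => h.isSobolev (hsub hτ)
    energy_le := hP
    conjSymm := fun τ hτ => h.conjSymm τ (hsub hτ)
    continuousOn := h.hasDerivAt.mono fun _ hk τ hτ =>
      (hk τ (hsub hτ)).continuousAt.continuousWithinAt
    continuousOn_deriv := .of_forall fun k => (h.continuousOn_waveForcing k).mono hsub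
    hasDerivAt := h.hasDerivAt.mono fun _ hk τ hτ => hk τ (hsub (Ioo_subset_Icc_self hτ))
    norm_error_le := fun _ _ => by simp }

theorem ae_eq (hs : 2 < s) (hf : IsSolution s T f₀ f) (hg : IsSolution s T f₀ g) {τ : ℝ}
    (hτ : τ ∈ Ioo (-T) T) : ∀ᵐ k, f τ k = g τ k := by
  have hτT : |τ| < T := abs_lt.2 hτ
  have hsub : Icc (-|τ|) |τ| ⊆ Ioo (-T) T := Icc_subset_Ioo (neg_lt_neg hτT) hτT
  obtain ⟨C, hC⟩ := hf.exists_energy_le isCompact_Icc hsub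
  obtain ⟨C', hC'⟩ := hg.exists_energy_le isCompact_Icc hsub
  have hstab := (hf.isApproxSolution hτT fun σ hσ => (hC σ hσ).trans (le_max_left C C')
    ).integral_normSq_sub_le hs le_rfl le_rfl
    (hg.isApproxSolution hτT fun σ hσ => (hC' σ hσ).trans (le_max_right C C'))
    τ ⟨neg_abs_le τ, le_abs_self τ⟩
  have hinitial : ∫ k, ‖f 0 k - g 0 k‖ ^ 2 = 0 := by
    refine integral_eq_zero_of_ae ?_
    filter_upwards [hf.initial, hg.initial] with k hfk hgk
    simp [hfk, hgk]
  simp only [hinitial, add_zero, mul_zero, zero_mul] at hstab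
  have hzero := (integral_eq_zero_iff_of_nonneg (fun k => sq_nonneg _)
    ((hf.isSobolev hτ).sub (hg.isSobolev hτ)).integrable_normSq).1
    (hstab.antisymm (integral_nonneg fun k => sq_nonneg _))
  filter_upwards [hzero] with k hk
  simpa [sub_eq_zero] using hk

end IsSolution

lemma IsControlledSolution.isSolution {s T : ℝ} {f₀ g : ℝ → ℂ} {f : ℝ → ℝ → ℂ}
    (h : IsControlledSolution s T g f) (hs : 0 ≤ s) (hT : 0 ≤ T) (hg : IsSobolev s g)
    (hgf₀ : ∀ᵐ k, g k = f₀ k) : IsSolution s T f₀ f where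
  measurable := h.measurable
  initial := hgf₀.mono fun k hk => by
    rw [h.eq_add_integral k 0 ⟨neg_nonpos.2 hT, hT⟩, intervalIntegral.integral_same, add_zero, hk]
  conjSymm τ hτ := .of_forall (h.conj_symm τ (Ioo_subset_Icc_self hτ))
  integrable τ hτ := (h.isSobolev τ (Ioo_subset_Icc_self hτ)).integrable
  tendsto_energy_sub _ hτ₀ := (h.tendsto_energy_sub hs hg (Ioo_subset_Icc_self hτ₀)).mono_left
    (nhdsWithin_mono _ Ioo_subset_Icc_self)
  duhamel := hgf₀.mono fun k hk τ hτ => by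
    rw [h.eq_add_integral k τ (Ioo_subset_Icc_self hτ), hk]
    simp only [waveForcing, intervalIntegral.integral_const_mul]
    ring

lemma isSolution_zero_time {s : ℝ} {f₀ : ℝ → ℂ} (hf₀ : Measurable f₀) :
    IsSolution s 0 f₀ fun _ => f₀ where
  measurable := hf₀.comp measurable_snd
  initial := .of_forall fun _ => rfl
  conjSymm := by simp
  integrable := by simp
  tendsto_energy_sub := by simp
  duhamel := by simp

theorem exists_isSolution_of_lifespan {s T M N : ℝ} (hs : 2 < s) (hT : 0 ≤ T) (hM : 0 < M)
    (hN : 0 < N) {f₀ : ℝ → ℂ} (hf₀ : IsSobolev s f₀) (hconj : ConjSymm f₀)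
    (hf₀N : ∫ k, ‖f₀ k‖ ^ 2 ≤ N ^ 2) (hf₀M : ∫ k, sobolevWeight s k * ‖f₀ k‖ ^ 2 ≤ M ^ 2)
    (hlife : lifespanConst s * N ^ (1 - 2 / s) * M ^ (2 / s) * T ≤ 1) :
    ∃ f, IsSolution s T f₀ f := by
  have hs₀ : 0 ≤ s := by linarith
  obtain ⟨g, hg_meas, hg_conj, hgf₀⟩ := exists_measurable_neg_eq_conj_ae_eq hf₀.measurable hconj
  have hweight : ∀ V : ℝ → ℝ, ∀ᵐ k, V k * ‖g k‖ ^ 2 = V k * ‖f₀ k‖ ^ 2 := fun V =>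
    hgf₀.mono fun k hk => by rw [hk]
  have hg : IsSobolev s g := ⟨hg_meas, hf₀.integrable.congr (EventuallyEq.symm (hweight _))⟩
  obtain ⟨F, hF⟩ := exists_isGalerkinSequence hs hT hg hg_conj hM hN
    (by simpa using (integral_congr_ae (hweight fun _ => 1)).trans_le (by simpa using hf₀N))
    ((integral_congr_ae (hweight _)).trans_le hf₀M) hlife
  exact ⟨_, (hF.isControlledSolution_galerkinLimit hs hg).isSolution hs₀ hT hg hgf₀⟩

theorem exists_isSolution {s : ℝ} (hs : 2 < s) {f₀ : ℝ → ℂ} (hf₀ : IsSobolev s f₀)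
    (hconj : ConjSymm f₀) :
    ∃ f, IsSolution s (1 / (lifespanConst s * √(∫ k, ‖f₀ k‖ ^ 2) ^ (1 - 2 / s) *
      √(∫ k, sobolevWeight s k * ‖f₀ k‖ ^ 2) ^ (2 / s))) f₀ f := by
  set N := √(∫ k, ‖f₀ k‖ ^ 2)
  set M := √(∫ k, sobolevWeight s k * ‖f₀ k‖ ^ 2)
  rcases (show 0 ≤ N from Real.sqrt_nonneg _).eq_or_lt with hN | hN
  -- The lifespan of a zero datum is the junk value `1 / 0 = 0`.
  · have hexp : 1 - 2 / s ≠ 0 := (sub_pos.2 ((div_lt_one (by linarith)).2 hs)).ne'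
    rw [← hN, Real.zero_rpow hexp, mul_zero, zero_mul, div_zero]
    exact ⟨_, isSolution_zero_time hf₀.measurable⟩
  · have hM : 0 < M := hN.trans_le (Real.sqrt_le_sqrt hf₀.integral_normSq_le)
    have hrate : 0 < lifespanConst s * N ^ (1 - 2 / s) * M ^ (2 / s) := by
      have := lifespanConst_pos s
      positivity
    refine exists_isSolution_of_lifespan hs (one_div_pos.2 hrate).le hM hN hf₀ hconj ?_ ?_
      (mul_one_div_cancel hrate.ne').le
    · exact (Real.sq_sqrt (integral_nonneg fun k => sq_nonneg _)).ge
    · exact (Real.sq_sqrt (integral_nonneg fun k =>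
        mul_nonneg (sobolevWeight_pos s k).le (sq_nonneg _))).ge

end SurfaceWave

open SurfaceWave

/-- Local-in-time well-posedness (on the Fourier side) of the initial value problem
for the noncanonical surface-wave amplitude equation: for `s > 2` there is `Kₛ > 0`
such that for any admissible initial datum `f₀` there exists a unique solution of the
Duhamel equation on the interval `(−τ*, τ*)`, `τ* = 1/(Kₛ‖ψ₀‖_{L²}^{1−2/s}‖ψ₀‖_{Hˢ}^{2/s})`. -/
theorem local_wellposedness (s : ℝ) (hs : 2 < s) :
    ∃ K : ℝ, 0 < K ∧ ∀ f₀ : ℝ → ℂ, Measurable f₀ →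
      (∀ᵐ k : ℝ, f₀ (-k) = (starRingEnd ℂ) (f₀ k)) →
      Integrable (fun k : ℝ => (1 + |k| ^ (2 * s)) * ‖f₀ k‖ ^ 2) →
      ∀ M₀ N₀ τs : ℝ,
        M₀ = Real.sqrt (∫ k : ℝ, (1 + |k| ^ (2 * s)) * ‖f₀ k‖ ^ 2) →
        N₀ = Real.sqrt (∫ k : ℝ, ‖f₀ k‖ ^ 2) →
        τs = 1 / (K * N₀ ^ (1 - 2 / s) * M₀ ^ (2 / s)) →
        ∃ f : ℝ → ℝ → ℂ,
          (Measurable (Function.uncurry f) ∧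
           (∀ᵐ k : ℝ, f 0 k = f₀ k) ∧
           (∀ τ ∈ Set.Ioo (-τs) τs, ∀ᵐ k : ℝ, f τ (-k) = (starRingEnd ℂ) (f τ k)) ∧
           (∀ τ ∈ Set.Ioo (-τs) τs,
             Integrable (fun k : ℝ => (1 + |k| ^ (2 * s)) * ‖f τ k‖ ^ 2)) ∧
           (∀ τ₀ ∈ Set.Ioo (-τs) τs, Filter.Tendsto
             (fun τ : ℝ => ∫ k : ℝ, (1 + |k| ^ (2 * s)) * ‖f τ k - f τ₀ k‖ ^ 2)
             (nhdsWithin τ₀ (Set.Ioo (-τs) τs)) (nhds 0)) ∧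
           (∀ᵐ k : ℝ, ∀ τ ∈ Set.Ioo (-τs) τs,
             f τ k = f₀ k - Complex.I * ((k : ℝ) : ℂ) *
               ∫ σ in (0 : ℝ)..τ, ∫ l : ℝ,
                 ((Sker (k - l) l : ℝ) : ℂ) * f σ (k - l) * f σ l)) ∧
          (∀ g : ℝ → ℝ → ℂ,
            (Measurable (Function.uncurry g) ∧
             (∀ᵐ k : ℝ, g 0 k = f₀ k) ∧
             (∀ τ ∈ Set.Ioo (-τs) τs, ∀ᵐ k : ℝ, g τ (-k) = (starRingEnd ℂ) (g τ k)) ∧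
             (∀ τ ∈ Set.Ioo (-τs) τs,
               Integrable (fun k : ℝ => (1 + |k| ^ (2 * s)) * ‖g τ k‖ ^ 2)) ∧
             (∀ τ₀ ∈ Set.Ioo (-τs) τs, Filter.Tendsto
               (fun τ : ℝ => ∫ k : ℝ, (1 + |k| ^ (2 * s)) * ‖g τ k - g τ₀ k‖ ^ 2)
               (nhdsWithin τ₀ (Set.Ioo (-τs) τs)) (nhds 0)) ∧
             (∀ᵐ k : ℝ, ∀ τ ∈ Set.Ioo (-τs) τs,
               g τ k = f₀ k - Complex.I * ((k : ℝ) : ℂ) *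
                 ∫ σ in (0 : ℝ)..τ, ∫ l : ℝ,
                   ((Sker (k - l) l : ℝ) : ℂ) * g σ (k - l) * g σ l)) →
            ∀ τ ∈ Set.Ioo (-τs) τs, ∀ᵐ k : ℝ, g τ k = f τ k) := by
  refine ⟨lifespanConst s, lifespanConst_pos s, ?_⟩
  rintro f₀ hf₀ hconj hint _ _ _ rfl rfl rfl
  obtain ⟨f, hf⟩ := exists_isSolution hs ⟨hf₀, hint⟩ hconj
  refine ⟨f, ⟨hf.measurable, hf.initial, hf.conjSymm, hf.integrable, hf.tendsto_energy_sub,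
    hf.duhamel⟩, ?_⟩
  rintro g ⟨hmeas, hinit, hsymm, henergy, hcont, hduhamel⟩ τ hτ
  exact IsSolution.ae_eq hs ⟨hmeas, hinit, hsymm, henergy, hcont, hduhamel⟩ hf hτ
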